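/- arXiv:2102.03953 — 8 statements merged into one kernel-verified Lean document; each statement's English description precedes it below -/
import Mathlib

section
/- Let n ≥ 2 and let γ : [0,1] → ℝⁿ be a Jordan curve with basepoint o = γ(0) = 0. Let a, b, c ∈ ℝ² be a nondegenerate triangle and let θ_v = ∠(b, a, c) be its angle at the vertex a. If limsup_{δ→0⁺} Θ_δ < θ_v < liminf_{δ→0⁺} Θ'_δ, then there exist points p, q ∈ J \ {o} and a real k > 0 such that dist(o,p) = k·dist(a,b), dist(o,q) = k·dist(a,c) and dist(p,q) = k·dist(b,c); that is, the triangle with vertices o, p, q is similar to the triangle a, b, c with the vertex a corresponding to o. -/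
/-!
By the law of cosines it suffices to find `s, t ∈ (0, 1)` such that the distances of `γ t` and
`γ s` to the basepoint have ratio `r = |ac| / |ab|` and the angle between them is `θ = ∠ b a c`,
i.e. a common zero in the open unit square of
`F (s, t) = |γ t| - r |γ s|` and `G (s, t) = ∠ (γ s) o (γ t) - θ`.

Since `γ` is near `o` only for times near `0` and `1`, away from the corners `F` is positive
near the left and right sides of the square and negative near the bottom and top sides. The
hypotheses on the angles say that `G < 0` near `(0, 0)` and `G > 0` near `(0, 1)` and `(1, 0)`.
Nothing is known about `G` near `(1, 1)`; there one uses instead the point `(s₀, t₀)` formed by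
the last times at which `|γ| = ε` and `|γ| = r ε`, because along the two segments that join it to
the right and top sides `F` has no zero other than `(s₀, t₀)`.

Suppose that `F` and `G` have no common zero. The square is simply connected, so `F + iG` has a
continuous argument `A` on it (`exists_continuous_arg`), normalised to lie in `(-π/2, π/2)` on
the left side. Going along the bottom and then up the right side, the signs force `A` to decrease
and give `A (s₀, t₀) ≤ -3π/2`; going up the left side and along the top they force `A` to
increase and give `A (s₀, t₀) ≥ π/2`. This contradiction is `exists_common_zero`.
-/

/-- `Θ_δ`: the supremum of the angles at the basepoint `γ 0` between `γ s` and `γ s'`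
for `s, s' ∈ (0, δ)`. -/
noncomputable def ThetaSup {n : ℕ} (γ : ℝ → EuclideanSpace ℝ (Fin n)) (δ : ℝ) : ℝ :=
  sSup {θ : ℝ | ∃ s ∈ Set.Ioo (0:ℝ) δ, ∃ s' ∈ Set.Ioo (0:ℝ) δ,
    θ = EuclideanGeometry.angle (γ s) (γ 0) (γ s')}

/-- `Θ'_δ`: the infimum of the angles at the basepoint `γ 0` between `γ s` and `γ s'`
for `s ∈ (1-δ, 1)` and `s' ∈ (0, δ)`. -/
noncomputable def ThetaInf {n : ℕ} (γ : ℝ → EuclideanSpace ℝ (Fin n)) (δ : ℝ) : ℝ :=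
  sInf {θ : ℝ | ∃ s ∈ Set.Ioo (1 - δ) (1:ℝ), ∃ s' ∈ Set.Ioo (0:ℝ) δ,
    θ = EuclideanGeometry.angle (γ s) (γ 0) (γ s')}


/-! ### Argument of a planar map without zeros -/

/-- If `F` and `G` have no common zero on an open convex set, then `F + iG` has a continuous
argument `A` there: a convex set is simply connected, so `F + iG` lifts through the covering map
`exp`. Where `F > 0`, the branch can be chosen in `(-π/2, π/2)` at one given point. -/
lemma exists_continuous_arg {U : Set (ℝ × ℝ)} (hUo : IsOpen U) (hUc : Convex ℝ U)
    {F G : ℝ × ℝ → ℝ} (hF : ContinuousOn F U) (hG : ContinuousOn G U)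
    (hFG : ∀ x ∈ U, F x = 0 → G x ≠ 0) {x₀ : ℝ × ℝ} (hx₀ : x₀ ∈ U) (hpos : 0 < F x₀) :
    ∃ A : ℝ × ℝ → ℝ, ContinuousOn A U ∧ -(Real.pi / 2) < A x₀ ∧ A x₀ < Real.pi / 2 ∧
      ∀ x ∈ U, ∃ ρ : ℝ, 0 < ρ ∧ F x = ρ * Real.cos (A x) ∧ G x = ρ * Real.sin (A x) := by
  have : ContractibleSpace U := hUc.contractibleSpace ⟨x₀, hx₀⟩
  have : LocallyPathConnectedSpace U := hUo.locallyPathConnectedSpace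
  let H : ℝ × ℝ → ℂ := fun x => (F x : ℂ) + (G x : ℂ) * Complex.I
  have hre (x) : (H x).re = F x := by simp [H]
  have him (x) : (H x).im = G x := by simp [H]
  have hH : ContinuousOn H U := by fun_prop
  have hne : ∀ x ∈ U, H x ≠ 0 := fun x hx h0 =>
    hFG x hx (by rw [← hre, h0, Complex.zero_re]) (by rw [← him, h0, Complex.zero_im])
  obtain ⟨L, ⟨hL0, hL⟩, -⟩ := Complex.isCoveringMapOn_exp.existsUnique_continuousMap_lifts
    (⟨U.domRestrict H, hH.domRestrict⟩ : C(U, ℂ)) (a₀ := ⟨x₀, hx₀⟩) (e₀ := Complex.log (H x₀))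
    (Complex.exp_log (hne x₀ hx₀)) (fun a => hne a a.2)
  have hLx : ∀ x (hx : x ∈ U), Complex.exp (L ⟨x, hx⟩) = H x := fun x hx =>
    congrFun hL ⟨x, hx⟩
  classical
  refine ⟨fun x => if hx : x ∈ U then (L ⟨x, hx⟩).im else 0, ?_, ?_⟩
  · rw [continuousOn_iff_continuous_domRestrict]
    have : U.domRestrict (fun x => if hx : x ∈ U then (L ⟨x, hx⟩).im else 0)
        = fun x => (L x).im := by
      ext x; simp [Set.domRestrict]
    rw [this]
    fun_prop
  · have harg := abs_lt.1 (Complex.abs_arg_lt_pi_div_two_iff.2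
      (Or.inl (by rw [hre]; exact hpos) : 0 < (H x₀).re ∨ H x₀ = 0))
    refine ⟨?_, ?_, fun x hx => ⟨Real.exp (L ⟨x, hx⟩).re, Real.exp_pos _, ?_, ?_⟩⟩
    · simpa [hx₀, hL0, Complex.log_im] using harg.1
    · simpa [hx₀, hL0, Complex.log_im] using harg.2
    · simp only [hx, dif_pos, ← hre, ← hLx x hx, Complex.exp_re]
    · simp only [hx, dif_pos, ← him, ← hLx x hx, Complex.exp_im]

lemma lt_of_avoids {X : Type*} [TopologicalSpace X] {S : Set X} (hS : IsPreconnected S)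
    {A : X → ℝ} (hA : ContinuousOn A S) {c : ℝ} (hc : ∀ x ∈ S, A x ≠ c) {p q : X}
    (hp : p ∈ S) (hq : q ∈ S) (h : A p < c) : A q < c := by
  by_contra! hle
  obtain ⟨x, hx, hxc⟩ := hS.intermediate_value hp hq hA ⟨h.le, hle⟩
  exact hc x hx hxc

lemma gt_of_avoids {X : Type*} [TopologicalSpace X] {S : Set X} (hS : IsPreconnected S)
    {A : X → ℝ} (hA : ContinuousOn A S) {c : ℝ} (hc : ∀ x ∈ S, A x ≠ c) {p q : X}
    (hp : p ∈ S) (hq : q ∈ S) (h : c < A p) : c < A q := by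
  by_contra! hle
  obtain ⟨x, hx, hxc⟩ := hS.intermediate_value hq hp hA ⟨hle, h.le⟩
  exact hc x hx hxc

/-- A topological criterion for a common zero in the open unit square, in the spirit of
Poincaré–Miranda. `F` is positive on the left and right sides and negative on the bottom and top
sides of a smaller square; near three of its corners the sign of `G` is prescribed. At the fourth
corner nothing is assumed about `G`, but on the two segments leading from the right and top sides
to `(s₀, t₀)` the function `F` vanishes at most at `(s₀, t₀)`. -/
lemma exists_common_zero {F G : ℝ × ℝ → ℝ} {σ η s₀ t₀ w : ℝ}
    (hF : ContinuousOn F (Set.Ioo 0 1 ×ˢ Set.Ioo 0 1))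
    (hG : ContinuousOn G (Set.Ioo 0 1 ×ˢ Set.Ioo 0 1))
    (hσ : 0 < σ) (hση : σ < η) (hηs : η < s₀) (hηt : η < t₀) (hsw : s₀ < w) (htw : t₀ < w)
    (hw : w < 1)
    (hL : ∀ t ∈ Set.Icc η t₀, 0 < F (σ, t)) (hB : ∀ s ∈ Set.Icc η s₀, F (s, σ) < 0)
    (hR : ∀ t ∈ Set.Icc η t₀, 0 < F (w, t)) (hT : ∀ s ∈ Set.Icc η s₀, F (s, w) < 0)
    (hPs : ∀ s ∈ Set.Ioc s₀ w, 0 < F (s, t₀)) (hPt : ∀ t ∈ Set.Ioc t₀ w, F (s₀, t) < 0)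
    (h00 : ∀ s ∈ Set.Icc σ η, ∀ t ∈ Set.Icc σ η, G (s, t) < 0)
    (h10 : ∀ s ∈ Set.Icc s₀ w, ∀ t ∈ Set.Icc σ η, 0 < G (s, t))
    (h01 : ∀ s ∈ Set.Icc σ η, ∀ t ∈ Set.Icc t₀ w, 0 < G (s, t)) :
    ∃ s ∈ Set.Ioo (0 : ℝ) 1, ∃ t ∈ Set.Ioo (0 : ℝ) 1, F (s, t) = 0 ∧ G (s, t) = 0 := by
  by_contra! hno
  obtain ⟨A, hA, hA1, hA2, hFG⟩ := exists_continuous_arg (isOpen_Ioo.prod isOpen_Ioo)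
    ((convex_Ioo 0 1).prod (convex_Ioo 0 1)) hF hG
    (fun x hx => hno x.1 hx.1 x.2 hx.2) (x₀ := (σ, η))
    (by constructor <;> constructor <;> simp <;> linarith) (hL η (by constructor <;> linarith))
  have hpi := Real.pi_pos
  -- the signs of `cos A` and `sin A` are those of `F` and `G`
  have hFpos : ∀ s t, s ∈ Set.Icc σ w → t ∈ Set.Icc σ w → 0 < F (s, t) →
      0 < Real.cos (A (s, t)) := by
    intro s t hs ht h
    obtain ⟨ρ, hρ, h1, -⟩ := hFG (s, t) ⟨⟨by linarith [hs.1], by linarith [hs.2]⟩,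
      ⟨by linarith [ht.1], by linarith [ht.2]⟩⟩
    rw [h1] at h
    exact pos_of_mul_pos_right h hρ.le
  have hFneg : ∀ s t, s ∈ Set.Icc σ w → t ∈ Set.Icc σ w → F (s, t) < 0 →
      Real.cos (A (s, t)) < 0 := by
    intro s t hs ht h
    obtain ⟨ρ, hρ, h1, -⟩ := hFG (s, t) ⟨⟨by linarith [hs.1], by linarith [hs.2]⟩,
      ⟨by linarith [ht.1], by linarith [ht.2]⟩⟩
    rw [h1] at h
    exact neg_of_mul_neg_right h hρ.le
  have hGpos : ∀ s t, s ∈ Set.Icc σ w → t ∈ Set.Icc σ w → 0 < G (s, t) →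
      0 < Real.sin (A (s, t)) := by
    intro s t hs ht h
    obtain ⟨ρ, hρ, -, h1⟩ := hFG (s, t) ⟨⟨by linarith [hs.1], by linarith [hs.2]⟩,
      ⟨by linarith [ht.1], by linarith [ht.2]⟩⟩
    rw [h1] at h
    exact pos_of_mul_pos_right h hρ.le
  have hGneg : ∀ s t, s ∈ Set.Icc σ w → t ∈ Set.Icc σ w → G (s, t) < 0 →
      Real.sin (A (s, t)) < 0 := by
    intro s t hs ht h
    obtain ⟨ρ, hρ, -, h1⟩ := hFG (s, t) ⟨⟨by linarith [hs.1], by linarith [hs.2]⟩,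
      ⟨by linarith [ht.1], by linarith [ht.2]⟩⟩
    rw [h1] at h
    exact neg_of_mul_neg_right h hρ.le
  have hrect : ∀ a b c d : ℝ, IsPreconnected (Set.Icc a b ×ˢ Set.Icc c d) := fun a b c d =>
    isPreconnected_Icc.prod isPreconnected_Icc
  have hcont : ∀ a b c d : ℝ, σ ≤ a → b ≤ w → σ ≤ c → d ≤ w →
      ContinuousOn A (Set.Icc a b ×ˢ Set.Icc c d) := by
    intro a b c d h1 h2 h3 h4
    refine hA.mono (Set.prod_mono ?_ ?_) <;> intro x hx <;>
      constructor <;> linarith [hx.1, hx.2]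
  -- moving through a rectangle on which `A` avoids the value `c`
  have down : ∀ (a b c d v p q p' q' : ℝ), σ ≤ a → b ≤ w → σ ≤ c → d ≤ w →
      (∀ s ∈ Set.Icc a b, ∀ t ∈ Set.Icc c d, A (s, t) ≠ v) →
      p ∈ Set.Icc a b → q ∈ Set.Icc c d → p' ∈ Set.Icc a b → q' ∈ Set.Icc c d →
      A (p, q) < v → A (p', q') < v :=
    fun a b c d v p q p' q' h1 h2 h3 h4 hv hp hq hp' hq' h =>
      lt_of_avoids (hrect a b c d) (hcont a b c d h1 h2 h3 h4)
        (fun x hx => hv x.1 hx.1 x.2 hx.2) (p := (p, q)) (q := (p', q')) ⟨hp, hq⟩ ⟨hp', hq'⟩ h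
  have up : ∀ (a b c d v p q p' q' : ℝ), σ ≤ a → b ≤ w → σ ≤ c → d ≤ w →
      (∀ s ∈ Set.Icc a b, ∀ t ∈ Set.Icc c d, A (s, t) ≠ v) →
      p ∈ Set.Icc a b → q ∈ Set.Icc c d → p' ∈ Set.Icc a b → q' ∈ Set.Icc c d →
      v < A (p, q) → v < A (p', q') :=
    fun a b c d v p q p' q' h1 h2 h3 h4 hv hp hq hp' hq' h =>
      gt_of_avoids (hrect a b c d) (hcont a b c d h1 h2 h3 h4)
        (fun x hx => hv x.1 hx.1 x.2 hx.2) (p := (p, q)) (q := (p', q')) ⟨hp, hq⟩ ⟨hp', hq'⟩ h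
  have c1 : Real.cos (Real.pi / 2) = 0 := Real.cos_pi_div_two
  have c2 : Real.cos (-(Real.pi / 2)) = 0 := by rw [Real.cos_neg, c1]
  have c3 : Real.cos (-(3 * Real.pi / 2)) = 0 := by
    rw [show -(3 * Real.pi / 2) = Real.pi / 2 - 2 * Real.pi by ring, Real.cos_sub_two_pi, c1]
  have sn1 : Real.sin (-Real.pi) = 0 := by simp
  have mσ : σ ∈ Set.Icc σ w := ⟨le_rfl, by linarith⟩
  have mη : η ∈ Set.Icc σ w := ⟨hση.le, by linarith⟩
  have ms : s₀ ∈ Set.Icc σ w := ⟨by linarith, by linarith⟩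
  have mt : t₀ ∈ Set.Icc σ w := ⟨by linarith, by linarith⟩
  have mw : w ∈ Set.Icc σ w := ⟨by linarith, le_rfl⟩
  -- counterclockwise: from the left side along the bottom and up the right side
  have a1 : A (σ, η) < 0 := by
    by_contra! h
    exact absurd (hGneg σ η mσ mη (h00 σ ⟨le_rfl, hση.le⟩ η ⟨hση.le, le_rfl⟩))
      (not_lt.2 (Real.sin_nonneg_of_nonneg_of_le_pi h (by linarith)))
  have a2 : A (η, σ) < 0 := by
    refine down σ η σ η 0 σ η η σ le_rfl (by linarith) le_rfl (by linarith) ?_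
      ⟨le_rfl, hση.le⟩ ⟨hση.le, le_rfl⟩ ⟨hση.le, le_rfl⟩ ⟨le_rfl, hση.le⟩ a1
    intro s hs t ht h
    have := hGneg s t ⟨hs.1, by linarith [hs.2]⟩ ⟨ht.1, by linarith [ht.2]⟩ (h00 s hs t ht)
    rw [h, Real.sin_zero] at this
    exact lt_irrefl _ this
  have a3 : A (η, σ) < -(Real.pi / 2) := by
    by_contra! h
    exact absurd (hFneg η σ mη mσ (hB η ⟨le_rfl, hηs.le⟩))
      (not_lt.2 (Real.cos_nonneg_of_neg_pi_div_two_le_of_le h (by linarith)))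
  have a4 : A (s₀, σ) < -(Real.pi / 2) := by
    refine down η s₀ σ σ _ η σ s₀ σ hση.le hsw.le le_rfl (by linarith) ?_
      ⟨le_rfl, hηs.le⟩ ⟨le_rfl, le_rfl⟩ ⟨hηs.le, le_rfl⟩ ⟨le_rfl, le_rfl⟩ a3
    intro s hs t ht h
    obtain rfl : t = σ := le_antisymm ht.2 ht.1
    have := hFneg s t ⟨by linarith [hs.1], by linarith [hs.2]⟩ mσ (hB s hs)
    rw [h, c2] at this
    exact lt_irrefl _ this
  have a5 : A (s₀, σ) < -Real.pi := by
    by_contra! h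
    exact absurd (hGpos s₀ σ ms mσ (h10 s₀ ⟨le_rfl, hsw.le⟩ σ ⟨le_rfl, hση.le⟩))
      (not_lt.2 (Real.sin_nonpos_of_nonpos_of_neg_pi_le (by linarith) h))
  have a6 : A (w, η) < -Real.pi := by
    refine down s₀ w σ η _ s₀ σ w η (by linarith) le_rfl le_rfl (by linarith) ?_
      ⟨le_rfl, hsw.le⟩ ⟨le_rfl, hση.le⟩ ⟨hsw.le, le_rfl⟩ ⟨hση.le, le_rfl⟩ a5
    intro s hs t ht h
    have := hGpos s t ⟨by linarith [hs.1], hs.2⟩ ⟨ht.1, by linarith [ht.2]⟩ (h10 s hs t ht)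
    rw [h, sn1] at this
    exact lt_irrefl _ this
  have a7 : A (w, η) < -(3 * Real.pi / 2) := by
    by_contra! h
    have h1 := hFpos w η mw mη (hR η ⟨le_rfl, hηt.le⟩)
    rw [← Real.cos_add_two_pi] at h1
    exact absurd h1 (not_lt.2 (Real.cos_nonpos_of_pi_div_two_le_of_le (by linarith)
      (by linarith)))
  have a8 : A (w, t₀) < -(3 * Real.pi / 2) := by
    refine down w w η t₀ _ w η w t₀ (by linarith) le_rfl hση.le htw.le ?_
      ⟨le_rfl, le_rfl⟩ ⟨le_rfl, hηt.le⟩ ⟨le_rfl, le_rfl⟩ ⟨hηt.le, le_rfl⟩ a7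
    intro s hs t ht h
    obtain rfl : s = w := le_antisymm hs.2 hs.1
    have := hFpos s t mw ⟨by linarith [ht.1], by linarith [ht.2]⟩ (hR t ht)
    rw [h, c3] at this
    exact lt_irrefl _ this
  -- on the segment from `(w, t₀)` to `(s₀, t₀)` the value `-3π/2` can only be taken at the end
  have a9 : A (s₀, t₀) ≤ -(3 * Real.pi / 2) := by
    by_contra! hlt
    refine lt_asymm a8 (up s₀ w t₀ t₀ _ s₀ t₀ w t₀ (by linarith) le_rfl (by linarith) htw.le ?_
      ⟨le_rfl, hsw.le⟩ ⟨le_rfl, le_rfl⟩ ⟨hsw.le, le_rfl⟩ ⟨le_rfl, le_rfl⟩ hlt)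
    intro s hs t ht h
    obtain rfl : t = t₀ := le_antisymm ht.2 ht.1
    rcases hs.1.eq_or_lt with rfl | hs1
    · exact hlt.ne' h
    have := hFpos s t ⟨by linarith [hs.1], hs.2⟩ mt (hPs s ⟨hs1, hs.2⟩)
    rw [h, c3] at this
    exact lt_irrefl _ this
  -- clockwise: up the left side and along the top
  have b1 : -(Real.pi / 2) < A (σ, t₀) := by
    refine up σ σ η t₀ _ σ η σ t₀ le_rfl (by linarith) hση.le htw.le ?_
      ⟨le_rfl, le_rfl⟩ ⟨le_rfl, hηt.le⟩ ⟨le_rfl, le_rfl⟩ ⟨hηt.le, le_rfl⟩ hA1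
    intro s hs t ht h
    obtain rfl : s = σ := le_antisymm hs.2 hs.1
    have := hFpos s t mσ ⟨by linarith [ht.1], by linarith [ht.2]⟩ (hL t ht)
    rw [h, c2] at this
    exact lt_irrefl _ this
  have b2 : 0 < A (σ, t₀) := by
    by_contra! h
    exact absurd (hGpos σ t₀ mσ mt (h01 σ ⟨le_rfl, hση.le⟩ t₀ ⟨le_rfl, htw.le⟩))
      (not_lt.2 (Real.sin_nonpos_of_nonpos_of_neg_pi_le h (by linarith)))
  have b3 : 0 < A (η, w) := by
    refine up σ η t₀ w _ σ t₀ η w le_rfl (by linarith) (by linarith) le_rfl ?_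
      ⟨le_rfl, hση.le⟩ ⟨le_rfl, htw.le⟩ ⟨hση.le, le_rfl⟩ ⟨htw.le, le_rfl⟩ b2
    intro s hs t ht h
    have := hGpos s t ⟨hs.1, by linarith [hs.2]⟩ ⟨by linarith [ht.1], ht.2⟩ (h01 s hs t ht)
    rw [h, Real.sin_zero] at this
    exact lt_irrefl _ this
  have b4 : Real.pi / 2 < A (η, w) := by
    by_contra! h
    exact absurd (hFneg η w mη mw (hT η ⟨le_rfl, hηs.le⟩))
      (not_lt.2 (Real.cos_nonneg_of_neg_pi_div_two_le_of_le (by linarith) h))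
  have b5 : Real.pi / 2 < A (s₀, w) := by
    refine up η s₀ w w _ η w s₀ w hση.le hsw.le (by linarith) le_rfl ?_
      ⟨le_rfl, hηs.le⟩ ⟨le_rfl, le_rfl⟩ ⟨hηs.le, le_rfl⟩ ⟨le_rfl, le_rfl⟩ b4
    intro s hs t ht h
    obtain rfl : t = w := le_antisymm ht.2 ht.1
    have := hFneg s t ⟨by linarith [hs.1], by linarith [hs.2]⟩ mw (hT s hs)
    rw [h, c1] at this
    exact lt_irrefl _ this
  have b6 : Real.pi / 2 ≤ A (s₀, t₀) := by
    by_contra! hlt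
    refine lt_asymm b5 (down s₀ s₀ t₀ w _ s₀ t₀ s₀ w (by linarith) hsw.le (by linarith) le_rfl ?_
      ⟨le_rfl, le_rfl⟩ ⟨le_rfl, htw.le⟩ ⟨le_rfl, le_rfl⟩ ⟨htw.le, le_rfl⟩ hlt)
    intro s hs t ht h
    obtain rfl : s = s₀ := le_antisymm hs.2 hs.1
    rcases ht.1.eq_or_lt with rfl | ht1
    · exact hlt.ne h
    have := hFneg s t ms ⟨by linarith [ht.1], ht.2⟩ (hPt t ⟨ht1, ht.2⟩)
    rw [h, c1] at this
    exact lt_irrefl _ this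
  -- the two estimates `a9` and `b6` at the fourth corner contradict each other
  linarith

/-! ### Behaviour of the curve near its basepoint -/

/-- A continuous function that ends at `0` takes every smaller positive value one last time,
and stays below it afterwards. -/
lemma exists_last_time {φ : ℝ → ℝ} {x ε : ℝ} (hx : x < 1) (hφ : ContinuousOn φ (Set.Icc x 1))
    (h1 : φ 1 = 0) (hε : 0 < ε) (hεx : ε < φ x) :
    ∃ s ∈ Set.Ioo x 1, φ s = ε ∧ ∀ u ∈ Set.Ioc s 1, φ u < ε := by
  have hcl : IsCompact (Set.Icc x 1 ∩ φ ⁻¹' {ε}) :=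
    isCompact_Icc.of_isClosed_subset (hφ.preimage_isClosed_of_isClosed isClosed_Icc
      isClosed_singleton) Set.inter_subset_left
  obtain ⟨y, hy, hyε⟩ := intermediate_value_Icc' hx.le hφ ⟨h1.le.trans hε.le, hεx.le⟩
  obtain ⟨s, ⟨hs, hsε⟩, hmax⟩ := hcl.exists_isGreatest ⟨y, hy, hyε⟩
  replace hsε : φ s = ε := hsε
  refine ⟨s, ⟨lt_of_le_of_ne hs.1 ?_, lt_of_le_of_ne hs.2 ?_⟩, hsε, fun u hu => ?_⟩
  · rintro rfl; linarith
  · rintro rfl; linarith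
  · by_contra! hle
    obtain ⟨v, hv, hvε⟩ := intermediate_value_Icc' hu.2
      (hφ.mono (Set.Icc_subset_Icc_left (hs.1.trans hu.1.le))) ⟨h1.le.trans hε.le, hle⟩
    have := hmax ⟨⟨hs.1.trans (hu.1.le.trans hv.1), hv.2⟩, hvε⟩
    linarith [hu.1, hv.1]

/-- The limsup and liminf hypotheses, read off at one small `δ`. -/
lemma exists_delta {n : ℕ} {γ : ℝ → EuclideanSpace ℝ (Fin n)} {θ : ℝ}
    (h₁ : Filter.limsup (ThetaSup γ) (nhdsWithin 0 (Set.Ioi 0)) < θ)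
    (h₂ : θ < Filter.liminf (ThetaInf γ) (nhdsWithin 0 (Set.Ioi 0))) :
    ∃ δ : ℝ, 0 < δ ∧ δ < 1 / 2 ∧
      (∀ s ∈ Set.Ioo 0 δ, ∀ t ∈ Set.Ioo 0 δ, EuclideanGeometry.angle (γ s) (γ 0) (γ t) < θ) ∧
      (∀ s ∈ Set.Ioo (1 - δ) 1, ∀ t ∈ Set.Ioo 0 δ,
        θ < EuclideanGeometry.angle (γ s) (γ 0) (γ t)) := by
  have hsup : Filter.IsBoundedUnder (· ≤ ·) (nhdsWithin (0 : ℝ) (Set.Ioi 0)) (ThetaSup γ) := by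
    refine Filter.isBoundedUnder_of ⟨Real.pi, fun δ => Real.sSup_le ?_ Real.pi_pos.le⟩
    rintro _ ⟨s, -, t, -, rfl⟩
    exact EuclideanGeometry.angle_le_pi _ _ _
  have hinf : Filter.IsBoundedUnder (· ≥ ·) (nhdsWithin (0 : ℝ) (Set.Ioi 0)) (ThetaInf γ) := by
    refine Filter.isBoundedUnder_of ⟨0, fun δ => Real.sInf_nonneg ?_⟩
    rintro _ ⟨s, -, t, -, rfl⟩
    exact EuclideanGeometry.angle_nonneg _ _ _
  obtain ⟨δ, ⟨h1, h2⟩, h0, hδ⟩ := ((Filter.eventually_lt_of_limsup_lt h₁ hsup).and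
    (Filter.eventually_lt_of_lt_liminf h₂ hinf)).and
    (Ioo_mem_nhdsGT (show (0 : ℝ) < 1 / 2 by norm_num)) |>.exists
  refine ⟨δ, h0, hδ, fun s hs t ht => (le_csSup ⟨Real.pi, ?_⟩ ?_).trans_lt h1,
    fun s hs t ht => h2.trans_le (csInf_le ⟨0, ?_⟩ ?_)⟩
  · rintro _ ⟨s, -, t, -, rfl⟩
    exact EuclideanGeometry.angle_le_pi _ _ _
  · exact ⟨s, hs, t, ht, rfl⟩
  · rintro _ ⟨s, -, t, -, rfl⟩
    exact EuclideanGeometry.angle_nonneg _ _ _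
  · exact ⟨s, hs, t, ht, rfl⟩

/-- The curve passes through points whose distances to the basepoint have a prescribed ratio `r`
and which subtend the prescribed angle `θ` there. -/
lemma exists_dist_ratio_and_angle {n : ℕ} {γ : ℝ → EuclideanSpace ℝ (Fin n)} {θ r : ℝ}
    (hcont : ContinuousOn γ (Set.Icc 0 1)) (hloop : γ 0 = γ 1)
    (hinj : Set.InjOn γ (Set.Ico 0 1)) (hr : 0 < r)
    (h₁ : Filter.limsup (ThetaSup γ) (nhdsWithin 0 (Set.Ioi 0)) < θ)
    (h₂ : θ < Filter.liminf (ThetaInf γ) (nhdsWithin 0 (Set.Ioi 0))) :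
    ∃ s ∈ Set.Ioo (0 : ℝ) 1, ∃ t ∈ Set.Ioo (0 : ℝ) 1, γ s ≠ γ 0 ∧ γ t ≠ γ 0 ∧
      dist (γ 0) (γ t) = r * dist (γ 0) (γ s) ∧
      EuclideanGeometry.angle (γ s) (γ 0) (γ t) = θ := by
  obtain ⟨δ, hδ0, hδ, hlt, hgt⟩ := exists_delta h₁ h₂
  have hne : ∀ s ∈ Set.Ioo (0 : ℝ) 1, γ s ≠ γ 0 := fun s hs h =>
    hs.1.ne' (hinj ⟨hs.1.le, hs.2⟩ ⟨le_rfl, one_pos⟩ h)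
  set φ : ℝ → ℝ := fun s => dist (γ 0) (γ s) with hφ
  have hφc : ContinuousOn φ (Set.Icc 0 1) := by fun_prop
  have hφpos : ∀ s ∈ Set.Ioo (0 : ℝ) 1, 0 < φ s := fun s hs => dist_pos.2 (hne s hs).symm
  have hφ0 : φ 0 = 0 := dist_self _
  have hφ1 : φ 1 = 0 := by simp [hφ, hloop]
  obtain ⟨η, rfl⟩ : ∃ η, δ = 2 * η := ⟨δ / 2, by ring⟩
  have hx : 0 < φ (1 - η) := hφpos _ ⟨by linarith, by linarith⟩
  have hcx : ContinuousOn φ (Set.Icc (1 - η) 1) :=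
    hφc.mono (Set.Icc_subset_Icc_left (by linarith))
  -- the last times at which the distances `ε` and `r * ε` occur give a point `(s₀, t₀)` near the
  -- corner `(1, 1)`, where no angle is controlled, with `φ t₀ = r * φ s₀`
  obtain ⟨ε, hε, hε1, hε2⟩ : ∃ ε, 0 < ε ∧ ε < φ (1 - η) ∧ r * ε < φ (1 - η) := by
    obtain ⟨ε, hε, h⟩ := exists_between (lt_min hx (div_pos hx hr))
    refine ⟨ε, hε, h.trans_le (min_le_left _ _), ?_⟩
    have := h.trans_le (min_le_right _ _)
    rw [lt_div_iff₀ hr] at this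
    linarith
  obtain ⟨s₀, hs₀, hs₀ε, hs₀'⟩ := exists_last_time (by linarith) hcx hφ1 hε hε1
  obtain ⟨t₀, ht₀, ht₀ε, ht₀'⟩ := exists_last_time (by linarith) hcx hφ1 (mul_pos hr hε) hε2
  obtain ⟨M, hsM, htM, hM⟩ : ∃ M, s₀ ≤ M ∧ t₀ ≤ M ∧ M < 1 :=
    ⟨max s₀ t₀, le_max_left _ _, le_max_right _ _, max_lt hs₀.2 ht₀.2⟩
  obtain ⟨y, hy, hmin⟩ := (isCompact_Icc (a := η) (b := M)).exists_isMinOn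
    ⟨s₀, by linarith [hs₀.1], hsM⟩
    (hφc.mono (Set.Icc_subset_Icc (by linarith) hM.le))
  have hm : 0 < φ y := hφpos y ⟨by linarith [hy.1], by linarith [hy.2]⟩
  have hmin' : ∀ u ∈ Set.Icc η M, φ y ≤ φ u := fun u hu => hmin hu
  -- `ν` is so small that `F` below has a constant sign on each side of the square once the
  -- distance to the basepoint at times `σ` and `1 - σ` is less than `ν`
  obtain ⟨ν, hν, hν1, hν2⟩ : ∃ ν, 0 < ν ∧ ν < r * φ y ∧ r * ν < φ y := by
    obtain ⟨ν, hν, h⟩ := exists_between (lt_min (mul_pos hr hm) (div_pos hm hr))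
    refine ⟨ν, hν, h.trans_le (min_le_left _ _), ?_⟩
    have := h.trans_le (min_le_right _ _)
    rw [lt_div_iff₀ hr] at this
    linarith
  obtain ⟨d₀, hd₀, hd₀'⟩ := Metric.continuousOn_iff.1 hφc 0 (by simp) ν hν
  obtain ⟨d₁, hd₁, hd₁'⟩ := Metric.continuousOn_iff.1 hφc 1 (by simp) ν hν
  obtain ⟨σ, hσ, hσ'⟩ := exists_between
    (lt_min (lt_min hd₀ hd₁) (lt_min (show 0 < η by linarith) (sub_pos.2 hM)))
  obtain ⟨⟨hσ0, hσ1⟩, hση, hσM⟩ : (σ < d₀ ∧ σ < d₁) ∧ σ < η ∧ σ < 1 - M := by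
    simpa only [lt_min_iff] using hσ'
  have hφσ : φ σ < ν := by
    have := hd₀' σ ⟨hσ.le, by linarith⟩ (by simpa [abs_of_pos hσ] using hσ0)
    rw [hφ0, Real.dist_eq, sub_zero] at this
    exact (le_abs_self _).trans_lt this
  have hφw : φ (1 - σ) < ν := by
    have := hd₁' (1 - σ) ⟨by linarith, by linarith⟩ (by simpa [Real.dist_eq, abs_of_pos hσ])
    rw [hφ1, Real.dist_eq, sub_zero] at this
    exact (le_abs_self _).trans_lt this
  have hIoo : Set.Ioo (0 : ℝ) 1 ⊆ Set.Icc 0 1 := Set.Ioo_subset_Icc_self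
  obtain ⟨s, hs, t, ht, hF, hG⟩ := exists_common_zero
    (F := fun x => φ x.2 - r * φ x.1)
    (G := fun x => EuclideanGeometry.angle (γ x.1) (γ 0) (γ x.2) - θ)
    (σ := σ) (η := η) (s₀ := s₀) (t₀ := t₀) (w := 1 - σ)
    ((hφc.comp continuousOn_snd fun x hx => hIoo hx.2).sub
      ((hφc.comp continuousOn_fst fun x hx => hIoo hx.1).const_mul r))
    (by
      refine ContinuousOn.sub ?_ continuousOn_const
      intro x hx
      have h1 : ContinuousWithinAt (fun x : ℝ × ℝ => (γ x.1, γ 0, γ x.2))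
          (Set.Ioo 0 1 ×ˢ Set.Ioo 0 1) x :=
        (((hcont.comp continuousOn_fst fun x hx => hIoo hx.1).prodMk
          (continuousOn_const.prodMk
            (hcont.comp continuousOn_snd fun x hx => hIoo hx.2))) x hx)
      exact (EuclideanGeometry.continuousAt_angle (x := (γ x.1, γ 0, γ x.2)) (hne _ hx.1)
        (hne _ hx.2)).comp_continuousWithinAt (f := fun x : ℝ × ℝ => (γ x.1, γ 0, γ x.2)) h1)
    hσ hση (by linarith [hs₀.1]) (by linarith [ht₀.1]) (by linarith) (by linarith) (by linarith)
    (fun t ht => by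
      have := hmin' t ⟨ht.1, ht.2.trans htM⟩
      have := mul_lt_mul_of_pos_left hφσ hr
      simp only; linarith)
    (fun s hs => by
      have := mul_le_mul_of_nonneg_left (hmin' s ⟨hs.1, hs.2.trans hsM⟩) hr.le
      simp only; linarith)
    (fun t ht => by
      have := hmin' t ⟨ht.1, ht.2.trans htM⟩
      have := mul_lt_mul_of_pos_left hφw hr
      simp only; linarith)
    (fun s hs => by
      have := mul_le_mul_of_nonneg_left (hmin' s ⟨hs.1, hs.2.trans hsM⟩) hr.le
      simp only; linarith)
    (fun s hs => by
      have := mul_lt_mul_of_pos_left (hs₀' s ⟨hs.1, by linarith [hs.2]⟩) hr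
      simp only; linarith)
    (fun t ht => by
      have := ht₀' t ⟨ht.1, by linarith [ht.2]⟩
      simp only [hs₀ε]; linarith)
    (fun s hs t ht => sub_neg.2 (hlt s ⟨by linarith [hs.1], by linarith [hs.2]⟩ t
      ⟨by linarith [ht.1], by linarith [ht.2]⟩))
    (fun s hs t ht => sub_pos.2 (hgt s ⟨by linarith [hs.1, hs₀.1], by linarith [hs.2]⟩ t
      ⟨by linarith [ht.1], by linarith [ht.2]⟩))
    (fun s hs t ht => sub_pos.2 (by
      rw [EuclideanGeometry.angle_comm]
      exact hgt t ⟨by linarith [ht.1, ht₀.1], by linarith [ht.2]⟩ s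
        ⟨by linarith [hs.1], by linarith [hs.2]⟩))
  exact ⟨s, hs, t, ht, hne s hs, hne t ht, sub_eq_zero.1 hF, sub_eq_zero.1 hG⟩

/-! ### Similar triangles -/

theorem inscribed_triangle_of_angle_condition
    (n : ℕ) (hn : 2 ≤ n) (γ : ℝ → EuclideanSpace ℝ (Fin n))
    (hγcont : ContinuousOn γ (Set.Icc 0 1)) (hγloop : γ 0 = γ 1)
    (hγinj : Set.InjOn γ (Set.Ico 0 1)) (ho : γ 0 = 0)
    (a b c : EuclideanSpace ℝ (Fin 2)) (habc : AffineIndependent ℝ ![a, b, c])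
    (h₁ : Filter.limsup (ThetaSup γ) (nhdsWithin 0 (Set.Ioi 0)) < EuclideanGeometry.angle b a c)
    (h₂ : EuclideanGeometry.angle b a c < Filter.liminf (ThetaInf γ) (nhdsWithin 0 (Set.Ioi 0))) :
    ∃ p ∈ γ '' Set.Icc (0:ℝ) 1, ∃ q ∈ γ '' Set.Icc (0:ℝ) 1,
      p ≠ γ 0 ∧ q ≠ γ 0 ∧
      ∃ k : ℝ, 0 < k ∧ dist (γ 0) p = k * dist a b ∧ dist (γ 0) q = k * dist a c ∧
        dist p q = k * dist b c := by
  have hab : a ≠ b := fun h => absurd (habc.injective (a₁ := 0) (a₂ := 1) h) (by decide)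
  have hac : a ≠ c := fun h => absurd (habc.injective (a₁ := 0) (a₂ := 2) h) (by decide)
  have hab' := dist_pos.2 hab
  have hac' := dist_pos.2 hac
  obtain ⟨s, hs, t, ht, hps, hpt, hdist, hang⟩ := exists_dist_ratio_and_angle hγcont hγloop
    hγinj (div_pos hac' hab') h₁ h₂
  have hk : 0 < dist (γ 0) (γ s) / dist a b := div_pos (dist_pos.2 hps.symm) hab'
  have h1 : dist (γ 0) (γ s) = dist (γ 0) (γ s) / dist a b * dist a b := by field_simp
  have h2 : dist (γ 0) (γ t) = dist (γ 0) (γ s) / dist a b * dist a c := by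
    rw [hdist]; field_simp
  refine ⟨γ s, ⟨s, Set.Ioo_subset_Icc_self hs, rfl⟩, γ t, ⟨t, Set.Ioo_subset_Icc_self ht, rfl⟩,
    hps, hpt, _, hk, h1, h2, ?_⟩
  generalize dist (γ 0) (γ s) / dist a b = k at hk h1 h2
  -- two sides and the included angle determine the third side
  have e1 := EuclideanGeometry.law_cos (γ s) (γ 0) (γ t)
  have e2 := EuclideanGeometry.law_cos b a c
  rw [hang, dist_comm (γ s) (γ 0), dist_comm (γ t) (γ 0), h1, h2] at e1
  rw [dist_comm b a, dist_comm c a] at e2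
  refine (sq_eq_sq₀ dist_nonneg (by positivity)).1 ?_
  linear_combination e1 - k ^ 2 * e2
end

section
/- Let n ≥ 2 and let γ : [0,1] → ℝⁿ be a Jordan curve with basepoint o = γ(0) = 0. Suppose o is a differentiable point of J: there is a nonzero vector v ∈ ℝⁿ such that (γ(s) − γ(0))/s → v as s → 0⁺ and (γ(s) − γ(1))/(s − 1) → v as s → 1⁻. Then every triangle can be inscribed with a vertex at o: for every nondegenerate triangle a, b, c ∈ ℝ² there exist p, q ∈ J \ {o} and k > 0 with dist(o,p) = k·dist(a,b), dist(o,q) = k·dist(a,c) and dist(p,q) = k·dist(b,c). -/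
/-!
Put `f = ‖γ‖`, `d₁ = dist a b`, `d₂ = dist a c`, and let `κ` be the cosine of the angle at `a`;
by the symmetry `b ↔ c` assume `d₁ ≤ d₂`. Points `p = γ s`, `q = γ t` different from the origin
solve the problem iff `g = d₁ f(t) - d₂ f(s)` and `h = ⟪γ s, γ t⟫ - κ ‖γ s‖ ‖γ t‖` both vanish
at `(s, t)` (law of cosines).

Let `s₀` be a maximum of `f`. On the rectangle `[0, s₀] × [0, 1]` the function `g` is positive on
the open left side and nonpositive on the three other sides (on the right one because `d₁ ≤ d₂`).
Hence the zero set of `g` should join the corner `(0, 0)` to the corner `(0, 1)`. Near the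
first corner `γ s` and `γ t` are almost positively parallel to `v` and `h > 0`; near the second one
they are almost opposite and `h < 0`. So `h` vanishes somewhere on the zero set of `g`.

At the two corners `g` and `h` vanish for trivial reasons, so `h` is first pushed up near `(0, 0)`
and down near `(0, 1)`, which creates no new common zero. The existence of a common zero
(`exists_common_zero`) is then proved by a Sperner-type parity count on a fine grid: if there were
none, every small cell would have constant sign of `g` or constant sign of `h`, so the number of
edges of the cell across which `g` changes sign while `h > 0` would be even, whereas the number of
such edges on the boundary of the square is exactly one (`grid_parity`).
-/

/-- The indicator modulo 2 of an edge across which `a`, `b` (the signs of `g` at its two ends)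
differ, while `c`, `d` (the signs of `h` at its ends) are both positive. -/
def edgeMark (a b c d : Bool) : ZMod 2 := if (xor a b && c && d) then 1 else 0

/-- If the marks of the four edges of each cell of a grid sum to zero modulo 2, so do the marks
of its boundary edges. -/
lemma sum_boundary_eq_zero (N : ℕ) (H V : ℕ → ℕ → ZMod 2)
    (hc : ∀ i < N, ∀ j < N, H i j + V (i + 1) j + H i (j + 1) + V i j = 0) :
    ∑ i ∈ Finset.range N, (H i 0 + H i N) + ∑ j ∈ Finset.range N, (V 0 j + V N j) = 0 := by
  have two : ∀ x : ZMod 2, x + x = 0 := by decide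
  -- Signs are irrelevant modulo 2, so both directions telescope.
  have neg : ∀ x y : ZMod 2, x - y = x + y := by decide
  have e1 : ∑ i ∈ Finset.range N, (H i 0 + H i N)
      = ∑ i ∈ Finset.range N, ∑ j ∈ Finset.range N, (H i j + H i (j + 1)) := by
    refine Finset.sum_congr rfl fun i _ => ?_
    have := Finset.sum_range_sub (fun j => H i j) N
    simp only [neg] at this
    rw [add_comm, ← this]
    exact Finset.sum_congr rfl fun j _ => add_comm _ _
  have e2 : ∑ j ∈ Finset.range N, (V 0 j + V N j)
      = ∑ i ∈ Finset.range N, ∑ j ∈ Finset.range N, (V i j + V (i + 1) j) := by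
    rw [Finset.sum_comm]
    refine Finset.sum_congr rfl fun j _ => ?_
    have := Finset.sum_range_sub (fun i => V i j) N
    simp only [neg] at this
    rw [add_comm, ← this]
    exact Finset.sum_congr rfl fun i _ => add_comm _ _
  rw [e1, e2, ← Finset.sum_add_distrib]
  refine Finset.sum_eq_zero fun i hi => ?_
  rw [← Finset.sum_add_distrib]
  refine Finset.sum_eq_zero fun j hj => ?_
  rw [← hc i (Finset.mem_range.1 hi) j (Finset.mem_range.1 hj)]
  ring

/-- Two sign patterns `G`, `P` on the vertices of a grid, at least one of them constant on each
cell, cannot have the boundary behaviour below: the left side would carry exactly one marked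
edge, and the other sides none. -/
lemma grid_parity (N : ℕ) (hN : 2 ≤ N) (G P : ℕ → ℕ → Bool)
    (hc : ∀ i < N, ∀ j < N,
      (G i j = G (i + 1) j ∧ G i j = G i (j + 1) ∧ G i j = G (i + 1) (j + 1)) ∨
      (P i j = P (i + 1) j ∧ P i j = P i (j + 1) ∧ P i j = P (i + 1) (j + 1)))
    (hbot : ∀ i ≤ N, G i 0 = false) (htop : ∀ i ≤ N, G i N = false)
    (hright : ∀ j ≤ N, G N j = false) (hleft : ∀ j, 0 < j → j < N → G 0 j = true)
    (hP0 : P 0 0 = true) (hPN : P 0 N = false) : False := by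
  have key := sum_boundary_eq_zero N
    (fun i j => edgeMark (G i j) (G (i + 1) j) (P i j) (P (i + 1) j))
    (fun i j => edgeMark (G i j) (G i (j + 1)) (P i j) (P i (j + 1))) (by
      intro i hi j hj
      have := hc i hi j hj
      revert this
      generalize G i j = a
      generalize G (i + 1) j = b
      generalize G i (j + 1) = c
      generalize G (i + 1) (j + 1) = d
      generalize P i j = a'
      generalize P (i + 1) j = b'
      generalize P i (j + 1) = c'
      generalize P (i + 1) (j + 1) = d'
      revert a b c d a' b' c' d'
      decide)
  have h1 : ∑ i ∈ Finset.range N, (edgeMark (G i 0) (G (i + 1) 0) (P i 0) (P (i + 1) 0)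
      + edgeMark (G i N) (G (i + 1) N) (P i N) (P (i + 1) N)) = 0 := by
    refine Finset.sum_eq_zero fun i hi => ?_
    have hi := Finset.mem_range.1 hi
    simp [edgeMark, hbot i hi.le, hbot (i + 1) hi, htop i hi.le, htop (i + 1) hi]
  have h2 : ∑ j ∈ Finset.range N, (edgeMark (G 0 j) (G 0 (j + 1)) (P 0 j) (P 0 (j + 1))
      + edgeMark (G N j) (G N (j + 1)) (P N j) (P N (j + 1))) = 1 := by
    rw [Finset.sum_eq_single_of_mem 0 (Finset.mem_range.2 (by omega))]
    · have g0 := hbot 0 (by omega)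
      have g1 := hleft 1 (by omega) (by omega)
      -- `G` is not constant on the first cell, so `P` is.
      have hp : P 0 1 = true := by
        rcases hc 0 (by omega) 0 (by omega) with h | h
        · have := h.2.1
          simp [g0, g1] at this
        · rw [← hP0]; exact h.2.1.symm
      simp [edgeMark, g0, g1, hP0, hp, hright 0 (by omega), hright 1 (by omega)]
    · intro j hj hj0
      have hj := Finset.mem_range.1 hj
      have e : edgeMark (G 0 j) (G 0 (j + 1)) (P 0 j) (P 0 (j + 1)) = 0 := by
        rcases Nat.lt_or_ge (j + 1) N with h | h
        · simp [edgeMark, hleft j (by omega) hj, hleft (j + 1) (by omega) h]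
        · have : j + 1 = N := by omega
          rw [this]
          simp [edgeMark, hPN]
      rw [e]
      simp [edgeMark, hright j hj.le, hright (j + 1) hj]
  rw [h1, h2] at key
  exact absurd key (by decide)

/-- A variant of the Poincaré–Miranda theorem in dimension two. -/
lemma exists_common_zero_s1 (g h : ℝ × ℝ → ℝ) (hg : Continuous g) (hh : Continuous h)
    (hbot : ∀ s ∈ Set.Icc (0 : ℝ) 1, g (s, 0) ≤ 0) (htop : ∀ s ∈ Set.Icc (0 : ℝ) 1, g (s, 1) ≤ 0)
    (hright : ∀ t ∈ Set.Icc (0 : ℝ) 1, g (1, t) ≤ 0)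
    (hleft : ∀ t ∈ Set.Ioo (0 : ℝ) 1, 0 < g (0, t))
    (h0 : 0 < h (0, 0)) (h1 : h (0, 1) < 0) :
    ∃ s ∈ Set.Icc (0 : ℝ) 1, ∃ t ∈ Set.Icc (0 : ℝ) 1, g (s, t) = 0 ∧ h (s, t) = 0 := by
  by_contra! hne
  let U : Fin 4 → Set (ℝ × ℝ) := ![{x | 0 < g x}, {x | g x < 0}, {x | 0 < h x}, {x | h x < 0}]
  have hU : ∀ i, IsOpen (U i) := by
    intro i
    fin_cases i
    · exact isOpen_lt continuous_const hg
    · exact isOpen_lt hg continuous_const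
    · exact isOpen_lt continuous_const hh
    · exact isOpen_lt hh continuous_const
  have hcov : Set.Icc (0 : ℝ) 1 ×ˢ Set.Icc (0 : ℝ) 1 ⊆ ⋃ i, U i := by
    rintro ⟨s, t⟩ ⟨hs, ht⟩
    rw [Set.mem_iUnion]
    rcases lt_trichotomy (g (s, t)) 0 with hlt | heq | hgt
    · exact ⟨1, hlt⟩
    · rcases lt_or_gt_of_ne (hne s hs t ht heq) with hlt | hgt
      · exact ⟨3, hlt⟩
      · exact ⟨2, hgt⟩
    · exact ⟨0, hgt⟩
  obtain ⟨δ, hδ, hleb⟩ := lebesgue_number_lemma_of_metric (isCompact_Icc.prod isCompact_Icc) hU hcov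
  obtain ⟨m, hm⟩ := exists_nat_one_div_lt hδ
  -- The mesh is `1 / N` with `N ≥ 2`, so that the left side has an interior vertex.
  set N : ℕ := m + 2 with hNdef
  have hNpos : (0 : ℝ) < N := by rw [hNdef]; positivity
  have hmesh : 1 / (N : ℝ) < δ := by
    refine lt_of_le_of_lt ?_ hm
    apply one_div_le_one_div_of_le (by positivity)
    rw [hNdef]; push_cast; linarith
  let x : ℕ → ℝ := fun i => i / N
  have hx : ∀ i ≤ N, x i ∈ Set.Icc (0 : ℝ) 1 := by
    intro i hi
    have : (i : ℝ) ≤ N := by exact_mod_cast hi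
    exact ⟨by positivity, (div_le_one hNpos).2 this⟩
  have hx0 : x 0 = 0 := by simp [x]
  have hxN : x N = 1 := div_self hNpos.ne'
  have hxs : ∀ i, dist (x (i + 1)) (x i) < δ := by
    intro i
    have : x (i + 1) - x i = 1 / N := by simp only [x]; push_cast; ring
    rw [Real.dist_eq, this, abs_of_pos (by positivity)]
    exact hmesh
  refine grid_parity N (by omega) (fun i j => decide (0 < g (x i, x j)))
    (fun i j => decide (0 < h (x i, x j))) ?_ ?_ ?_ ?_ ?_ ?_ ?_
  · intro i hi j hj
    obtain ⟨k, hk⟩ := hleb (x i, x j) ⟨hx i hi.le, hx j hj.le⟩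
    have m00 : (x i, x j) ∈ U k := hk (Metric.mem_ball_self hδ)
    have m10 : (x (i + 1), x j) ∈ U k := hk (by simp [Prod.dist_eq, hxs])
    have m01 : (x i, x (j + 1)) ∈ U k := hk (by simp [Prod.dist_eq, hxs])
    have m11 : (x (i + 1), x (j + 1)) ∈ U k := hk (by simp [Prod.dist_eq, hxs])
    fin_cases k
    · have m00 : 0 < g (x i, x j) := m00
      have m10 : 0 < g (x (i + 1), x j) := m10
      have m01 : 0 < g (x i, x (j + 1)) := m01
      have m11 : 0 < g (x (i + 1), x (j + 1)) := m11
      left; simp [m00, m10, m01, m11]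
    · have m00 : g (x i, x j) < 0 := m00
      have m10 : g (x (i + 1), x j) < 0 := m10
      have m01 : g (x i, x (j + 1)) < 0 := m01
      have m11 : g (x (i + 1), x (j + 1)) < 0 := m11
      left; simp [m00.not_gt, m10.not_gt, m01.not_gt, m11.not_gt]
    · have m00 : 0 < h (x i, x j) := m00
      have m10 : 0 < h (x (i + 1), x j) := m10
      have m01 : 0 < h (x i, x (j + 1)) := m01
      have m11 : 0 < h (x (i + 1), x (j + 1)) := m11
      right; simp [m00, m10, m01, m11]
    · have m00 : h (x i, x j) < 0 := m00
      have m10 : h (x (i + 1), x j) < 0 := m10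
      have m01 : h (x i, x (j + 1)) < 0 := m01
      have m11 : h (x (i + 1), x (j + 1)) < 0 := m11
      right; simp [m00.not_gt, m10.not_gt, m01.not_gt, m11.not_gt]
  · intro i hi
    simpa [hx0] using hbot _ (hx i hi)
  · intro i hi
    simpa [hxN] using htop _ (hx i hi)
  · intro i hi
    simpa [hxN] using hright _ (hx i hi)
  · intro j hj0 hjN
    have hj1 : (j : ℝ) < N := by exact_mod_cast hjN
    have hj2 : (0 : ℝ) < j := by exact_mod_cast hj0
    simpa [hx0] using hleft (x j) ⟨div_pos hj2 hNpos, (div_lt_one hNpos).2 hj1⟩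
  · simpa [hx0] using h0
  · simpa [hx0, hxN] using h1.le

section Angle

variable {E : Type*} [NormedAddCommGroup E] [InnerProductSpace ℝ E]

/-- For `κ = cos θ` and nonzero `x`, `y`: positive, zero or negative according as the angle
between `x` and `y` is less than, equal to or greater than `θ`. -/
def angleExcess (κ : ℝ) (x y : E) : ℝ := inner ℝ x y - κ * (‖x‖ * ‖y‖)

lemma continuous_angleExcess (κ : ℝ) :
    Continuous fun z : E × E => angleExcess κ z.1 z.2 := by
  unfold angleExcess
  fun_prop

lemma angleExcess_smul_smul (κ : ℝ) (x y : E) {c d : ℝ} (hc : 0 < c) (hd : 0 < d) :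
    angleExcess κ (c • x) (d • y) = c * d * angleExcess κ x y := by
  simp only [angleExcess, real_inner_smul_left, real_inner_smul_right, norm_smul,
    Real.norm_eq_abs, abs_of_pos hc, abs_of_pos hd]
  ring

lemma angleExcess_self (κ : ℝ) (v : E) : angleExcess κ v v = (1 - κ) * ‖v‖ ^ 2 := by
  rw [angleExcess, real_inner_self_eq_norm_sq]
  ring

lemma angleExcess_self_neg (κ : ℝ) (v : E) : angleExcess κ v (-v) = -((1 + κ) * ‖v‖ ^ 2) := by
  rw [angleExcess, inner_neg_right, real_inner_self_eq_norm_sq, norm_neg]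
  ring

/-- The tangency condition at the basepoint controls the sign of `angleExcess` near the two
corners `(0, 0)` and `(0, 1)` of the parameter square. -/
lemma exists_corner_sign (γ : ℝ → E) (v : E) (hv : v ≠ 0) (κ : ℝ) (hκ1 : κ < 1) (hκ2 : -1 < κ)
    (h0 : γ 0 = 0) (h1 : γ 1 = 0)
    (htang₀ : Filter.Tendsto (fun s : ℝ => s⁻¹ • (γ s - γ 0))
      (nhdsWithin 0 (Set.Ioi 0)) (nhds v))
    (htang₁ : Filter.Tendsto (fun s : ℝ => (s - 1)⁻¹ • (γ s - γ 1))
      (nhdsWithin 1 (Set.Iio 1)) (nhds v)) :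
    ∃ ε : ℝ, 0 < ε ∧ ε ≤ 1 / 2 ∧
      (∀ s t : ℝ, 0 < s → s < ε → 0 < t → t < ε → 0 < angleExcess κ (γ s) (γ t)) ∧
      (∀ s t : ℝ, 0 < s → s < ε → 1 - ε < t → t < 1 → angleExcess κ (γ s) (γ t) < 0) := by
  have hv2 : 0 < ‖v‖ ^ 2 := by positivity
  simp only [h0, h1, sub_zero] at htang₀ htang₁
  have htang₁' : Filter.Tendsto (fun s : ℝ => (1 - s)⁻¹ • γ s)
      (nhdsWithin 1 (Set.Iio 1)) (nhds (-v)) := by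
    refine htang₁.neg.congr fun s => ?_
    rw [← neg_smul, ← inv_neg, neg_sub]
  have n1 : ∀ᶠ z : E × E in nhds (v, v), 0 < angleExcess κ z.1 z.2 := by
    refine (continuous_angleExcess κ).continuousAt.eventually (lt_mem_nhds ?_)
    change 0 < angleExcess κ v v
    rw [angleExcess_self]
    exact mul_pos (by linarith) hv2
  have n2 : ∀ᶠ z : E × E in nhds (v, -v), angleExcess κ z.1 z.2 < 0 := by
    refine (continuous_angleExcess κ).continuousAt.eventually (gt_mem_nhds ?_)
    change angleExcess κ v (-v) < 0
    rw [angleExcess_self_neg]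
    exact neg_lt_zero.2 (mul_pos (by linarith) hv2)
  rw [nhds_prod_eq] at n1 n2
  have e1 := (htang₀.prodMap htang₀).eventually n1
  have e2 := (htang₀.prodMap htang₁').eventually n2
  obtain ⟨A, hA, B, hB, hAB⟩ := Filter.mem_prod_iff.1 e1
  obtain ⟨C, hC, D, hD, hCD⟩ := Filter.mem_prod_iff.1 e2
  obtain ⟨ε₁, hε₁, k1⟩ := (mem_nhdsGT_iff_exists_Ioo_subset).1
    (Filter.inter_mem (Filter.inter_mem hA hB) hC)
  obtain ⟨ε₂, hε₂, k2⟩ := (mem_nhdsLT_iff_exists_Ioo_subset).1 hD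
  have hε₁ : 0 < ε₁ := hε₁
  have hε₂ : ε₂ < 1 := hε₂
  refine ⟨min (min ε₁ (1 - ε₂)) (1 / 2), ?_, min_le_right _ _, ?_, ?_⟩
  · refine lt_min (lt_min hε₁ (by linarith)) (by norm_num)
  · intro s t hs hs' ht ht'
    simp only [lt_min_iff] at hs' ht'
    have q : 0 < angleExcess κ (s⁻¹ • γ s) (t⁻¹ • γ t) :=
      hAB (Set.mk_mem_prod (k1 ⟨hs, hs'.1.1⟩).1.1 (k1 ⟨ht, ht'.1.1⟩).1.2)
    rw [angleExcess_smul_smul κ _ _ (inv_pos.2 hs) (inv_pos.2 ht)] at q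
    exact (mul_pos_iff_of_pos_left (mul_pos (inv_pos.2 hs) (inv_pos.2 ht))).1 q
  · intro s t hs hs' ht ht'
    rw [sub_lt_comm] at ht
    simp only [lt_min_iff] at hs' ht
    have q : angleExcess κ (s⁻¹ • γ s) ((1 - t)⁻¹ • γ t) < 0 :=
      hCD (Set.mk_mem_prod (k1 ⟨hs, hs'.1.1⟩).2 (k2 ⟨by linarith [ht.1.2], ht'⟩))
    have pt : 0 < (1 - t)⁻¹ := inv_pos.2 (by linarith)
    rw [angleExcess_smul_smul κ _ _ (inv_pos.2 hs) pt] at q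
    exact (pos_iff_neg_of_mul_neg q).1 (mul_pos (inv_pos.2 hs) pt)

/-- A globally continuous loop that leaves the origin only to come back at time `1`, with the
given one-sided tangents, has two points at prescribed distance ratio `d₂ / d₁ ≥ 1` from the
origin which are seen from it under a prescribed angle `arccos κ`. -/
lemma exists_params (γ : ℝ → E) (hγ : Continuous γ) (h0 : γ 0 = 0) (h1 : γ 1 = 0)
    (hne : ∀ s ∈ Set.Ioo (0 : ℝ) 1, γ s ≠ 0)
    (v : E) (hv : v ≠ 0) (κ : ℝ) (hκ1 : κ < 1) (hκ2 : -1 < κ)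
    (htang₀ : Filter.Tendsto (fun s : ℝ => s⁻¹ • (γ s - γ 0))
      (nhdsWithin 0 (Set.Ioi 0)) (nhds v))
    (htang₁ : Filter.Tendsto (fun s : ℝ => (s - 1)⁻¹ • (γ s - γ 1))
      (nhdsWithin 1 (Set.Iio 1)) (nhds v))
    (d₁ d₂ : ℝ) (hd₁ : 0 < d₁) (hd : d₁ ≤ d₂) :
    ∃ s ∈ Set.Ioo (0 : ℝ) 1, ∃ t ∈ Set.Ioo (0 : ℝ) 1,
      d₁ * ‖γ t‖ = d₂ * ‖γ s‖ ∧ angleExcess κ (γ s) (γ t) = 0 := by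
  obtain ⟨ε, hε, hε2, c0, c1⟩ := exists_corner_sign γ v hv κ hκ1 hκ2 h0 h1 htang₀ htang₁
  have hd₂ : 0 < d₂ := hd₁.trans_le hd
  obtain ⟨s₀, hs₀, hmax⟩ := isCompact_Icc.exists_isMaxOn (s := Set.Icc (0 : ℝ) 1)
    ⟨0, by simp⟩ hγ.norm.continuousOn
  have hmax' : ∀ t ∈ Set.Icc (0 : ℝ) 1, ‖γ t‖ ≤ ‖γ s₀‖ := fun t ht => hmax ht
  have hpos : 0 < ‖γ s₀‖ :=
    (norm_pos_iff.2 (hne (1 / 2) (by norm_num))).trans_le (hmax' _ (by norm_num))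
  have hs₀0 : 0 < s₀ := by
    refine lt_of_le_of_ne hs₀.1 ?_
    rintro rfl
    simp [h0] at hpos
  have hs₀1 : s₀ < 1 := by
    refine lt_of_le_of_ne hs₀.2 ?_
    rintro rfl
    simp [h1] at hpos
  have hin : ∀ x ∈ Set.Icc (0 : ℝ) 1, x ≠ 0 → s₀ * x ∈ Set.Ioo (0 : ℝ) 1 := by
    intro x hx hx0
    have : 0 < x := lt_of_le_of_ne hx.1 (Ne.symm hx0)
    exact ⟨by positivity, by nlinarith [hx.2]⟩
  obtain ⟨x, hx, t, ht, hg, hh⟩ := exists_common_zero_s1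
    (fun z => d₁ * ‖γ z.2‖ - d₂ * ‖γ (s₀ * z.1)‖)
    -- The two extra terms resolve the trivial zeros at `(0, 0)` and `(0, 1)`.
    (fun z => angleExcess κ (γ (s₀ * z.1)) (γ z.2) + max 0 (ε - z.1 - z.2)
      - max 0 (ε - z.1 - (1 - z.2)))
    (by fun_prop)
    (by
      have : Continuous fun z : ℝ × ℝ => angleExcess κ (γ (s₀ * z.1)) (γ z.2) :=
        (continuous_angleExcess κ).comp
          (f := fun z : ℝ × ℝ => (γ (s₀ * z.1), γ z.2)) (by fun_prop)
      fun_prop)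
    (fun s _ => by simp only [h0, norm_zero]; nlinarith [norm_nonneg (γ (s₀ * s))])
    (fun s _ => by simp only [h1, norm_zero]; nlinarith [norm_nonneg (γ (s₀ * s))])
    (fun t ht => by
      have := hmax' t ht
      simp only [mul_one]
      nlinarith [norm_nonneg (γ t)])
    (fun t ht => by
      have : 0 < ‖γ t‖ := norm_pos_iff.2 (hne t ht)
      simp only [mul_zero, h0, norm_zero, sub_zero]
      positivity)
    (by
      have : max 0 (ε - 0 - (1 - 0)) = 0 := max_eq_left (by linarith)
      simp only [this]
      simp [h0, angleExcess, hε])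
    (by
      have : max 0 (ε - 0 - 1) = 0 := max_eq_left (by linarith)
      simp only [this]
      simp [h0, h1, angleExcess, hε])
  simp only at hg hh
  have hx0 : x ≠ 0 := by
    rintro rfl
    simp only [mul_zero, h0, norm_zero, sub_zero] at hg
    have ht' : γ t = 0 := by simpa [hd₁.ne'] using hg
    have : t = 0 ∨ t = 1 := by
      by_contra! hcon
      exact hne t ⟨lt_of_le_of_ne ht.1 (Ne.symm hcon.1), lt_of_le_of_ne ht.2 hcon.2⟩ ht'
    rcases this with rfl | rfl
    · rw [max_eq_right (by linarith : (0 : ℝ) ≤ ε - 0 - 0),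
        max_eq_left (by linarith : ε - 0 - (1 - 0) ≤ 0)] at hh
      simp [h0, angleExcess, hε.ne'] at hh
    · rw [max_eq_left (by linarith : ε - 0 - 1 ≤ 0),
        max_eq_right (by linarith : (0 : ℝ) ≤ ε - 0 - (1 - 1))] at hh
      simp [h0, angleExcess, hε.ne'] at hh
  have hs := hin x hx hx0
  have hfs : 0 < ‖γ (s₀ * x)‖ := norm_pos_iff.2 (hne _ hs)
  have hft : 0 < ‖γ t‖ := by
    have : 0 < d₁ * ‖γ t‖ := by nlinarith [mul_pos hd₂ hfs]
    exact (mul_pos_iff_of_pos_left hd₁).1 this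
  have ht' : t ∈ Set.Ioo (0 : ℝ) 1 := by
    refine ⟨lt_of_le_of_ne ht.1 ?_, lt_of_le_of_ne ht.2 ?_⟩
    · rintro rfl
      simp [h0] at hft
    · rintro rfl
      simp [h1] at hft
  refine ⟨s₀ * x, hs, t, ht', by linarith, ?_⟩
  have hsx : s₀ * x ≤ x := by nlinarith [hx.1]
  -- In the corner regions the correction has the same strict sign as `angleExcess`.
  rcases lt_or_ge (x + t) ε with hA | hA
  · have := c0 (s₀ * x) t hs.1 (by linarith [ht'.1]) ht'.1 (by linarith [hx.1])
    rw [max_eq_right (by linarith : 0 ≤ ε - x - t),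
      max_eq_left (by linarith [hx.1] : ε - x - (1 - t) ≤ 0)] at hh
    linarith
  · rcases lt_or_ge (x + (1 - t)) ε with hB | hB
    · have := c1 (s₀ * x) t hs.1 (by linarith [ht'.2]) (by linarith [hx.1]) ht'.2
      rw [max_eq_left (by linarith : ε - x - t ≤ 0),
        max_eq_right (by linarith : 0 ≤ ε - x - (1 - t))] at hh
      linarith
    · rw [max_eq_left (by linarith : ε - x - t ≤ 0),
        max_eq_left (by linarith : ε - x - (1 - t) ≤ 0)] at hh
      linarith

/-- The law of cosines turns `exists_params` into a statement about the three side lengths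
of a nondegenerate triangle. -/
lemma exists_inscribed_of_le (γ : ℝ → E) (hγ : Continuous γ) (h0 : γ 0 = 0) (h1 : γ 1 = 0)
    (hne : ∀ s ∈ Set.Ioo (0 : ℝ) 1, γ s ≠ 0) (v : E) (hv : v ≠ 0)
    (htang₀ : Filter.Tendsto (fun s : ℝ => s⁻¹ • (γ s - γ 0))
      (nhdsWithin 0 (Set.Ioi 0)) (nhds v))
    (htang₁ : Filter.Tendsto (fun s : ℝ => (s - 1)⁻¹ • (γ s - γ 1))
      (nhdsWithin 1 (Set.Iio 1)) (nhds v))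
    (d₁ d₂ d₃ : ℝ) (hd₁ : 0 < d₁) (hd₃ : 0 ≤ d₃) (hd : d₁ ≤ d₂) (ht1 : d₃ < d₁ + d₂)
    (ht2 : d₂ < d₁ + d₃) :
    ∃ s ∈ Set.Ioo (0 : ℝ) 1, ∃ t ∈ Set.Ioo (0 : ℝ) 1, ∃ k : ℝ, 0 < k ∧
      ‖γ s‖ = k * d₁ ∧ ‖γ t‖ = k * d₂ ∧ dist (γ s) (γ t) = k * d₃ := by
  have hd₂ : 0 < d₂ := hd₁.trans_le hd
  have hp : 0 < 2 * d₁ * d₂ := by positivity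
  obtain ⟨s, hs, t, ht, hr, ha⟩ := exists_params γ hγ h0 h1 hne v hv
    ((d₁ ^ 2 + d₂ ^ 2 - d₃ ^ 2) / (2 * d₁ * d₂))
    (by rw [div_lt_one hp]; nlinarith) (by rw [lt_div_iff₀ hp]; nlinarith)
    htang₀ htang₁ d₁ d₂ hd₁ hd
  have hk : 0 < ‖γ s‖ / d₁ := div_pos (norm_pos_iff.2 (hne s hs)) hd₁
  have e1 : ‖γ s‖ = ‖γ s‖ / d₁ * d₁ := by field_simp
  have e2 : ‖γ t‖ = ‖γ s‖ / d₁ * d₂ := by field_simp; linarith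
  refine ⟨s, hs, t, ht, ‖γ s‖ / d₁, hk, e1, e2, ?_⟩
  generalize ‖γ s‖ / d₁ = k at hk e1 e2
  rw [angleExcess, e1, e2] at ha
  have hi : inner ℝ (γ s) (γ t) = k ^ 2 * ((d₁ ^ 2 + d₂ ^ 2 - d₃ ^ 2) / 2) := by
    rw [sub_eq_zero.1 ha]
    field_simp
  have hsq : dist (γ s) (γ t) ^ 2 = (k * d₃) ^ 2 := by
    rw [dist_eq_norm, norm_sub_sq_real, hi, e1, e2]
    ring
  exact (sq_eq_sq₀ dist_nonneg (by positivity)).1 hsq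

end Angle

/-- Strict triangle inequality for the vertices of a nondegenerate triangle. -/
lemma dist_lt_of_not_collinear {x y z : EuclideanSpace ℝ (Fin 2)}
    (h : ¬ Collinear ℝ {x, y, z}) : dist x z < dist x y + dist y z := by
  refine lt_of_le_of_ne (dist_triangle x y z) fun he => h ?_
  exact (dist_add_dist_eq_iff.1 he.symm).collinear

theorem inscribed_triangle_of_differentiable_point
    (n : ℕ) (hn : 2 ≤ n) (γ : ℝ → EuclideanSpace ℝ (Fin n))
    (hγcont : ContinuousOn γ (Set.Icc 0 1)) (hγloop : γ 0 = γ 1)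
    (hγinj : Set.InjOn γ (Set.Ico 0 1)) (ho : γ 0 = 0)
    (v : EuclideanSpace ℝ (Fin n)) (hv : v ≠ 0)
    (htang₀ : Filter.Tendsto (fun s : ℝ => s⁻¹ • (γ s - γ 0))
      (nhdsWithin 0 (Set.Ioi 0)) (nhds v))
    (htang₁ : Filter.Tendsto (fun s : ℝ => (s - 1)⁻¹ • (γ s - γ 1))
      (nhdsWithin 1 (Set.Iio 1)) (nhds v)) :
    ∀ a b c : EuclideanSpace ℝ (Fin 2), AffineIndependent ℝ ![a, b, c] →
      ∃ p ∈ γ '' Set.Icc (0:ℝ) 1, ∃ q ∈ γ '' Set.Icc (0:ℝ) 1,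
        p ≠ γ 0 ∧ q ≠ γ 0 ∧
        ∃ k : ℝ, 0 < k ∧ dist (γ 0) p = k * dist a b ∧ dist (γ 0) q = k * dist a c ∧
          dist p q = k * dist b c := by
  intro a b c habc
  rw [affineIndependent_iff_not_collinear_set] at habc
  -- `Γ` agrees with `γ` on `[0, 1]` and is continuous on all of `ℝ`.
  let Γ : ℝ → EuclideanSpace ℝ (Fin n) := fun s => γ (max 0 (min s 1))
  have hΓ : Continuous Γ := by
    refine hγcont.comp_continuous (by fun_prop) fun s => ?_
    exact ⟨le_max_left _ _, max_le zero_le_one (min_le_right _ _)⟩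
  have hΓγ : ∀ s ∈ Set.Icc (0 : ℝ) 1, Γ s = γ s := by
    intro s hs
    simp only [Γ, min_eq_left hs.2, max_eq_right hs.1]
  have hΓ0 : Γ 0 = γ 0 := hΓγ 0 (by simp)
  have hΓ1 : Γ 1 = γ 1 := hΓγ 1 (by simp)
  have hne : ∀ s ∈ Set.Ioo (0 : ℝ) 1, γ s ≠ 0 := by
    intro s hs h
    have := hγinj ⟨hs.1.le, hs.2⟩ (by simp : (0 : ℝ) ∈ Set.Ico (0 : ℝ) 1) (h.trans ho.symm)
    exact hs.1.ne' this
  have hΓne : ∀ s ∈ Set.Ioo (0 : ℝ) 1, Γ s ≠ 0 := fun s hs => by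
    rw [hΓγ s ⟨hs.1.le, hs.2.le⟩]; exact hne s hs
  have t0 : Filter.Tendsto (fun s : ℝ => s⁻¹ • (Γ s - Γ 0))
      (nhdsWithin 0 (Set.Ioi 0)) (nhds v) := by
    refine htang₀.congr' ?_
    filter_upwards [Ioo_mem_nhdsGT (zero_lt_one' ℝ)] with s hs
    rw [hΓγ s ⟨hs.1.le, hs.2.le⟩, hΓ0]
  have t1 : Filter.Tendsto (fun s : ℝ => (s - 1)⁻¹ • (Γ s - Γ 1))
      (nhdsWithin 1 (Set.Iio 1)) (nhds v) := by
    refine htang₁.congr' ?_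
    filter_upwards [Ioo_mem_nhdsLT (zero_lt_one' ℝ)] with s hs
    rw [hΓγ s ⟨hs.1.le, hs.2.le⟩, hΓ1]
  have l1 : dist a c < dist a b + dist b c := dist_lt_of_not_collinear habc
  have l2 : dist a b < dist a c + dist c b :=
    dist_lt_of_not_collinear (by rwa [Set.pair_comm c b])
  have l3 : dist b c < dist b a + dist a c :=
    dist_lt_of_not_collinear (by rwa [Set.insert_comm b a])
  rw [dist_comm c b] at l2
  rw [dist_comm b a] at l3
  have key := exists_inscribed_of_le Γ hΓ (hΓ0.trans ho) (hΓ1.trans (hγloop.symm.trans ho)) hΓne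
    v hv t0 t1
  rcases le_total (dist a b) (dist a c) with hle | hle
  · obtain ⟨s, hs, t, ht, k, hk, e1, e2, e3⟩ :=
      key _ _ (dist b c) (by linarith) dist_nonneg hle (by linarith) (by linarith)
    have hs' : s ∈ Set.Icc (0 : ℝ) 1 := ⟨hs.1.le, hs.2.le⟩
    have ht' : t ∈ Set.Icc (0 : ℝ) 1 := ⟨ht.1.le, ht.2.le⟩
    rw [hΓγ s hs'] at e1 e3
    rw [hΓγ t ht'] at e2 e3
    refine ⟨γ s, ⟨s, hs', rfl⟩, γ t, ⟨t, ht', rfl⟩, ?_, ?_, k, hk, ?_, ?_, e3⟩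
    · rw [ho]; exact hne s hs
    · rw [ho]; exact hne t ht
    · rw [ho, dist_zero_left, e1]
    · rw [ho, dist_zero_left, e2]
  · obtain ⟨s, hs, t, ht, k, hk, e1, e2, e3⟩ :=
      key _ _ (dist b c) (by linarith) dist_nonneg hle (by linarith) (by linarith)
    have hs' : s ∈ Set.Icc (0 : ℝ) 1 := ⟨hs.1.le, hs.2.le⟩
    have ht' : t ∈ Set.Icc (0 : ℝ) 1 := ⟨ht.1.le, ht.2.le⟩
    rw [hΓγ s hs'] at e1 e3
    rw [hΓγ t ht'] at e2 e3
    refine ⟨γ t, ⟨t, ht', rfl⟩, γ s, ⟨s, hs', rfl⟩, ?_, ?_, k, hk, ?_, ?_, ?_⟩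
    · rw [ho]; exact hne t ht
    · rw [ho]; exact hne s hs
    · rw [ho, dist_zero_left, e2]
    · rw [ho, dist_zero_left, e1]
    · rw [dist_comm, e3]
end

section
/- (Nielsen) Let γ : [0,1] → ℝ² be a Jordan curve with image J, and let a, b, c ∈ ℝ² be a nondegenerate triangle. Then infinitely many triangles similar to the triangle a, b, c are inscribed in J: the set of ordered triples (p, q, s) ∈ J × J × J with p, q, s pairwise distinct for which there exists k > 0 with dist(p,q) = k·dist(a,b), dist(p,s) = k·dist(a,c) and dist(q,s) = k·dist(b,c) is infinite. -/
/-!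
Identify the plane with `ℂ`, extend the curve to a continuous 1-periodic `Γ : ℝ → ℂ`, and let
`w ∉ ℝ` be the complex number with `c = a + w (b - a)`. Then `(Γ x, Γ y, Γ z)` is similar to
`(a, b, c)`, with the same orientation, exactly when
`h_w(x, y, z) = (1 - w) Γ x + w Γ y - Γ z` vanishes and `Γ x ≠ Γ y`; replacing `w` by its conjugate
gives the triangles of the opposite orientation.

If there were only finitely many inscribed triangles, some parameter interval `I` would contain no
first vertex of any of them, for either orientation. Then `h_w` has no zero on the convex set
`{x ∈ I, x ≤ y ≤ z ≤ x + 1}` with its three degenerate edges `x = y = z`, `y = z = x + 1` and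
`x = y, z = x + 1` removed, so `h_w` has a continuous logarithm there. On each of the three faces
`x = y`, `y = z`, `z = x + 1` the function `h_w` is a constant multiple of a chord `Γ v - Γ u`, so
this logarithm differs by a constant from a fixed logarithm `L(u, v)` of the chord. Going around the
three faces computes the monodromy `L(v, u + 1) - L(u, v)` as the sum of the changes of `log h_w`
near the three removed edges (`shift_eq_log_sum`).

Each of these changes is the variation of `log (q - Γ t)` as `t` runs over a small arc `[u, v]`,
where `q = Γ u + μ (Γ v - Γ u)` is the apex of a triangle erected on the chord. It takes the same
value for all `u < v` in `I`, and it is the principal value `log (1 - 1/μ)` as soon as `q` can be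
strictly separated from the arc by a line. Such a chord always exists
(`exists_separated_apex`): for `N` large, take points `t_0, …, t_{N-1}` of the arc which are extreme
in the directions of the `N`-th roots of unity. They cannot be visited in cyclic order by an arc, and
where the order fails the apex sticks out of the convex hull.

Consequently the monodromy equals `log (1 - w) + log (1 - 1/(1 - w)) + log (1/w)`, whose
imaginary part has the sign opposite to that of `Im w`: the arguments of the three factors are, up
to that sign, the angles of the triangle. But the monodromy does not depend on `w`, so `w` and its
conjugate give a contradiction (`exists_triangle`).
-/

/-! ### Continuous logarithms -/

/-- The homotopy `s₀ + t (x - s₀)`, `t ∈ [0, 1]`, contracts `S` to `s₀`; lifting its image under `f`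
through the covering `exp : ℂ → ℂ \ {0}` gives the logarithm. No openness of `S` is needed. -/
lemma exists_continuousOn_log_of_convex {E : Type*} [AddCommGroup E] [Module ℝ E]
    [TopologicalSpace E] [IsTopologicalAddGroup E] [ContinuousSMul ℝ E] {S : Set E}
    (hS : Convex ℝ S) {f : E → ℂ} (hf : ContinuousOn f S) (h0 : ∀ x ∈ S, f x ≠ 0) :
    ∃ φ : E → ℂ, ContinuousOn φ S ∧ ∀ x ∈ S, Complex.exp (φ x) = f x := by
  classical
  rcases S.eq_empty_or_nonempty with rfl | ⟨s₀, hs₀⟩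
  · exact ⟨0, by simp, by simp⟩
  have hmem : ∀ p : unitInterval × S, s₀ + (p.1 : ℝ) • ((p.2 : E) - s₀) ∈ S := fun p =>
    hS.add_smul_sub_mem hs₀ p.2.2 p.1.2
  let H : C(unitInterval × S, {z : ℂ // z ≠ 0}) :=
    ⟨fun p => ⟨f (s₀ + (p.1 : ℝ) • ((p.2 : E) - s₀)), h0 _ (hmem p)⟩,
      (hf.comp_continuous (by fun_prop) hmem).subtype_mk _⟩
  let c : C(S, ℂ) := ContinuousMap.const _ (Complex.log (f s₀))
  have H0 : ∀ a, H (0, a) = ⟨Complex.exp (c a), Complex.exp_ne_zero _⟩ := fun a =>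
    Subtype.ext (by simp [H, c, Complex.exp_log (h0 _ hs₀)])
  let L := Complex.isCoveringMap_exp.liftHomotopy H c H0
  have hL := Complex.isCoveringMap_exp.liftHomotopy_lifts H c H0
  refine ⟨fun x => if hx : x ∈ S then L (1, ⟨x, hx⟩) else 0, ?_, ?_⟩
  · rw [continuousOn_iff_continuous_domRestrict]
    have : Continuous fun x : S => L (1, x) := by fun_prop
    exact this.congr fun x => by simp [Set.domRestrict]
  · intro x hx
    have := congrArg Subtype.val (congrFun hL (1, ⟨x, hx⟩))
    beta_reduce
    rw [dif_pos hx]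
    refine Eq.trans this ?_
    simp [H]

lemma const_of_exp_const {X : Type*} [TopologicalSpace X] {S : Set X} (hS : IsPreconnected S)
    {f : X → ℂ} (hf : ContinuousOn f S) {κ : ℂ} (h : ∀ x ∈ S, Complex.exp (f x) = κ)
    {x y : X} (hx : x ∈ S) (hy : y ∈ S) : f x = f y :=
  Complex.isCoveringMap_exp.constOn_of_comp hS hf
    (fun a ha b hb => Subtype.ext ((h a ha).trans (h b hb).symm)) hx hy

lemma sub_eq_const_of_exp {X : Type*} [TopologicalSpace X] {S : Set X} (hS : IsPreconnected S)
    {f g : X → ℂ} (hf : ContinuousOn f S) (hg : ContinuousOn g S) {κ : ℂ}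
    (h : ∀ x ∈ S, Complex.exp (f x) = κ * Complex.exp (g x)) :
    ∃ c : ℂ, ∀ x ∈ S, f x = g x + c := by
  rcases S.eq_empty_or_nonempty with rfl | ⟨s₀, hs₀⟩
  · exact ⟨0, by simp⟩
  refine ⟨f s₀ - g s₀, fun x hx => ?_⟩
  have := const_of_exp_const hS (hf.sub hg) (κ := κ)
    (fun x hx => by
      rw [Pi.sub_apply, Complex.exp_sub, h x hx, mul_div_cancel_right₀ _ (Complex.exp_ne_zero _)])
    hx hs₀
  simp only [Pi.sub_apply] at this
  linear_combination this

lemma log_sub_log_of_re_pos {z w : ℂ} (hz : 0 < z.re) (hw : 0 < w.re) :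
    Complex.log z - Complex.log w = Complex.log (z / w) := by
  have hz0 : z ≠ 0 := by rintro rfl; simp at hz
  have hw0 : w ≠ 0 := by rintro rfl; simp at hw
  have h1 := abs_lt.1 (Complex.abs_arg_lt_pi_div_two_iff.2 (Or.inl hz))
  have h2 := abs_lt.1 (Complex.abs_arg_lt_pi_div_two_iff.2 (Or.inl hw))
  have : z / w = Complex.exp (Complex.log z - Complex.log w) := by
    rw [Complex.exp_sub, Complex.exp_log hz0, Complex.exp_log hw0]
  rw [this, Complex.log_exp]
  · simp only [Complex.sub_im, Complex.log_im]; linarith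
  · simp only [Complex.sub_im, Complex.log_im]; linarith

/-! ### Apexes separated from an arc -/

/-- With `μ = |μ| e^{iθ}`, `0 < θ < π`, the root of unity is `ζ = e^{-2πi/N}` with
`2π/N < θ`; the last inequality says `sin (θ - 2π/N) > 0`. -/
lemma exists_root_of_unity {μ : ℂ} (hμ : 0 < μ.im) :
    ∃ (N : ℕ) (ζ : ℂ), 1 ≤ N ∧ ζ ^ N = 1 ∧ ζ ≠ 1 ∧ ζ.re ^ 2 + ζ.im ^ 2 = 1 ∧ ζ.im < 0 ∧
      0 < ζ.re * μ.im + ζ.im * μ.re := by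
  have hlim : Filter.Tendsto (fun n : ℕ => 2 * Real.pi / (n : ℝ)) Filter.atTop (nhds 0) :=
    tendsto_const_div_atTop_nhds_zero_nat _
  have hc : Continuous fun x : ℝ => Real.cos x * μ.im - Real.sin x * μ.re := by fun_prop
  have h1 : ∀ᶠ n : ℕ in Filter.atTop,
      0 < Real.cos (2 * Real.pi / (n : ℝ)) * μ.im - Real.sin (2 * Real.pi / (n : ℝ)) * μ.re :=
    ((hc.tendsto 0).comp hlim).eventually (lt_mem_nhds (by simpa using hμ))
  obtain ⟨N, hN, hN3⟩ := (h1.and (Filter.eventually_ge_atTop 3)).exists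
  have hN3' : (3 : ℝ) ≤ N := by exact_mod_cast hN3
  set δ := 2 * Real.pi / (N : ℝ) with hδ
  have hs : 0 < Real.sin δ := by
    apply Real.sin_pos_of_pos_of_lt_pi
    · have := Real.pi_pos; positivity
    · rw [hδ, div_lt_iff₀ (by linarith)]; nlinarith [Real.pi_pos]
  have hre : (Complex.exp ((-δ : ℝ) * Complex.I)).re = Real.cos δ := by
    rw [Complex.exp_ofReal_mul_I_re, Real.cos_neg]
  have him : (Complex.exp ((-δ : ℝ) * Complex.I)).im = -Real.sin δ := by
    rw [Complex.exp_ofReal_mul_I_im, Real.sin_neg]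
  refine ⟨N, Complex.exp ((-δ : ℝ) * Complex.I), by omega, ?_, ?_, ?_, ?_, ?_⟩
  · rw [← Complex.exp_nat_mul, Complex.exp_eq_one_iff]
    refine ⟨-1, ?_⟩
    have : (N : ℂ) ≠ 0 := by exact_mod_cast (by omega : N ≠ 0)
    rw [hδ]; push_cast; field_simp
  · intro h
    have := congrArg Complex.im h
    rw [him] at this; simp at this; linarith
  · rw [hre, him]; nlinarith [Real.sin_sq_add_cos_sq δ]
  · rw [him]; linarith
  · rw [hre, him]; linarith

/-- Some chord `α u, α v` with `u < v` has its left apex `α u + μ (α v - α u)` strictly outside the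
convex hull of the whole arc; `e` is the normal of a separating line. -/
lemma exists_separated_apex_of_im_pos {α : ℝ → ℂ} {i₀ i₁ : ℝ} (hi : i₀ < i₁)
    (hα : ContinuousOn α (Set.Icc i₀ i₁)) (hinj : Set.InjOn α (Set.Icc i₀ i₁))
    {μ : ℂ} (hμ : 0 < μ.im) :
    ∃ u ∈ Set.Icc i₀ i₁, ∃ v ∈ Set.Icc i₀ i₁, u < v ∧ ∃ e : ℂ, ∀ t ∈ Set.Icc i₀ i₁,
      0 < (e * (α u + μ * (α v - α u) - α t)).re := by
  obtain ⟨N, ζ, hN, hζN, hζ1, hζn, hζi, hζμ⟩ := exists_root_of_unity hμ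
  have hmax : ∀ e : ℂ, ∃ t ∈ Set.Icc i₀ i₁, ∀ s ∈ Set.Icc i₀ i₁,
      (e * α s).re ≤ (e * α t).re := fun e =>
    isCompact_Icc.exists_isMaxOn (Set.nonempty_Icc.2 hi.le)
      (Complex.continuous_re.comp_continuousOn (continuousOn_const.mul hα))
  choose T hTmem hTmax using hmax
  -- `T (ζ ^ i)` is the parameter of an extreme point of the arc in the direction `conj (ζ ^ i)`.
  -- Between consecutive directions the extreme points turn counterclockwise around the hull, so a
  -- decrease of the parameter gives a chord, in increasing parameter, with the exterior on its left.
  by_cases hdec : ∃ i : ℕ, T (ζ ^ (i + 1)) < T (ζ ^ i)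
  · obtain ⟨i, hlt⟩ := hdec
    refine ⟨_, hTmem _, _, hTmem _, hlt, ζ ^ (i + 1), fun t ht => ?_⟩
    have h1 := hTmax (ζ ^ (i + 1)) _ ht
    have h2 := hTmax (ζ ^ (i + 1)) _ (hTmem (ζ ^ i))
    have h3 := hTmax (ζ ^ i) _ (hTmem (ζ ^ (i + 1)))
    have hne : α (T (ζ ^ i)) ≠ α (T (ζ ^ (i + 1))) := fun h =>
      hlt.ne' (hinj (hTmem _) (hTmem _) h)
    have hζ0 : ζ ≠ 0 := by rintro rfl; simp at hζi
    set u := T (ζ ^ (i + 1))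
    set v := T (ζ ^ i)
    have hD : ζ ^ i * (α v - α u) ≠ 0 := mul_ne_zero (pow_ne_zero _ hζ0) (sub_ne_zero.2 hne)
    have hDre : 0 ≤ (ζ ^ i * (α v - α u)).re := by rw [mul_sub, Complex.sub_re]; linarith
    have hDre' : (ζ * (ζ ^ i * (α v - α u))).re ≤ 0 := by
      have : ζ * (ζ ^ i * (α v - α u)) = ζ ^ (i + 1) * α v - ζ ^ (i + 1) * α u := by ring
      rw [this, Complex.sub_re]; linarith
    have key : 0 < (μ * (ζ * (ζ ^ i * (α v - α u)))).re := by
      set D := ζ ^ i * (α v - α u)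
      -- `D = conj ζ * (ζ * D)` since `|ζ| = 1`; everything is expressed through `ζ * D`.
      have e1 : D.re = (ζ * D).re * ζ.re + (ζ * D).im * ζ.im := by
        simp only [Complex.mul_re, Complex.mul_im]
        linear_combination (-D.re) * hζn
      have hD' : ζ * D ≠ 0 := mul_ne_zero hζ0 hD
      rw [e1] at hDre
      set D' := ζ * D
      rw [Complex.mul_re]
      rcases hDre'.lt_or_eq with hp | hp
      · have : 0 < -ζ.im * (μ.re * D'.re - μ.im * D'.im) := by
          nlinarith [mul_pos (neg_pos.2 hp) hζμ, mul_nonneg hμ.le hDre]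
        exact pos_of_mul_pos_right this (by linarith)
      · have hq : D'.im ≠ 0 := fun h => hD' (Complex.ext hp h)
        rw [hp] at hDre ⊢
        have : D'.im < 0 := lt_of_le_of_ne (by nlinarith) hq
        nlinarith [mul_pos hμ (neg_pos.2 this)]
    have : ζ ^ (i + 1) * (α u + μ * (α v - α u) - α t)
        = (ζ ^ (i + 1) * α u - ζ ^ (i + 1) * α t) + μ * (ζ * (ζ ^ i * (α v - α u))) := by ring
    rw [this, Complex.add_re, Complex.sub_re]
    linarith
  · exfalso
    push Not at hdec
    -- The parameters increase and return to their initial value after `N` steps, so a single point is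
    -- extreme in all `N` directions; these sum to zero, which reduces the arc to that point.
    have hmono : Monotone fun i : ℕ => T (ζ ^ i) := monotone_nat_of_le_succ hdec
    have hconst : ∀ i ≤ N, T (ζ ^ i) = T 1 := fun i hiN => le_antisymm
      (by simpa [hζN] using hmono hiN) (by simpa using hmono (Nat.zero_le i))
    have hN2 : 2 ≤ N := by
      rcases Nat.lt_or_ge N 2 with h | h
      · obtain rfl : N = 1 := by omega
        exact absurd (by simpa using hζN) hζ1
      · exact h
    have hsum : ∑ i ∈ Finset.range N, ζ ^ i = 0 := by
      have := mul_geom_sum ζ N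
      rw [hζN, sub_self] at this
      exact (mul_eq_zero.1 this).resolve_left (sub_ne_zero.2 hζ1)
    have hall : ∀ t ∈ Set.Icc i₀ i₁, t = T 1 := by
      intro t ht
      apply hinj ht (hTmem _)
      have hnn : ∀ i ∈ Finset.range N, 0 ≤ (ζ ^ i * (α (T 1) - α t)).re := fun i hi' => by
        have := hTmax (ζ ^ i) t ht
        rw [hconst i (Finset.mem_range.1 hi').le] at this
        rw [mul_sub, Complex.sub_re]; linarith
      have hz : ∑ i ∈ Finset.range N, (ζ ^ i * (α (T 1) - α t)).re = 0 := by
        rw [← Complex.re_sum, ← Finset.sum_mul, hsum]; simp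
      have hzero := (Finset.sum_eq_zero_iff_of_nonneg hnn).1 hz
      have z0 := hzero 0 (Finset.mem_range.2 (by omega))
      have z1 := hzero 1 (Finset.mem_range.2 (by omega))
      rw [pow_zero, one_mul] at z0
      rw [pow_one, Complex.mul_re, z0] at z1
      have : (α (T 1) - α t).im = 0 := by
        have : ζ.im * (α (T 1) - α t).im = 0 := by linarith
        exact (mul_eq_zero.1 this).resolve_left hζi.ne
      exact (sub_eq_zero.1 (Complex.ext z0 this)).symm
    exact hi.ne ((hall i₀ ⟨le_rfl, hi.le⟩).trans (hall i₁ ⟨hi.le, le_rfl⟩).symm)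

lemma exists_separated_apex {α : ℝ → ℂ} {i₀ i₁ : ℝ} (hi : i₀ < i₁)
    (hα : ContinuousOn α (Set.Icc i₀ i₁)) (hinj : Set.InjOn α (Set.Icc i₀ i₁))
    {μ : ℂ} (hμ : μ.im ≠ 0) :
    ∃ u ∈ Set.Icc i₀ i₁, ∃ v ∈ Set.Icc i₀ i₁, u < v ∧ ∃ e : ℂ, ∀ t ∈ Set.Icc i₀ i₁,
      0 < (e * (α u + μ * (α v - α u) - α t)).re := by
  rcases hμ.lt_or_gt with h | h
  · obtain ⟨u, hu, v, hv, huv, e, he⟩ := exists_separated_apex_of_im_pos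
      (α := fun t => (starRingEnd ℂ) (α t)) hi (Complex.continuous_conj.comp_continuousOn hα)
      (fun x hx y hy hxy => hinj hx hy ((starRingEnd ℂ).injective hxy))
      (μ := (starRingEnd ℂ) μ) (by simpa using h)
    refine ⟨u, hu, v, hv, huv, (starRingEnd ℂ) e, fun t ht => ?_⟩
    have := he t ht
    rw [← Complex.conj_re]
    simpa only [map_mul, map_add, map_sub, Complex.conj_conj] using this
  · exact exists_separated_apex_of_im_pos hi hα hinj h

/-- The variation along `[u, v]` of any continuous logarithm of `κ (q - α t)`, with `q` the apex
`α u + μ (α v - α u)`, is the principal value `log (1 - 1/μ)` for a suitable chord `u < v`: the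
points `q - α t` lie in an open half-plane, on which a rotated principal logarithm is continuous. -/
lemma exists_corner {α : ℝ → ℂ} {i₀ i₁ : ℝ} (hi : i₀ < i₁)
    (hα : ContinuousOn α (Set.Icc i₀ i₁)) (hinj : Set.InjOn α (Set.Icc i₀ i₁))
    {μ : ℂ} (hμ : μ.im ≠ 0) :
    ∃ u ∈ Set.Icc i₀ i₁, ∃ v ∈ Set.Icc i₀ i₁, u < v ∧
      ∀ (φ : ℝ → ℂ) (κ : ℂ), ContinuousOn φ (Set.Icc u v) →
        (∀ t ∈ Set.Icc u v, Complex.exp (φ t) = κ * (α u + μ * (α v - α u) - α t)) →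
        φ v - φ u = Complex.log (1 - 1 / μ) := by
  obtain ⟨u, hu, v, hv, huv, e, he⟩ := exists_separated_apex hi hα hinj hμ
  refine ⟨u, hu, v, hv, huv, fun φ κ hφ hexp => ?_⟩
  have hsub : Set.Icc u v ⊆ Set.Icc i₀ i₁ := Set.Icc_subset_Icc hu.1 hv.2
  have hμ0 : μ ≠ 0 := by rintro rfl; simp at hμ
  have he0 : e ≠ 0 := by rintro rfl; simpa using he u hu
  have hA : α v - α u ≠ 0 := sub_ne_zero.2 fun h => huv.ne' (hinj hv hu h)
  obtain ⟨c, hc⟩ := sub_eq_const_of_exp (S := Set.Icc u v) isPreconnected_Icc hφ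
    (g := fun t => Complex.log (e * (α u + μ * (α v - α u) - α t))) (κ := κ / e)
    (ContinuousOn.clog (continuousOn_const.mul (continuousOn_const.sub (hα.mono hsub)))
      fun t ht => Or.inl (he t (hsub ht)))
    (fun t ht => by
      rw [hexp t ht, Complex.exp_log (fun h => by have := he t (hsub ht); simp [h] at this)]
      field_simp)
  rw [hc v ⟨huv.le, le_rfl⟩, hc u ⟨le_rfl, huv.le⟩, add_sub_add_right_eq_sub,
    log_sub_log_of_re_pos (he v hv) (he u hu), mul_div_mul_left _ _ he0]
  congr 1
  rw [add_sub_cancel_left]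
  field_simp
  ring

/-! ### The monodromy of the chord -/

lemma convex_combo_pos {a b p q : ℝ} (ha : 0 ≤ a) (hb : 0 ≤ b) (hab : a + b = 1) (hp : 0 < p)
    (hq : 0 < q) : 0 < a * p + b * q := by
  rcases ha.eq_or_lt with rfl | ha'
  · obtain rfl : b = 1 := by linarith
    simpa using hq
  · nlinarith [mul_pos ha' hp, mul_nonneg hb hq.le]

lemma convex_combo_nonneg {a b p q : ℝ} (ha : 0 ≤ a) (hb : 0 ≤ b) (hp : 0 ≤ p)
    (hq : 0 ≤ q) : 0 ≤ a * p + b * q := by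
  positivity

lemma convex_strip (i₀ i₁ : ℝ) :
    Convex ℝ {p : ℝ × ℝ | p.1 ∈ Set.Icc i₀ i₁ ∧ p.1 < p.2 ∧ p.2 < p.1 + 1} := by
  rintro ⟨x, y⟩ ⟨h1, h2, h3⟩ ⟨x', y'⟩ ⟨h1', h2', h3'⟩ a b ha hb hab
  refine ⟨convex_Icc _ _ h1 h1' ha hb hab, ?_, ?_⟩ <;>
  simp only [Prod.smul_mk, Prod.mk_add_mk, smul_eq_mul] at *
  · linarith [convex_combo_pos ha hb hab (sub_pos.2 h2) (sub_pos.2 h2')]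
  · linarith [convex_combo_pos ha hb hab (sub_pos.2 h3) (sub_pos.2 h3')]

/-- Here `L` is a logarithm of the chord `Γ v - Γ u`. If no `x ∈ [i₀, i₁]` is the first vertex of a
nondegenerate triangle of shape `w` inscribed in `Γ`, then the monodromy of `L` from
`(i₀, i₁)` to `(i₁, i₀ + 1)`, which are opposite chords, is a sum of three principal logarithms. -/
lemma shift_eq_log_sum {Γ : ℝ → ℂ} (hΓ : Continuous Γ) (hper : ∀ t, Γ (t + 1) = Γ t)
    (hinj : ∀ s t, Γ s = Γ t → s ≤ t → t < s + 1 → s = t) {i₀ i₁ : ℝ} (hi : i₀ < i₁)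
    (hi' : i₁ < i₀ + 1) {w : ℂ} (hw : w.im ≠ 0)
    (hno : ∀ x ∈ Set.Icc i₀ i₁, ∀ y z, Γ z = Γ x + w * (Γ y - Γ x) → Γ y = Γ x)
    {L : ℝ × ℝ → ℂ}
    (hL : ContinuousOn L {p | p.1 ∈ Set.Icc i₀ i₁ ∧ p.1 < p.2 ∧ p.2 < p.1 + 1})
    (hLexp : ∀ p ∈ {p : ℝ × ℝ | p.1 ∈ Set.Icc i₀ i₁ ∧ p.1 < p.2 ∧ p.2 < p.1 + 1},
      Complex.exp (L p) = Γ p.2 - Γ p.1) :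
    L (i₁, i₀ + 1) - L (i₀, i₁) = Complex.log (1 - w) + Complex.log (1 - 1 / (1 - w))
      + Complex.log (1 / w) := by
  have hw0 : w ≠ 0 := by rintro rfl; simp at hw
  have hw1 : 1 - w ≠ 0 := fun h => hw (by
    have := congrArg Complex.im h; simpa using this)
  have hw1' : w - 1 ≠ 0 := fun h => hw1 (by linear_combination -h)
  have hIinj : Set.InjOn Γ (Set.Icc i₀ i₁) := fun s hs t ht h => by
    rcases le_total s t with hst | hst
    · exact hinj s t h hst (by linarith [hs.1, ht.2])
    · exact (hinj t s h.symm hst (by linarith [ht.1, hs.2])).symm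
  -- The strict inequalities remove the edges `x = y = z`, `y = z = x + 1` and `x = y, z = x + 1`,
  -- the only zeros of `(1 - w) Γ x + w Γ y - Γ z`.
  set S : Set (ℝ × ℝ × ℝ) := {p | p.1 ∈ Set.Icc i₀ i₁ ∧ (p.1 ≤ p.2.1 ∧ p.2.1 ≤ p.2.2 ∧
    p.2.2 ≤ p.1 + 1) ∧ p.1 < p.2.2 ∧ p.2.1 < p.1 + 1 ∧ p.2.2 < p.2.1 + 1}
  have hSconv : Convex ℝ S := by
    rintro ⟨x, y, z⟩ ⟨h1, h2, h3, h4, h5⟩ ⟨x', y', z'⟩ ⟨h1', h2', h3', h4', h5'⟩ a b ha hb hab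
    simp only [Prod.smul_mk, Prod.mk_add_mk, smul_eq_mul] at *
    refine ⟨convex_Icc _ _ h1 h1' ha hb hab, ⟨?_, ?_, ?_⟩, ?_, ?_, ?_⟩
    · linarith [convex_combo_nonneg ha hb (sub_nonneg.2 h2.1) (sub_nonneg.2 h2'.1)]
    · linarith [convex_combo_nonneg ha hb (sub_nonneg.2 h2.2.1) (sub_nonneg.2 h2'.2.1)]
    · linarith [convex_combo_nonneg ha hb (sub_nonneg.2 h2.2.2) (sub_nonneg.2 h2'.2.2)]
    · linarith [convex_combo_pos ha hb hab (sub_pos.2 h3) (sub_pos.2 h3')]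
    · linarith [convex_combo_pos ha hb hab (sub_pos.2 h4) (sub_pos.2 h4')]
    · linarith [convex_combo_pos ha hb hab (sub_pos.2 h5) (sub_pos.2 h5')]
  have hne : ∀ p ∈ S, (1 - w) * Γ p.1 + w * Γ p.2.1 - Γ p.2.2 ≠ 0 := by
    rintro ⟨x, y, z⟩ ⟨h1, h2, h3, h4, h5⟩ h
    simp only at *
    have hyx := hno x h1 y z (by linear_combination -h)
    have hzx : Γ z = Γ x := by rw [hyx] at h; linear_combination -h
    have hxy := hinj x y hyx.symm h2.1 h4
    subst hxy
    exact h3.ne (hinj x z hzx.symm h3.le h5)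
  obtain ⟨Φ, hΦ, hΦexp⟩ := exists_continuousOn_log_of_convex hSconv
    (f := fun p => (1 - w) * Γ p.1 + w * Γ p.2.1 - Γ p.2.2) (by fun_prop) hne
  -- The faces `x = y`, `y = z`, `z = x + 1` are all parametrized by `D`, and on them the function is
  -- `-1`, `w - 1` and `w` times a chord.
  set D : Set (ℝ × ℝ) := {p | p.1 ∈ Set.Icc i₀ i₁ ∧ p.1 < p.2 ∧ p.2 < p.1 + 1}
  have hDpre := (convex_strip i₀ i₁).isPreconnected
  obtain ⟨c₁, hc₁⟩ := sub_eq_const_of_exp hDpre (f := fun p => Φ (p.1, p.1, p.2)) (g := L)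
    (κ := -1) (hΦ.comp (by fun_prop) fun p ⟨h1, h2, h3⟩ =>
      ⟨h1, ⟨le_rfl, h2.le, h3.le⟩, h2, by simp, h3⟩) hL
    (fun p hp => by
      obtain ⟨h1, h2, h3⟩ := hp
      rw [hΦexp _ ⟨h1, ⟨le_rfl, h2.le, h3.le⟩, h2, by simp, h3⟩, hLexp _ ⟨h1, h2, h3⟩]
      ring)
  obtain ⟨c₂, hc₂⟩ := sub_eq_const_of_exp hDpre (f := fun p => Φ (p.1, p.2, p.2)) (g := L)
    (κ := w - 1) (hΦ.comp (by fun_prop) fun p ⟨h1, h2, h3⟩ =>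
      ⟨h1, ⟨h2.le, le_rfl, h3.le⟩, h2, h3, by simp⟩) hL
    (fun p hp => by
      obtain ⟨h1, h2, h3⟩ := hp
      rw [hΦexp _ ⟨h1, ⟨h2.le, le_rfl, h3.le⟩, h2, h3, by simp⟩, hLexp _ ⟨h1, h2, h3⟩]
      ring)
  obtain ⟨c₃, hc₃⟩ := sub_eq_const_of_exp hDpre (f := fun p => Φ (p.1, p.2, p.1 + 1)) (g := L)
    (κ := w) (hΦ.comp (by fun_prop) fun p ⟨h1, h2, h3⟩ =>
      ⟨h1, ⟨h2.le, h3.le, le_rfl⟩, by simp, h3, by simpa using h2⟩) hL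
    (fun p hp => by
      obtain ⟨h1, h2, h3⟩ := hp
      rw [hΦexp _ ⟨h1, ⟨h2.le, h3.le, le_rfl⟩, by simp, h3, by simpa using h2⟩,
        hLexp _ ⟨h1, h2, h3⟩, hper]
      ring)
  -- The two chords `Γ (u + 1) - Γ v` and `Γ v - Γ u` are opposite, so the monodromy is an odd multiple
  -- of `πi`, hence the same for all `u < v` in the interval.
  have hshift : ∀ u ∈ Set.Icc i₀ i₁, ∀ v ∈ Set.Icc i₀ i₁, u < v →
      L (v, u + 1) - L (u, v) = L (i₁, i₀ + 1) - L (i₀, i₁) := by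
    intro u hu v hv huv
    have hTconv : Convex ℝ {p : ℝ × ℝ | p.1 ∈ Set.Icc i₀ i₁ ∧ p.2 ∈ Set.Icc i₀ i₁ ∧
        p.1 < p.2} := by
      rintro ⟨x, y⟩ ⟨h1, h2, h3⟩ ⟨x', y'⟩ ⟨h1', h2', h3'⟩ a b ha hb hab
      refine ⟨convex_Icc _ _ h1 h1' ha hb hab, convex_Icc _ _ h2 h2' ha hb hab, ?_⟩
      simp only [Prod.smul_mk, Prod.mk_add_mk, smul_eq_mul] at *
      linarith [convex_combo_pos ha hb hab (sub_pos.2 h3) (sub_pos.2 h3')]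
    have m1 : ∀ p : ℝ × ℝ, p.1 ∈ Set.Icc i₀ i₁ ∧ p.2 ∈ Set.Icc i₀ i₁ ∧ p.1 < p.2 →
        (p.2, p.1 + 1) ∈ D := fun p ⟨h1, h2, h3⟩ =>
      ⟨h2, by simp only; linarith [h1.1, h2.2], by simp only; linarith⟩
    have m2 : ∀ p : ℝ × ℝ, p.1 ∈ Set.Icc i₀ i₁ ∧ p.2 ∈ Set.Icc i₀ i₁ ∧ p.1 < p.2 →
        p ∈ D := fun p ⟨h1, h2, h3⟩ =>
      ⟨h1, h3, by linarith [h1.1, h2.2]⟩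
    have := const_of_exp_const hTconv.isPreconnected
      (f := fun p => L (p.2, p.1 + 1) - L p) (κ := -1)
      ((hL.comp (by fun_prop) m1).sub (hL.mono m2))
      (fun p hp => by
        have hA : Γ p.2 - Γ p.1 ≠ 0 := by
          rw [← hLexp _ (m2 p hp)]; exact Complex.exp_ne_zero _
        rw [Complex.exp_sub, hLexp _ (m1 p hp), hLexp _ (m2 p hp), hper,
          div_eq_iff hA]
        ring)
      (x := (u, v)) (y := (i₀, i₁)) ⟨hu, hv, huv⟩ ⟨⟨le_rfl, hi.le⟩, ⟨hi.le, le_rfl⟩, hi⟩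
    simpa using this
  have memD : ∀ u ∈ Set.Icc i₀ i₁, ∀ v ∈ Set.Icc i₀ i₁, u < v → (u, v) ∈ D :=
    fun u hu v hv huv => ⟨hu, huv, by simp only; linarith [hu.1, hv.2]⟩
  have memD' : ∀ u ∈ Set.Icc i₀ i₁, ∀ v ∈ Set.Icc i₀ i₁, u < v → (v, u + 1) ∈ D :=
    fun u hu v hv huv => ⟨hv, by simp only; linarith [hu.1, hv.2], by simp only; linarith⟩
  have hΓI := hΓ.continuousOn (s := Set.Icc i₀ i₁)
  -- Near `x = y = z`, the path `(u, t, v)` leads from the face `x = y` to the face `y = z`.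
  have k₁ : c₂ - c₁ = Complex.log (1 - w) := by
    obtain ⟨u, hu, v, hv, huv, H⟩ := exists_corner hi hΓI hIinj (μ := 1 / w)
      (by simp [Complex.inv_im, hw, hw0])
    have mem : ∀ t ∈ Set.Icc u v, (u, t, v) ∈ S := fun t ht =>
      ⟨hu, ⟨ht.1, ht.2, by simp only; linarith [hu.1, hv.2]⟩, huv,
        by simp only; linarith [hu.1, hv.2, ht.2], by simp only; linarith [hu.1, hv.2, ht.1]⟩
    have := H (fun t => Φ (u, t, v)) (-w) (hΦ.comp (by fun_prop) mem) fun t ht => by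
      rw [hΦexp _ (mem t ht)]; field_simp; ring
    have e1 := hc₁ _ (memD u hu v hv huv)
    have e2 := hc₂ _ (memD u hu v hv huv)
    simp only [one_div_one_div] at this e1 e2
    rw [← this, e1, e2]; ring
  -- Near `y = z = x + 1`, the path `(v, u + 1, t + 1)` leads from `y = z` to `z = x + 1`.
  have k₂ : c₃ - c₂ = Complex.log (1 - 1 / (1 - w)) := by
    obtain ⟨u, hu, v, hv, huv, H⟩ := exists_corner hi hΓI hIinj (μ := 1 - w)
      (by simpa using hw)
    have mem : ∀ t ∈ Set.Icc u v, (v, u + 1, t + 1) ∈ S := fun t ht =>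
      ⟨hv, ⟨by simp only; linarith [hu.1, hv.2], by simp only; linarith [ht.1],
        by simp only; linarith [ht.2]⟩, by simp only; linarith [hu.1, hv.2, ht.1],
        by simp only; linarith, by simp only; linarith [hu.1, hv.2, ht.2]⟩
    have := H (fun t => Φ (v, u + 1, t + 1)) 1 (hΦ.comp (by fun_prop) mem) fun t ht => by
      rw [hΦexp _ (mem t ht)]; simp only [hper]; ring
    have e1 := hc₂ _ (memD' u hu v hv huv)
    have e2 := hc₃ _ (memD' u hu v hv huv)
    simp only at this e1 e2
    rw [← this, e1, e2]; ring
  -- Near `x = y, z = x + 1`, the path `(t, v, u + 1)` leads from `z = x + 1` to `x = y`; the chord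
  -- changes from `(u, v)` to `(v, u + 1)`, which produces the monodromy.
  have k₃ : L (i₁, i₀ + 1) - L (i₀, i₁) + c₁ - c₃ = Complex.log (1 / w) := by
    obtain ⟨u, hu, v, hv, huv, H⟩ := exists_corner hi hΓI hIinj (μ := w / (w - 1)) (by
      have : w / (w - 1) = 1 + (w - 1)⁻¹ := by field_simp; ring
      rw [this]
      simp [Complex.inv_im, hw, hw1'])
    have mem : ∀ t ∈ Set.Icc u v, (t, v, u + 1) ∈ S := fun t ht =>
      ⟨⟨hu.1.trans ht.1, ht.2.trans hv.2⟩, ⟨ht.2, by simp only; linarith [hu.1, hv.2],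
        by simp only; linarith [ht.1]⟩, by simp only; linarith [hu.1, hv.2, ht.2],
        by simp only; linarith [hu.1, hv.2, ht.1], by simp only; linarith⟩
    have := H (fun t => Φ (t, v, u + 1)) (w - 1) (hΦ.comp (by fun_prop) mem) fun t ht => by
      rw [hΦexp _ (mem t ht)]; simp only [hper]; field_simp; ring
    have e1 := hc₃ _ (memD u hu v hv huv)
    have e2 := hc₁ _ (memD' u hu v hv huv)
    have e3 : 1 - 1 / (w / (w - 1)) = 1 / w := by field_simp; ring
    rw [e3] at this
    simp only at this e1 e2
    rw [← this, e1, e2, ← hshift u hu v hv huv]; ring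
  rw [← k₁, ← k₂, ← k₃]
  ring

lemma log_sum_im_neg {w : ℂ} (hw : 0 < w.im) :
    (Complex.log (1 - w) + Complex.log (1 - 1 / (1 - w)) + Complex.log (1 / w)).im < 0 := by
  have hw0 : w ≠ 0 := by rintro rfl; simp at hw
  have hw1 : 1 - w ≠ 0 := fun h => hw.ne' (by
    have := congrArg Complex.im h; simpa using this)
  have h1 : Complex.arg (1 - w) < 0 := Complex.arg_neg_iff.2 (by simpa using hw)
  have h2 : Complex.arg (1 - 1 / (1 - w)) < 0 := Complex.arg_neg_iff.2 (by
    simp only [one_div, Complex.sub_im, Complex.one_im, Complex.inv_im, zero_sub, neg_neg]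
    have := Complex.normSq_pos.2 hw1
    have : 0 < w.im / Complex.normSq (1 - w) := by positivity
    linarith)
  have h3 : Complex.arg (1 / w) < 0 := Complex.arg_neg_iff.2 (by
    simp only [one_div, Complex.inv_im]
    have := Complex.normSq_pos.2 hw0
    have : 0 < w.im / Complex.normSq w := by positivity
    rw [neg_div]; linarith)
  simp only [Complex.add_im, Complex.log_im]
  linarith

lemma log_sum_im_pos {w : ℂ} (hw : w.im < 0) :
    0 < (Complex.log (1 - w) + Complex.log (1 - 1 / (1 - w)) + Complex.log (1 / w)).im := by
  have hw0 : w ≠ 0 := by rintro rfl; simp at hw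
  have hw1 : 1 - w ≠ 0 := fun h => hw.ne (by
    have := congrArg Complex.im h; simpa using this)
  have arg_pos : ∀ z : ℂ, 0 < z.im → 0 < z.arg := fun z hz =>
    lt_of_le_of_ne (Complex.arg_nonneg_iff.2 hz.le) fun h =>
      hz.ne' (Complex.arg_eq_zero_iff.1 h.symm).2
  have h1 := arg_pos (1 - w) (by simpa using hw)
  have h2 := arg_pos (1 - 1 / (1 - w)) (by
    simp only [one_div, Complex.sub_im, Complex.one_im, Complex.inv_im, zero_sub, neg_neg]
    have := Complex.normSq_pos.2 hw1
    have : 0 < -w.im / Complex.normSq (1 - w) := div_pos (by linarith) this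
    rw [neg_div] at this; linarith)
  have h3 := arg_pos (1 / w) (by
    simp only [one_div, Complex.inv_im]
    exact div_pos (by linarith) (Complex.normSq_pos.2 hw0))
  simp only [Complex.add_im, Complex.log_im]
  linarith

/-- Every parameter interval contains the first vertex of an inscribed triangle of shape `μ` or of
its mirror image. -/
lemma exists_triangle {Γ : ℝ → ℂ} (hΓ : Continuous Γ) (hper : ∀ t, Γ (t + 1) = Γ t)
    (hinj : ∀ s t, Γ s = Γ t → s ≤ t → t < s + 1 → s = t) {i₀ i₁ : ℝ} (hi : i₀ < i₁)
    (hi' : i₁ < i₀ + 1) {μ : ℂ} (hμ : 0 < μ.im) :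
    ∃ x ∈ Set.Icc i₀ i₁, ∃ y z, Γ y ≠ Γ x ∧ (Γ z = Γ x + μ * (Γ y - Γ x) ∨
      Γ z = Γ x + (starRingEnd ℂ) μ * (Γ y - Γ x)) := by
  by_contra! hcon
  obtain ⟨L, hL, hLexp⟩ := exists_continuousOn_log_of_convex (convex_strip i₀ i₁)
    (f := fun p => Γ p.2 - Γ p.1) (by fun_prop) (fun p hp h => hp.2.1.ne
      (hinj _ _ (sub_eq_zero.1 h).symm hp.2.1.le hp.2.2))
  have e1 := shift_eq_log_sum hΓ hper hinj hi hi' (w := μ) hμ.ne'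
    (fun x hx y z h => by_contra fun hne => (hcon x hx y z hne).1 h) hL hLexp
  have e2 := shift_eq_log_sum hΓ hper hinj hi hi' (w := (starRingEnd ℂ) μ) (by simpa using hμ.ne')
    (fun x hx y z h => by_contra fun hne => (hcon x hx y z hne).2 h) hL hLexp
  have i1 := log_sum_im_neg hμ
  have i2 := log_sum_im_pos (w := (starRingEnd ℂ) μ) (by simpa using hμ)
  rw [← e1] at i1
  rw [← e2] at i2
  linarith

/-! ### Similar triangles in the Euclidean plane -/

/-- Multiplication by `μ` or by its conjugate both produce the side ratios `|μ|` and `|μ - 1|`. -/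
lemma dist_ratios {a b c p q s μ : ℂ} (hab : b ≠ a) (hμ : c - a = μ * (b - a))
    (hs : s - p = μ * (q - p) ∨ s - p = (starRingEnd ℂ) μ * (q - p)) :
    dist p q = dist p q / dist a b * dist a b ∧ dist p s = dist p q / dist a b * dist a c ∧
      dist q s = dist p q / dist a b * dist b c := by
  obtain ⟨ν, hs, hν, hν1⟩ : ∃ ν : ℂ, s - p = ν * (q - p) ∧ ‖ν‖ = ‖μ‖ ∧ ‖ν - 1‖ = ‖μ - 1‖ := by
    rcases hs with h | h
    · exact ⟨_, h, rfl, rfl⟩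
    · refine ⟨_, h, Complex.norm_conj _, ?_⟩
      rw [← Complex.norm_conj, map_sub, Complex.conj_conj, map_one]
  have h0 : ‖b - a‖ ≠ 0 := norm_ne_zero_iff.2 (sub_ne_zero.2 hab)
  have e1 : c - b = (μ - 1) * (b - a) := by linear_combination hμ
  have e2 : s - q = (ν - 1) * (q - p) := by linear_combination hs
  simp only [dist_eq_norm']
  rw [e1, e2, hμ, hs]
  simp only [norm_mul, hν, hν1]
  refine ⟨?_, ?_, ?_⟩ <;> field_simp

theorem nielsen_infinitely_many_inscribed_similar_triangles
    (γ : ℝ → EuclideanSpace ℝ (Fin 2))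
    (hγcont : ContinuousOn γ (Set.Icc 0 1)) (hγloop : γ 0 = γ 1)
    (hγinj : Set.InjOn γ (Set.Ico 0 1))
    (a b c : EuclideanSpace ℝ (Fin 2)) (habc : AffineIndependent ℝ ![a, b, c]) :
    {T : EuclideanSpace ℝ (Fin 2) × EuclideanSpace ℝ (Fin 2) × EuclideanSpace ℝ (Fin 2) |
      T.1 ∈ γ '' Set.Icc (0:ℝ) 1 ∧ T.2.1 ∈ γ '' Set.Icc (0:ℝ) 1 ∧
      T.2.2 ∈ γ '' Set.Icc (0:ℝ) 1 ∧
      T.1 ≠ T.2.1 ∧ T.1 ≠ T.2.2 ∧ T.2.1 ≠ T.2.2 ∧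
      ∃ k : ℝ, 0 < k ∧ dist T.1 T.2.1 = k * dist a b ∧ dist T.1 T.2.2 = k * dist a c ∧
        dist T.2.1 T.2.2 = k * dist b c}.Infinite := by
  intro hfin
  let e : EuclideanSpace ℝ (Fin 2) ≃ₗᵢ[ℝ] ℂ := Complex.orthonormalBasisOneI.repr.symm
  have hba : b ≠ a := fun h => by
    have := habc.injective (a₁ := 0) (a₂ := 1) (by simp [h])
    simp at this
  have heba : e b - e a ≠ 0 := sub_ne_zero.2 fun h => hba (e.injective h)
  have hμ0 : ((e c - e a) / (e b - e a)).im ≠ 0 := by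
    intro him
    rw [affineIndependent_iff_not_collinear_set] at habc
    apply habc
    rw [collinear_iff_of_mem (p₀ := a) (by simp)]
    refine ⟨b - a, ?_⟩
    have hc : c = ((e c - e a) / (e b - e a)).re • (b - a) + a := by
      apply e.injective
      have h1 : (e c - e a) / (e b - e a) = (((e c - e a) / (e b - e a)).re : ℂ) :=
        Complex.ext rfl (by simpa using him)
      rw [map_add, map_smul, map_sub, Complex.real_smul, ← h1]
      field_simp
      ring
    rintro p (rfl | rfl | rfl)
    · exact ⟨0, by simp⟩
    · exact ⟨1, by simp⟩
    · exact ⟨_, hc⟩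
  obtain ⟨μ, hμ, hμabc⟩ : ∃ μ : ℂ, 0 < μ.im ∧ (e c - e a = μ * (e b - e a) ∨
      e c - e a = (starRingEnd ℂ) μ * (e b - e a)) := by
    have h1 : e c - e a = (e c - e a) / (e b - e a) * (e b - e a) := by field_simp
    rcases hμ0.lt_or_gt with h | h
    · exact ⟨(starRingEnd ℂ) ((e c - e a) / (e b - e a)), by rw [Complex.conj_im]; linarith,
        Or.inr (by rwa [Complex.conj_conj])⟩
    · exact ⟨_, h, Or.inl h1⟩
  set Γ : ℝ → ℂ := fun t => e (γ (Int.fract t)) with hΓdef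
  have hΓ : Continuous Γ := e.continuous.comp (ContinuousOn.comp_fract'' hγcont hγloop)
  have hper : ∀ t, Γ (t + 1) = Γ t := fun t => by simp [hΓdef]
  have hfmem : ∀ t : ℝ, Int.fract t ∈ Set.Ico (0 : ℝ) 1 := fun t =>
    ⟨Int.fract_nonneg t, Int.fract_lt_one t⟩
  have hinj : ∀ s t, Γ s = Γ t → s ≤ t → t < s + 1 → s = t := by
    intro s t h hst hts
    obtain ⟨n, hn⟩ := Int.fract_eq_fract.1 (hγinj (hfmem t) (hfmem s) (e.injective h.symm))
    have h1 : (-1 : ℝ) < n := by rw [← hn]; linarith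
    have h2 : (n : ℝ) < 1 := by rw [← hn]; linarith
    have h3 : n = 0 := by
      have h1' : -1 < n := by exact_mod_cast h1
      have h2' : n < 1 := by exact_mod_cast h2
      omega
    rw [h3, Int.cast_zero] at hn
    linarith
  set F := {T : EuclideanSpace ℝ (Fin 2) × EuclideanSpace ℝ (Fin 2) × EuclideanSpace ℝ (Fin 2) |
    _} with hF
  -- Finitely many triangles have finitely many first vertices, which leaves a parameter interval
  -- `[x₀, x₀ + ε / 2]` free of them.
  have hB : {t ∈ Set.Ioo (0 : ℝ) 1 | γ t ∈ Prod.fst '' F}.Finite :=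
    Set.Finite.of_finite_image (f := γ)
      ((hfin.image Prod.fst).subset (by rintro _ ⟨t, ht, rfl⟩; exact ht.2))
      (hγinj.mono fun t ht => Set.Ioo_subset_Ico_self ht.1)
  obtain ⟨x₀, hx₀, hx₀B⟩ := ((Set.Ioo_infinite (zero_lt_one' ℝ)).sdiff hB).nonempty
  obtain ⟨ε, hε, hball⟩ := Metric.isOpen_iff.1 (isOpen_Ioo.sdiff hB.isClosed) x₀ ⟨hx₀, hx₀B⟩
  have hI : ∀ x ∈ Set.Icc x₀ (x₀ + ε / 2),
      x ∈ Set.Ioo (0 : ℝ) 1 \ {t ∈ Set.Ioo (0 : ℝ) 1 | γ t ∈ Prod.fst '' F} := fun x hx =>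
    hball (by rw [Metric.mem_ball, Real.dist_eq, abs_lt]; constructor <;> linarith [hx.1, hx.2])
  obtain ⟨x, hx, y, z, hyx, hz⟩ := exists_triangle hΓ hper hinj (i₀ := x₀) (i₁ := x₀ + ε / 2)
    (by linarith)
    (by linarith [(hI (x₀ + ε / 2) ⟨by linarith, le_rfl⟩).1.2, hx₀.1]) hμ
  obtain ⟨hx01, hxB⟩ := hI x hx
  apply hxB
  refine ⟨hx01, (γ (Int.fract x), γ (Int.fract y), γ (Int.fract z)), ?_, ?_⟩
  swap
  · simp only [Int.fract_eq_self.2 ⟨hx01.1.le, hx01.2⟩]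
  have hmem : ∀ t : ℝ, γ (Int.fract t) ∈ γ '' Set.Icc (0 : ℝ) 1 := fun t =>
    ⟨_, Set.Ico_subset_Icc_self (hfmem t), rfl⟩
  have hyx' : Γ y - Γ x ≠ 0 := sub_ne_zero.2 hyx
  obtain ⟨ν, hν, hzν⟩ : ∃ ν : ℂ, ν.im ≠ 0 ∧ Γ z = Γ x + ν * (Γ y - Γ x) := by
    rcases hz with h | h
    · exact ⟨_, hμ.ne', h⟩
    · exact ⟨_, by simpa using hμ.ne', h⟩
  obtain ⟨d1, d2, d3⟩ : dist (Γ x) (Γ y) = dist (Γ x) (Γ y) / dist (e a) (e b) * dist (e a) (e b) ∧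
      dist (Γ x) (Γ z) = dist (Γ x) (Γ y) / dist (e a) (e b) * dist (e a) (e c) ∧
      dist (Γ y) (Γ z) = dist (Γ x) (Γ y) / dist (e a) (e b) * dist (e b) (e c) := by
    have hz' : Γ z - Γ x = μ * (Γ y - Γ x) ∨ Γ z - Γ x = (starRingEnd ℂ) μ * (Γ y - Γ x) :=
      hz.imp (fun h => by rw [h]; ring) (fun h => by rw [h]; ring)
    rcases hμabc with h | h
    · exact dist_ratios (fun h => hba (e.injective h)) h hz'
    · exact dist_ratios (fun h => hba (e.injective h)) h (by rw [Complex.conj_conj]; exact hz'.symm)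
  refine ⟨hmem x, hmem y, hmem z, ?_, ?_, ?_, dist (Γ x) (Γ y) / dist (e a) (e b), ?_, ?_, ?_, ?_⟩
  · exact fun h => hyx (congrArg e h).symm
  · intro h
    have h' : Γ x = Γ z := congrArg e h
    have : ν * (Γ y - Γ x) = 0 := by linear_combination -h' - hzν
    rcases mul_eq_zero.1 this with h | h
    · exact hν (by simp [h])
    · exact hyx' h
  · intro h
    have h' : Γ y = Γ z := congrArg e h
    have : (ν - 1) * (Γ y - Γ x) = 0 := by linear_combination -h' - hzν
    rcases mul_eq_zero.1 this with h | h
    · exact hν (by rw [sub_eq_zero.1 h]; simp)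
    · exact hyx' h
  · exact div_pos (dist_pos.2 hyx.symm) (dist_pos.2 fun h => hba (e.injective h).symm)
  · simpa only [hΓdef, e.dist_map] using d1
  · simpa only [hΓdef, e.dist_map] using d2
  · simpa only [hΓdef, e.dist_map] using d3
end

section
/- (Meyerson) Let γ : [0,1] → ℝ² be a Jordan curve with image J. Then for every point p ∈ J except at most two, there is an inscribed equilateral triangle with one vertex at p; that is, the set of points p ∈ J for which there do not exist q, s ∈ J with p, q, s pairwise distinct and dist(p,q) = dist(q,s) = dist(s,p) has at most two elements. -/
/-!
Identify `ℝ²` with `ℂ` and let `ζ` be a primitive cube root of unity. The triangle `p, q, s` is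
equilateral, with orientation depending on `ζ`, iff `p + ζ q + ζ² s = 0`. Suppose that three points
`x, y, z` of `J` are not vertices of inscribed equilateral triangles, and let `a, b, d` be the arcs
of `J` from `x` to `y`, from `y` to `z` and from `z` to `x`.

The function `(s, t, r) ↦ a s + ζ b t + ζ² d r` does not vanish on the boundary of the cube, as on
each face one of the three vertices is `x`, `y` or `z`. Hence it has a continuous logarithm on the
three faces meeting at `(0, 0, 0)`, and its total increment around the hexagon bounding these
faces is zero. On three of the six edges the increment is that of `d - y`, `b - x`, `a - z`, which
does not depend on `ζ`; on the other three it is the increment along an arc, say `a`, as seen from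
the apex of an equilateral triangle erected on the chord `x y` (`sum_apexVar`). Therefore the sum
of the three increments seen from the apices is the same for `ζ` and for `ζ²`, that is, for the
apices on either side of the chords.

On the other hand, as `a` meets its rotation by `60°` about `x` only in `x`, one can compare the
increments seen from the two apices of the same chord: they differ by a nonzero constant depending
only on `ζ` (`apexVar_sub`). Summing over the three arcs gives a contradiction.
-/

/-! ### Continuous logarithms -/

/-- The increment from `u` to `v` of a continuous logarithm of `f : ℝ → ℂ`; its imaginary part is
the angle swept by `f`. The value is `0` if `f` has no continuous logarithm. -/
noncomputable def logVar (f : ℝ → ℂ) (u v : ℝ) : ℂ :=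
  open Classical in
  if h : ∃ L : ℝ → ℂ, Continuous L ∧ ∀ t, Complex.exp (L t) = f t then
    h.choose v - h.choose u else 0

/-- Two continuous functions with proportional exponentials differ by a constant. -/
lemma sub_eq_sub_of_exp {L M : ℝ → ℂ} (hL : Continuous L) (hM : Continuous M) {c : ℂ}
    (h : ∀ t, Complex.exp (M t) = c * Complex.exp (L t)) (u v : ℝ) :
    M v - M u = L v - L u := by
  have hc : c ≠ 0 := by
    rintro rfl
    simpa using h 0
  obtain ⟨F, -, hF⟩ := Complex.isCoveringMapOn_exp.existsUnique_continuousMap_lifts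
    (⟨fun t => c * Complex.exp (L t), by fun_prop⟩ : C(ℝ, ℂ)) (a₀ := u) (e₀ := M u)
    (by simp [h]) (by simp [hc])
  have h1 := hF ⟨M, hM⟩ ⟨rfl, by ext t; simp [h]⟩
  have h2 := hF ⟨fun t => L t + (M u - L u), by fun_prop⟩ ⟨by simp, by
    ext t
    simp only [ContinuousMap.coe_mk, Function.comp_apply]
    rw [Complex.exp_add, Complex.exp_sub, h u]
    field_simp [Complex.exp_ne_zero]⟩
  have h3 := congrArg (fun f : C(ℝ, ℂ) => f v) (h1.trans h2.symm)
  simp only [ContinuousMap.coe_mk] at h3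
  rw [h3]
  ring

lemma logVar_eq {f L : ℝ → ℂ} (hL : Continuous L) {c : ℂ} (hc : c ≠ 0)
    (h : ∀ t, Complex.exp (L t) = c * f t) (u v : ℝ) : logVar f u v = L v - L u := by
  have hex : ∃ L : ℝ → ℂ, Continuous L ∧ ∀ t, Complex.exp (L t) = f t :=
    ⟨fun t => L t - Complex.log c, by fun_prop, fun t => by
      rw [Complex.exp_sub, Complex.exp_log hc, h]
      field_simp⟩
  rw [logVar, dif_pos hex]
  refine (sub_eq_sub_of_exp hex.choose_spec.1 hL (c := c) (fun t => ?_) u v).symm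
  rw [hex.choose_spec.2, h]

lemma exists_log_plane {F : ℝ × ℝ → ℂ} (hF : Continuous F) (h0 : ∀ p, F p ≠ 0) :
    ∃ L : ℝ × ℝ → ℂ, Continuous L ∧ ∀ p, Complex.exp (L p) = F p := by
  obtain ⟨L, ⟨-, hL⟩, -⟩ := Complex.isCoveringMapOn_exp.existsUnique_continuousMap_lifts
    (⟨F, hF⟩ : C(ℝ × ℝ, ℂ)) (a₀ := (0, 0)) (e₀ := Complex.log (F (0, 0)))
    (by simp [Complex.exp_log (h0 _)]) (by simpa using h0)
  exact ⟨L, L.continuous, fun p => congrFun hL p⟩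

/-! ### The hexagon relation -/

/-- The point `x` is not a vertex of a nondegenerate equilateral triangle with the other vertices
in `J`; both orientations of the triangle are covered, by exchanging `q` and `s`. -/
def Isolated (ζ : ℂ) (J : Set ℂ) (x : ℂ) : Prop :=
  ∀ q ∈ J, ∀ s ∈ J, x + ζ * q + ζ ^ 2 * s = 0 → q = x ∧ s = x

/-- The logarithmic increment along `a`, regarded as an arc from `x` to `y`, as seen from the apex
`-(ζ y + ζ² x)` of one of the two equilateral triangles with base `x y`. -/
noncomputable def apexVar (ζ : ℂ) (a : ℝ → ℂ) (x y : ℂ) : ℂ :=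
  logVar (fun s => a s + ζ * y + ζ ^ 2 * x) 0 1

/-- Going around the boundary of the three faces at `(0, 0, 0)` of the cube parametrizing the
triangles with one vertex on each arc. -/
lemma sum_apexVar {ζ : ℂ} (hζ : 1 + ζ + ζ ^ 2 = 0) {J : Set ℂ} {x y z : ℂ} {a b d : ℝ → ℂ}
    (ha : Continuous a) (hb : Continuous b) (hd : Continuous d)
    (haJ : ∀ t, a t ∈ J) (hbJ : ∀ t, b t ∈ J) (hdJ : ∀ t, d t ∈ J)
    (ha0 : a 0 = x) (ha1 : a 1 = y) (hb0 : b 0 = y) (hb1 : b 1 = z)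
    (hd0 : d 0 = z) (hd1 : d 1 = x)
    (haz : ∀ t, a t ≠ z) (hbx : ∀ t, b t ≠ x) (hdy : ∀ t, d t ≠ y)
    (hx : Isolated ζ J x) (hy : Isolated ζ J y) (hz : Isolated ζ J z) :
    apexVar ζ a x y + apexVar ζ b y z + apexVar ζ d z x =
      logVar (fun s => a s - z) 0 1 + logVar (fun s => b s - x) 0 1 +
        logVar (fun s => d s - y) 0 1 := by
  have hζ3 : ζ ^ 3 = 1 := by linear_combination (ζ - 1) * hζ
  have hζ0 : ζ ≠ 0 := by
    rintro rfl
    simp at hζ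
  obtain ⟨L, hL, eL⟩ := exists_log_plane
    (F := fun p => x + ζ * b p.1 + ζ ^ 2 * d p.2) (by fun_prop)
    (fun p h => hbx _ (hx _ (hbJ _) _ (hdJ _) h).1)
  obtain ⟨M, hM, eM⟩ := exists_log_plane
    (F := fun p => a p.1 + ζ * y + ζ ^ 2 * d p.2) (by fun_prop)
    (fun p h => hdy _ (hy _ (hdJ _) _ (haJ _)
      (by linear_combination ζ ^ 2 * h + (-y - ζ * d p.2) * hζ3)).1)
  obtain ⟨N, hN, eN⟩ := exists_log_plane
    (F := fun p => a p.1 + ζ * b p.2 + ζ ^ 2 * z) (by fun_prop)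
    (fun p h => haz _ (hz _ (haJ _) _ (hbJ _)
      (by linear_combination ζ * h + (-z) * hζ3)).1)
  have h1 : N (0, 1) - N (0, 0) = L (1, 0) - L (0, 0) :=
    sub_eq_sub_of_exp (L := fun t => L (t, 0)) (M := fun t => N (0, t)) (c := 1)
      (by fun_prop) (by fun_prop) (fun t => by simp [eL, eN, ha0, hd0]) 0 1
  have h2 : M (0, 1) - M (0, 0) = L (0, 1) - L (0, 0) :=
    sub_eq_sub_of_exp (L := fun t => L (0, t)) (M := fun t => M (0, t)) (c := 1)
      (by fun_prop) (by fun_prop) (fun t => by simp [eL, eM, ha0, hb0]) 0 1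
  have h3 : M (1, 0) - M (0, 0) = N (1, 0) - N (0, 0) :=
    sub_eq_sub_of_exp (L := fun t => N (t, 0)) (M := fun t => M (t, 0)) (c := 1)
      (by fun_prop) (by fun_prop) (fun t => by simp [eN, eM, hd0, hb0]) 0 1
  have k1 : apexVar ζ a x y = M (1, 1) - M (0, 1) :=
    logVar_eq (L := fun t => M (t, 1)) (c := 1) (by fun_prop) one_ne_zero
      (fun t => by simp [eM, hd1]) 0 1
  have k2 : apexVar ζ b y z = N (1, 1) - N (1, 0) :=
    logVar_eq (L := fun t => N (1, t)) (c := ζ) (by fun_prop) hζ0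
      (fun t => by simp only [eN, ha1]; linear_combination (-y) * hζ3) 0 1
  have k3 : apexVar ζ d z x = L (1, 1) - L (1, 0) :=
    logVar_eq (L := fun t => L (1, t)) (c := ζ ^ 2) (by fun_prop) (pow_ne_zero _ hζ0)
      (fun t => by simp only [eL, hb1]; linear_combination (-x - ζ * z) * hζ3) 0 1
  have l1 : logVar (fun s => a s - z) 0 1 = N (1, 1) - N (0, 1) :=
    logVar_eq (L := fun t => N (t, 1)) (c := 1) (by fun_prop) one_ne_zero
      (fun t => by simp only [eN, hb1]; linear_combination z * hζ) 0 1
  have l2 : logVar (fun s => b s - x) 0 1 = L (1, 1) - L (0, 1) :=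
    logVar_eq (L := fun t => L (t, 1)) (c := ζ) (by fun_prop) hζ0
      (fun t => by simp only [eL, hd1]; linear_combination x * hζ) 0 1
  have l3 : logVar (fun s => d s - y) 0 1 = M (1, 1) - M (1, 0) :=
    logVar_eq (L := fun t => M (1, t)) (c := ζ ^ 2) (by fun_prop) (pow_ne_zero _ hζ0)
      (fun t => by simp only [eM, ha1]; linear_combination y * hζ) 0 1
  rw [k1, k2, k3, l1, l2, l3]
  linear_combination h1 + h3 - h2

/-! ### The two apices over a chord -/

/-- The closed unit disc minus `1`, reflected as `w ↦ 1 - w`, lies in the right half plane, so that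
the principal logarithm computes increments there. -/
lemma logVar_one_sub {w : ℝ → ℂ} (hw : Continuous w) (h1 : ∀ t, ‖w t‖ ≤ 1) (h : ∀ t, w t ≠ 1)
    {c : ℂ} (hc : c ≠ 0) (u v : ℝ) :
    logVar (fun t => c * (1 - w t)) u v = Complex.log (1 - w v) - Complex.log (1 - w u) := by
  have hs : ∀ t, 1 - w t ∈ Complex.slitPlane := by
    intro t
    left
    have h2 : (w t).re ≤ 1 := (Complex.re_le_norm _).trans (h1 t)
    rcases h2.lt_or_eq with h3 | h3
    · simpa using h3
    · exfalso
      apply h t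
      have h4 := h1 t
      have h5 : ‖w t‖ ^ 2 ≤ 1 := by nlinarith [norm_nonneg (w t)]
      rw [Complex.sq_norm, Complex.normSq_apply, h3] at h5
      apply Complex.ext
      · simp [h3]
      · simp only [Complex.one_im]
        nlinarith
  refine logVar_eq (L := fun t => Complex.log (1 - w t)) (c := c⁻¹) ?_ (inv_ne_zero hc) ?_ u v
  · exact continuous_iff_continuousAt.2 fun t => ContinuousAt.clog (by fun_prop) (hs t)
  · intro t
    rw [Complex.exp_log (Complex.slitPlane_ne_zero (hs t))]
    field_simp

/-- The increments of an arc as seen from the two apices of its chord are compared by a continuous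
logarithm of `(s, t) ↦ (a t - x) - ω (a s - x)`, where `ω = 1 + ζ` is the rotation by `±60°`. This
function vanishes only at the corner `(0, 0)` of the square. A path around this corner through
`(m, m)`, where `a m` is a point of the arc farthest from `x`, has an explicit increment. -/
lemma apexVar_sub {ζ : ℂ} (hζ : 1 + ζ + ζ ^ 2 = 0) {J : Set ℂ} {x y : ℂ} {a : ℝ → ℂ}
    (ha : Continuous a) (haJ : ∀ t, a t ∈ J) (ha0 : ∀ t ≤ 0, a t = x) (ha1 : ∀ t ≥ 1, a t = y)
    (hax : ∀ t, a t = x → t ≤ 0) (hx : Isolated ζ J x) :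
    apexVar (ζ ^ 2) a x y - apexVar ζ a x y = Complex.log (1 + ζ) - Complex.log (-ζ) := by
  have hζ3 : ζ ^ 3 = 1 := by linear_combination (ζ - 1) * hζ
  have hζ0 : ζ ≠ 0 := by
    rintro rfl
    simp at hζ
  have hω : 1 + ζ = -ζ ^ 2 := by linear_combination hζ
  have hω0 : 1 + ζ ≠ 0 := by rw [hω]; simpa using hζ0
  have hζn : ‖ζ‖ = 1 := Complex.norm_eq_one_of_pow_eq_one hζ3 (by norm_num)
  have hωn : ‖1 + ζ‖ = 1 := by rw [hω]; simp [hζn]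
  -- a farthest point from `x` on the arc
  obtain ⟨m, hm0, hm1, hmax⟩ : ∃ m, 0 < m ∧ m ≤ 1 ∧ ∀ t, ‖a t - x‖ ≤ ‖a m - x‖ := by
    obtain ⟨m, hm, hmax⟩ := isCompact_Icc.exists_isMaxOn
      (Set.nonempty_Icc.2 (zero_le_one (α := ℝ)))
      (f := fun t => ‖a t - x‖) (by fun_prop)
    have hall : ∀ t, ‖a t - x‖ ≤ ‖a m - x‖ := by
      intro t
      rcases le_total t 0 with h | h
      · simp [ha0 t h]
      · rcases le_total 1 t with h' | h'
        · rw [ha1 t h', ← ha1 1 le_rfl]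
          exact hmax (Set.right_mem_Icc.2 zero_le_one)
        · exact hmax ⟨h, h'⟩
    refine ⟨m, ?_, hm.2, hall⟩
    by_contra hneg
    have h1 := hall 1
    rw [ha0 m (not_lt.1 hneg), sub_self, norm_zero, norm_le_zero_iff, sub_eq_zero] at h1
    exact absurd (hax 1 h1) (by norm_num)
  have hMx : a m - x ≠ 0 := fun h => absurd (hax m (sub_eq_zero.1 h)) (not_le.2 hm0)
  have key : ∀ s t, (0 < s ∨ 0 < t) → (a t - x) - (1 + ζ) * (a s - x) ≠ 0 := by
    intro s t hst h
    obtain ⟨h1, h2⟩ := hx _ (haJ s) _ (haJ t)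
      (by linear_combination ζ ^ 2 * h + (a s - x) * hζ3 + a s * hζ)
    rcases hst with h' | h'
    · exact absurd (hax s h1) (not_le.2 h')
    · exact absurd (hax t h2) (not_le.2 h')
  have hmx : ∀ t, 0 < max t m := fun t => lt_max_of_lt_right hm0
  obtain ⟨L, hL, eL⟩ := exists_log_plane
    (F := fun p => (a p.2 - x) - (1 + ζ) * (a (max p.1 m) - x)) (by fun_prop)
    (fun p => key _ _ (Or.inl (hmx _)))
  obtain ⟨M, hM, eM⟩ := exists_log_plane
    (F := fun p => (a (max p.2 m) - x) - (1 + ζ) * (a p.1 - x)) (by fun_prop)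
    (fun p => key _ _ (Or.inr (hmx _)))
  have k1 : apexVar (ζ ^ 2) a x y = L (1, 1) - L (1, 0) :=
    logVar_eq (L := fun t => L (1, t)) (c := 1) (by fun_prop) one_ne_zero
      (fun t => by
        simp only [eL, max_eq_left hm1, ha1 1 le_rfl]
        linear_combination (-y) * hζ - ζ * x * hζ3) 0 1
  have k2 : apexVar ζ a x y = M (1, 1) - M (0, 1) :=
    logVar_eq (L := fun t => M (t, 1)) (c := -(1 + ζ)) (by fun_prop) (neg_ne_zero.2 hω0)
      (fun t => by
        simp only [eM, max_eq_left hm1, ha1 1 le_rfl]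
        linear_combination y * hζ + ζ * x * hζ) 0 1
  have h1 : L (1, 1) - L (m, m) = M (1, 1) - M (m, m) := by
    have := sub_eq_sub_of_exp (M := fun t => L (max t m, max t m))
      (L := fun t => M (max t m, max t m)) (c := 1)
      (by fun_prop) (by fun_prop) (fun t => by simp [eL, eM]) m 1
    simpa [hm1] using this
  have h2 : L (1, 0) - L (m, 0) = M (0, 1) - M (0, m) :=
    sub_eq_sub_of_exp (M := fun t => L (t, 0))
      (L := fun t => M (0, t)) (c := -(1 + ζ))
      (by fun_prop) (by fun_prop) (fun t => by simp only [eL, eM, ha0 0 le_rfl]; ring) m 1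
  have h3 : L (m, m) - L (m, 0) = Complex.log (1 + ζ) := by
    have e1 := logVar_one_sub (w := fun t => (a t - x) / ((1 + ζ) * (a m - x)))
      (c := -(1 + ζ) * (a m - x)) (by fun_prop)
      (fun t => by
        rw [norm_div, norm_mul, hωn, one_mul]
        exact div_le_one_of_le₀ (hmax t) (norm_nonneg _))
      (fun t h => key m t (Or.inl hm0) (by
        rw [div_eq_one_iff_eq (mul_ne_zero hω0 hMx)] at h
        rw [h, sub_self]))
      (mul_ne_zero (neg_ne_zero.2 hω0) hMx) 0 m
    have e2 := logVar_eq
      (f := fun t => -(1 + ζ) * (a m - x) * (1 - (a t - x) / ((1 + ζ) * (a m - x))))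
      (L := fun t => L (m, t)) (c := 1) (by fun_prop) one_ne_zero
      (fun t => by simp only [eL, max_self]; field_simp; ring) 0 m
    rw [← e2, e1]
    have e3 : (a m - x) / ((1 + ζ) * (a m - x)) = -ζ := by
      field_simp
      linear_combination hζ
    simp [e3, ha0]
  have h4 : M (m, m) - M (0, m) = Complex.log (-ζ) := by
    have e1 := logVar_one_sub (w := fun t => (1 + ζ) * (a t - x) / (a m - x))
      (c := a m - x) (by fun_prop)
      (fun t => by
        rw [norm_div, norm_mul, hωn, one_mul]
        exact div_le_one_of_le₀ (hmax t) (norm_nonneg _))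
      (fun t h => key t m (Or.inr hm0) (by
        rw [div_eq_one_iff_eq hMx] at h
        rw [h, sub_self])) hMx 0 m
    have e2 := logVar_eq
      (f := fun t => (a m - x) * (1 - (1 + ζ) * (a t - x) / (a m - x)))
      (L := fun t => M (t, m)) (c := 1) (by fun_prop) one_ne_zero
      (fun t => by simp only [eM, max_self]; field_simp) 0 m
    rw [← e2, e1, mul_div_assoc, div_self hMx]
    simp [ha0]
  rw [k1, k2, ← h3, ← h4]
  linear_combination h1 - h2

/-! ### Three exceptional points -/

/-- The arc of the closed curve `g` over `[P, Q]`, parametrized by `[0, 1]` and extended by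
constants to `ℝ`. -/
noncomputable def arc (g : ℝ → ℂ) (P Q t : ℝ) : ℂ := g (P + max 0 (min 1 t) * (Q - P))

/-- The sum of the three apex increments is the same for `ζ` and `ζ²`, although each of them changes
by the same nonzero constant. The third arc ends at the parameter `u + 1`,
which closes the curve. -/
lemma not_isolated_three {ζ : ℂ} (hζ : 1 + ζ + ζ ^ 2 = 0) {g : ℝ → ℂ} (hg : Continuous g)
    (hper : ∀ u, g (u + 1) = g u) (hinj : ∀ u v, g u = g v → u < v + 1 → v < u + 1 → u = v)
    {u v w : ℝ} (huv : u < v) (hvw : v < w) (hwu : w < u + 1)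
    (hu : Isolated ζ (Set.range g) (g u)) (hv : Isolated ζ (Set.range g) (g v))
    (hw : Isolated ζ (Set.range g) (g w)) : False := by
  have c0 : ∀ P Q t, t ≤ 0 → arc g P Q t = g P := by
    intro P Q t ht
    rw [arc, max_eq_left ((min_le_right _ _).trans ht)]
    simp
  have c1 : ∀ P Q t, t ≥ 1 → arc g P Q t = g Q := by
    intro P Q t ht
    rw [arc, min_eq_left ht]
    simp
  have cc : ∀ P Q, Continuous (arc g P Q) := by
    intro P Q
    unfold arc
    fun_prop
  have cJ : ∀ P Q t, arc g P Q t ∈ Set.range g := fun P Q t => Set.mem_range_self _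
  have hcl : ∀ t : ℝ, 0 ≤ max 0 (min 1 t) ∧ max 0 (min 1 t) ≤ 1 := fun t =>
    ⟨le_max_left _ _, max_le zero_le_one (min_le_left _ _)⟩
  have cx : ∀ P Q, P < Q → Q < P + 1 → ∀ t, arc g P Q t = g P → t ≤ 0 := by
    intro P Q h1 h2 t h
    obtain ⟨h3, h4⟩ := hcl t
    have h5 := hinj _ _ h (by nlinarith) (by nlinarith)
    have h6 : max 0 (min 1 t) * (Q - P) = 0 := by linarith
    rcases mul_eq_zero.1 h6 with h7 | h7
    · by_contra! h8
      have : 0 < min 1 t := lt_min one_pos h8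
      exact absurd h7 (lt_max_of_lt_right this).ne'
    · linarith
  have cn : ∀ P Q R, P < Q → Q < R → R < P + 1 → ∀ t, arc g P Q t ≠ g R := by
    intro P Q R h1 h2 h3 t h
    obtain ⟨h4, h5⟩ := hcl t
    have h6 := hinj _ _ h (by nlinarith) (by nlinarith)
    nlinarith
  have hζ2 : 1 + ζ ^ 2 + (ζ ^ 2) ^ 2 = 0 := by linear_combination (ζ ^ 2 - ζ + 1) * hζ
  have hζ3 : ζ ^ 3 = 1 := by linear_combination (ζ - 1) * hζ
  have sw : ∀ p, Isolated ζ (Set.range g) p → Isolated (ζ ^ 2) (Set.range g) p := by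
    intro p hp q hq s hs h
    exact (hp s hs q hq (by linear_combination h - ζ * s * hζ3)).symm
  have sum : ∀ ξ : ℂ, 1 + ξ + ξ ^ 2 = 0 → Isolated ξ (Set.range g) (g u) →
      Isolated ξ (Set.range g) (g v) → Isolated ξ (Set.range g) (g w) → _ :=
    fun ξ hξ iu iv iw => sum_apexVar hξ (cc u v) (cc v w) (cc w (u + 1)) (cJ u v) (cJ v w)
      (cJ w (u + 1)) (c0 _ _ _ le_rfl) (c1 _ _ _ le_rfl) (c0 _ _ _ le_rfl) (c1 _ _ _ le_rfl)
      (c0 _ _ _ le_rfl) ((c1 _ _ _ le_rfl).trans (hper u))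
      (cn _ _ _ huv hvw hwu)
      (fun t h => cn v w (u + 1) hvw hwu (by linarith) t (h.trans (hper u).symm))
      (fun t h => cn w (u + 1) (v + 1) hwu (by linarith) (by linarith) t (h.trans (hper v).symm))
      iu iv iw
  have s1 := sum ζ hζ hu hv hw
  have s2 := sum (ζ ^ 2) hζ2 (sw _ hu) (sw _ hv) (sw _ hw)
  have d1 := apexVar_sub hζ (cc u v) (cJ u v) (c0 u v) (c1 u v) (cx u v huv (by linarith)) hu
  have d2 := apexVar_sub hζ (cc v w) (cJ v w) (c0 v w) (c1 v w) (cx v w hvw (by linarith)) hv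
  have d3 := apexVar_sub hζ (cc w (u + 1)) (cJ w (u + 1)) (c0 w (u + 1))
    (fun t ht => (c1 w (u + 1) t ht).trans (hper u)) (cx w (u + 1) hwu (by linarith)) hw
  have hlog : Complex.log (1 + ζ) = Complex.log (-ζ) := by
    linear_combination (s2 - s1 - d1 - d2 - d3) / 3
  have h1 : 1 + ζ ≠ 0 := by
    intro h
    have h' : ζ = -1 := by linear_combination h
    subst h'
    norm_num at hζ
  have h2 : -ζ ≠ 0 := by
    intro h
    rw [neg_eq_zero] at h
    subst h
    norm_num at hζ
  have h3 : 1 + ζ = -ζ := by rw [← Complex.exp_log h1, hlog, Complex.exp_log h2]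
  have h4 : ζ = -1 / 2 := by linear_combination h3 / 2
  rw [h4] at hζ
  norm_num at hζ

/-! ### Translation to the Euclidean plane -/

lemma exists_cube_root : ∃ ζ : ℂ, 1 + ζ + ζ ^ 2 = 0 := by
  have h := Complex.isPrimitiveRoot_exp 3 (by norm_num)
  have h2 := h.geom_sum_eq_zero (by norm_num)
  simp only [Finset.sum_range_succ, Finset.sum_range_zero, zero_add, pow_zero, pow_one] at h2
  exact ⟨_, h2⟩

/-- Nondegenerate solutions of `x + ζ q + ζ² s = 0` are equilateral triangles. -/
lemma equilateral_of_eq {ζ : ℂ} (hζ : 1 + ζ + ζ ^ 2 = 0) {x q s : ℂ}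
    (h : x + ζ * q + ζ ^ 2 * s = 0) : dist x q = dist q s ∧ dist q s = dist s x := by
  have hζ3 : ζ ^ 3 = 1 := by linear_combination (ζ - 1) * hζ
  have hζn : ‖ζ‖ = 1 := Complex.norm_eq_one_of_pow_eq_one hζ3 (by norm_num)
  have e1 : x - q = ζ ^ 2 * (q - s) := by linear_combination h - q * hζ
  have e2 : s - x = ζ * (q - s) := by linear_combination s * hζ - h
  simp [dist_eq_norm, e1, e2, hζn]

theorem meyerson_inscribed_equilateral_all_but_two
    (γ : ℝ → EuclideanSpace ℝ (Fin 2))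
    (hγcont : ContinuousOn γ (Set.Icc 0 1)) (hγloop : γ 0 = γ 1)
    (hγinj : Set.InjOn γ (Set.Ico 0 1)) :
    {p ∈ γ '' Set.Icc (0:ℝ) 1 |
      ¬ ∃ q ∈ γ '' Set.Icc (0:ℝ) 1, ∃ s ∈ γ '' Set.Icc (0:ℝ) 1,
        p ≠ q ∧ q ≠ s ∧ s ≠ p ∧
        dist p q = dist q s ∧ dist q s = dist s p}.encard ≤ 2 := by
  by_contra hcard
  rw [not_le] at hcard
  obtain ⟨ζ, hζ⟩ := exists_cube_root
  let e := Complex.orthonormalBasisOneI.repr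
  let g : ℝ → ℂ := fun u => e.symm (γ (Int.fract u))
  have hg : Continuous g := e.symm.continuous.comp (hγcont.comp_fract'' hγloop)
  have hper : ∀ u, g (u + 1) = g u := fun u => by simp [g]
  have hinj : ∀ u v, g u = g v → u < v + 1 → v < u + 1 → u = v := by
    intro u v h h1 h2
    have h3 := hγinj ⟨Int.fract_nonneg u, Int.fract_lt_one u⟩
      ⟨Int.fract_nonneg v, Int.fract_lt_one v⟩ (e.symm.injective h)
    obtain ⟨n, hn⟩ := Int.fract_eq_fract.1 h3
    have h4 : n < 1 := by
      have : (n : ℝ) < 1 := by linarith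
      exact_mod_cast this
    have h5 : -1 < n := by
      have : (-1 : ℝ) < n := by linarith
      exact_mod_cast this
    have h6 : n = 0 := by omega
    subst h6
    simpa [sub_eq_zero] using hn
  have hpar : ∀ p ∈ {p ∈ γ '' Set.Icc (0:ℝ) 1 |
      ¬ ∃ q ∈ γ '' Set.Icc (0:ℝ) 1, ∃ s ∈ γ '' Set.Icc (0:ℝ) 1,
        p ≠ q ∧ q ≠ s ∧ s ≠ p ∧
        dist p q = dist q s ∧ dist q s = dist s p},
      ∃ u, 0 ≤ u ∧ u < 1 ∧ g u = e.symm p ∧ Isolated ζ (Set.range g) (g u) := by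
    rintro p ⟨⟨u, hu, rfl⟩, hp⟩
    have hgu : g (Int.fract u) = e.symm (γ u) := by
      simp only [g, Int.fract_fract]
      rcases hu.2.lt_or_eq with h | h
      · rw [Int.fract_eq_self.2 ⟨hu.1, h⟩]
      · rw [h, Int.fract_one, hγloop]
    refine ⟨Int.fract u, Int.fract_nonneg u, Int.fract_lt_one u, hgu, ?_⟩
    rw [hgu]
    rintro _ ⟨q, rfl⟩ _ ⟨s, rfl⟩ h
    obtain ⟨h1, h2⟩ := equilateral_of_eq hζ h
    simp only [g, LinearIsometryEquiv.dist_map] at h1 h2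
    by_contra hne
    have hqs : γ (Int.fract q) ≠ γ (Int.fract s) := by
      intro h3
      rw [h3, dist_self] at h1 h2
      have h4 := dist_eq_zero.1 h2.symm
      apply hne
      simp [g, h3, h4]
    have hpos := dist_pos.2 hqs
    exact hp ⟨_, ⟨_, ⟨Int.fract_nonneg q, (Int.fract_lt_one q).le⟩, rfl⟩,
      _, ⟨_, ⟨Int.fract_nonneg s, (Int.fract_lt_one s).le⟩, rfl⟩,
      dist_pos.1 (h1 ▸ hpos), hqs, dist_pos.1 (h2 ▸ hpos), h1, h2⟩
  obtain ⟨T, hT, hT3⟩ := Set.exists_subset_encard_eq (k := 3) (Order.add_one_le_of_lt hcard)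
  obtain ⟨p₁, p₂, p₃, n₁₂, n₁₃, n₂₃, rfl⟩ := Set.encard_eq_three.1 hT3
  have m₁ := hT (show p₁ ∈ ({p₁, p₂, p₃} : Set _) by simp)
  have m₂ := hT (show p₂ ∈ ({p₁, p₂, p₃} : Set _) by simp)
  have m₃ := hT (show p₃ ∈ ({p₁, p₂, p₃} : Set _) by simp)
  obtain ⟨u, u0, u1, eu, iu⟩ := hpar _ m₁
  obtain ⟨v, v0, v1, ev, iv⟩ := hpar _ m₂
  obtain ⟨w, w0, w1, ew, iw⟩ := hpar _ m₃
  have nuv : u ≠ v := by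
    rintro rfl
    exact n₁₂ (e.symm.injective (eu.symm.trans ev))
  have nuw : u ≠ w := by
    rintro rfl
    exact n₁₃ (e.symm.injective (eu.symm.trans ew))
  have nvw : v ≠ w := by
    rintro rfl
    exact n₂₃ (e.symm.injective (ev.symm.trans ew))
  rcases nuv.lt_or_gt with h1 | h1 <;> rcases nuw.lt_or_gt with h2 | h2 <;>
    rcases nvw.lt_or_gt with h3 | h3
  · exact not_isolated_three hζ hg hper hinj h1 h3 (by linarith) iu iv iw
  · exact not_isolated_three hζ hg hper hinj h2 h3 (by linarith) iu iw iv
  · linarith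
  · exact not_isolated_three hζ hg hper hinj h2 h1 (by linarith) iw iu iv
  · exact not_isolated_three hζ hg hper hinj h1 h2 (by linarith) iv iu iw
  · linarith
  · exact not_isolated_three hζ hg hper hinj h3 h2 (by linarith) iv iw iu
  · exact not_isolated_three hζ hg hper hinj h3 h1 (by linarith) iw iv iu
end

section
/- Let n ≥ 2 and let γ : [0,1] → ℝⁿ be a Jordan curve with basepoint o = γ(0) = 0; fix r ≥ 1 and r' > 0 and the sets S_t. Suppose t₁ ∈ (0,1) satisfies ‖γ(t)‖ ≤ ‖γ(t₁)‖ for every t ∈ [0,1], and suppose J ∩ S_{t₁} = ∅. Then the loop γ is null-homotopic in ℝⁿ \ S_{t₁}. -/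
/-! The straight-line contraction `(1 - T) • γ s` towards the basepoint `0` avoids `S t₁`: that set
lies on the sphere of radius `r * ‖γ t₁‖ ≥ ‖γ t₁‖ > 0`, whereas for `T > 0` the contracted point has
norm at most `(1 - T) * ‖γ t₁‖ < ‖γ t₁‖`, and at `T = 0` disjointness from `S t₁` is a hypothesis. -/

/-- A loop `α : [0,1] → E` (with `α 0 = α 1`) is null-homotopic within the subset `X`:
there is a continuous `H` on `[0,1] × [0,1]` taking values in `X`, with `H s 0 = α s`,
`H s 1 = α 0`, and `H 0 T = H 1 T`. -/
def NullHomotopicIn {E : Type*} [TopologicalSpace E] (α : ℝ → E) (X : Set E) : Prop :=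
  ∃ H : ℝ → ℝ → E,
    ContinuousOn (fun p : ℝ × ℝ => H p.1 p.2) (Set.Icc 0 1 ×ˢ Set.Icc 0 1) ∧
    (∀ s ∈ Set.Icc (0:ℝ) 1, ∀ T ∈ Set.Icc (0:ℝ) 1, H s T ∈ X) ∧
    (∀ s ∈ Set.Icc (0:ℝ) 1, H s 0 = α s) ∧
    (∀ s ∈ Set.Icc (0:ℝ) 1, H s 1 = α 0) ∧
    (∀ T ∈ Set.Icc (0:ℝ) 1, H 0 T = H 1 T)

theorem loop_nullhomotopic_at_farthest_point
    (n : ℕ) (hn : 2 ≤ n) (γ : ℝ → EuclideanSpace ℝ (Fin n))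
    (hγcont : ContinuousOn γ (Set.Icc 0 1)) (hγloop : γ 0 = γ 1)
    (hγinj : Set.InjOn γ (Set.Ico 0 1)) (ho : γ 0 = 0)
    (r r' : ℝ) (hr : 1 ≤ r) (hr' : 0 < r')
    (S : ℝ → Set (EuclideanSpace ℝ (Fin n)))
    (hS : ∀ t, S t = {q | ‖q‖ = r * ‖γ t‖ ∧ ‖q - γ t‖ = r' * ‖γ t‖})
    (t₁ : ℝ) (ht₁ : t₁ ∈ Set.Ioo (0:ℝ) 1)
    (hmax : ∀ t ∈ Set.Icc (0:ℝ) 1, ‖γ t‖ ≤ ‖γ t₁‖)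
    (hdisj : γ '' Set.Icc (0:ℝ) 1 ∩ S t₁ = ∅) :
    NullHomotopicIn γ (S t₁)ᶜ := by
  -- Injectivity makes the radius positive: `γ t₁` differs from the basepoint.
  have hpos : 0 < ‖γ t₁‖ := by
    refine norm_pos_iff.mpr fun h => ht₁.1.ne' ?_
    exact hγinj ⟨ht₁.1.le, ht₁.2⟩ ⟨le_rfl, one_pos⟩ (h.trans ho.symm)
  refine ⟨fun s T => (1 - T) • γ s, ?_, ?_, ?_, ?_, ?_⟩
  · exact (continuous_const.sub continuous_snd).continuousOn.smul
      (hγcont.comp continuous_fst.continuousOn fun p hp => hp.1)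
  · intro s hs T hT hmem
    rcases hT.1.eq_or_lt with rfl | hT0
    · have h : γ s ∈ γ '' Set.Icc (0:ℝ) 1 ∩ S t₁ := ⟨⟨s, hs, rfl⟩, by simpa using hmem⟩
      rwa [hdisj] at h
    · rw [hS] at hmem
      have h1 : ‖(1 - T) • γ s‖ = r * ‖γ t₁‖ := hmem.1
      rw [norm_smul, Real.norm_of_nonneg (sub_nonneg.mpr hT.2)] at h1
      nlinarith [mul_le_mul_of_nonneg_left (hmax s hs) (sub_nonneg.mpr hT.2),
        mul_pos hT0 hpos, mul_le_mul_of_nonneg_right hr hpos.le]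
  · intro s _
    simp
  · intro s _
    simp [ho]
  · intro T _
    simp only [hγloop]
end

section
/- Let n ≥ 2 and let γ : [0,1] → ℝⁿ be a Jordan curve with basepoint o = γ(0) = 0; fix r ≥ 1 and r' > 0 with |r − r'| < 1 < r + r', define the sets S_t, and let θ_v = arccos((1 + r² − r'²)/(2r)) (the angle at the vertex o of a triangle whose two sides from o have lengths 1 and r and whose third side has length r'). Assume limsup_{δ→0⁺} Θ_δ < θ_v < liminf_{δ→0⁺} Θ'_δ, and assume J ∩ S_t = ∅ for every t ∈ (0,1). Then there exists t₂ ∈ (0,1) such that the loop γ is not null-homotopic in ℝⁿ \ S_{t₂}. -/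
open Set Filter Topology

/-- A continuous branch of `log 1` on a preconnected set is constant. -/
lemma eq_of_exp_eq_one {X : Type*} [TopologicalSpace X] {s : Set X} (hs : IsPreconnected s)
    {d : X → ℂ} (hd : ContinuousOn d s) (h : ∀ x ∈ s, Complex.exp (d x) = 1)
    {x y : X} (hx : x ∈ s) (hy : y ∈ s) : d x = d y := by
  have : DiscreteTopology (AddSubgroup.zmultiples (2 * Real.pi * Complex.I : ℂ)) :=
    NormedSpace.discreteTopology_zmultiples _
  refine hs.constant_of_mapsTo (T := (AddSubgroup.zmultiples (2 * Real.pi * Complex.I : ℂ) : Set ℂ))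
    (isDiscrete_iff_discreteTopology.2 this) hd (fun z hz => ?_) hx hy
  obtain ⟨n, hn⟩ := Complex.exp_eq_one_iff.1 (h z hz)
  exact AddSubgroup.mem_zmultiples_iff.2 ⟨n, by rw [hn, zsmul_eq_mul]⟩

/-- A loop in `ℂ \ {0}` freely homotopic to a constant has a logarithm that closes up. The homotopy
is lifted through `exp` over the whole plane; the increment of the lift over one period is a
continuous branch of `log 1`, hence equal to its value `0` at the constant end. -/
lemma exists_log_of_homotopy (G : ℝ × ℝ → ℂ) (hG : Continuous G) (h0 : ∀ p, G p ≠ 0)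
    (hper : ∀ T, G (0, T) = G (1, T)) (hconst : ∀ s, G (s, 1) = G (0, 1)) :
    ∃ ℓ : ℝ → ℂ, Continuous ℓ ∧ (∀ s, Complex.exp (ℓ s) = G (s, 0)) ∧ ℓ 0 = ℓ 1 := by
  obtain ⟨L, ⟨-, hL⟩, -⟩ := Complex.isCoveringMapOn_exp.existsUnique_continuousMap_lifts
    (⟨G, hG⟩ : C(ℝ × ℝ, ℂ)) (a₀ := (0, 0)) (e₀ := Complex.log (G (0, 0)))
    (Complex.exp_log (h0 _)) (fun p => h0 p)
  have hL' : ∀ p, Complex.exp (L p) = G p := fun p => congrFun hL p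
  have hrow : L (0, 1) - L (0, 1) = L (1, 1) - L (0, 1) :=
    eq_of_exp_eq_one (d := fun s : ℝ => L (s, 1) - L (0, 1)) isPreconnected_univ
      (by fun_prop) (fun s _ => by
        rw [Complex.exp_sub, hL', hL', hconst s, div_self (h0 _)]) (mem_univ 0) (mem_univ 1)
  have hcol : L (1, 0) - L (0, 0) = L (1, 1) - L (0, 1) :=
    eq_of_exp_eq_one (d := fun T : ℝ => L (1, T) - L (0, T)) isPreconnected_univ
      (by fun_prop) (fun T _ => by
        rw [Complex.exp_sub, hL', hL', hper T, div_self (h0 _)]) (mem_univ 0) (mem_univ 1)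
  refine ⟨fun s => L (s, 0), by fun_prop, fun s => hL' _, ?_⟩
  rw [← hrow, sub_self, sub_eq_zero] at hcol
  exact hcol.symm

/-- A loop in `ℂ` that leaves the negative real axis upwards, avoids it, and comes back to it from
below has winding number `-1`, so its logarithm does not close up. -/
lemma log_ne_of_crossing {f ℓ : ℝ → ℂ} (hf : ContinuousOn f (Icc 0 1))
    (hℓ : Continuous ℓ) (hexp : ∀ s ∈ Icc (0 : ℝ) 1, Complex.exp (ℓ s) = f s) (h01 : f 0 = f 1)
    (hre : (f 0).re < 0) (him : (f 0).im = 0) (hslit : ∀ s ∈ Ioo (0 : ℝ) 1, f s ∈ Complex.slitPlane)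
    (hup : ∀ᶠ s in 𝓝[>] (0 : ℝ), 0 ≤ (f s).im) (hdown : ∀ᶠ s in 𝓝[<] (1 : ℝ), (f s).im < 0) :
    ℓ 0 ≠ ℓ 1 := by
  set d : ℝ → ℂ := fun s => ℓ s - Complex.log (f s) with hd
  have hconst : ∀ s ∈ Ioo (0 : ℝ) 1, d s = d (1 / 2) := fun s hs => by
    refine eq_of_exp_eq_one (s := Ioo (0 : ℝ) 1) isPreconnected_Ioo
      (ContinuousOn.fun_sub hℓ.continuousOn ((hf.mono Ioo_subset_Icc_self).clog hslit)) (fun x hx => ?_) hs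
      (by constructor <;> norm_num)
    have hne := Complex.slitPlane_ne_zero (hslit x hx)
    show Complex.exp (ℓ x - Complex.log (f x)) = 1
    rw [Complex.exp_sub, hexp x (Ioo_subset_Icc_self hx), Complex.exp_log hne, div_self hne]
  have hlim0 : Tendsto f (𝓝[>] 0) (𝓝[{z | 0 ≤ z.im}] (f 0)) :=
    tendsto_nhdsWithin_iff.2 ⟨((hf 0 (by simp)).mono_of_mem_nhdsWithin
      (Icc_mem_nhdsGT_of_mem (by simp))), hup⟩
  have hlim1 : Tendsto f (𝓝[<] 1) (𝓝[{z | z.im < 0}] (f 0)) :=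
    tendsto_nhdsWithin_iff.2 ⟨h01 ▸ ((hf 1 (by simp)).mono_of_mem_nhdsWithin
      (Icc_mem_nhdsLT_of_mem (by simp))), hdown⟩
  have hd0 := (hℓ.tendsto 0).mono_left (nhdsWithin_le_nhds (s := Ioi 0)) |>.sub
    ((Complex.tendsto_log_nhdsWithin_im_nonneg_of_re_neg_of_im_zero hre him).comp hlim0)
  have hd1 := (hℓ.tendsto 1).mono_left (nhdsWithin_le_nhds (s := Iio 1)) |>.sub
    ((Complex.tendsto_log_nhdsWithin_im_neg_of_re_neg_of_im_zero hre him).comp hlim1)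
  have e0 := tendsto_nhds_unique_of_eventuallyEq hd0 (tendsto_const_nhds (x := d (1 / 2)))
    (by filter_upwards [Ioo_mem_nhdsGT (zero_lt_one (α := ℝ))] with s hs using hconst s hs)
  have e1 := tendsto_nhds_unique_of_eventuallyEq hd1 (tendsto_const_nhds (x := d (1 / 2)))
    (by filter_upwards [Ioo_mem_nhdsLT (zero_lt_one (α := ℝ))] with s hs using hconst s hs)
  intro h
  rw [h, ← e1] at e0
  have := congrArg Complex.im e0
  simp at this
  linarith [Real.pi_pos]

/-- The linking criterion: with `p ≠ 0`, consider the codimension-two sphere of points `q` at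
distance `R` from the origin with `⟪q, p⟫ = c ‖q‖ ‖p‖`. A loop based at the origin that leaves the
ball of radius `R` strictly inside the cone of axis `p`, and returns to it strictly outside that
cone, is not null-homotopic off the sphere. -/
lemma not_nullHomotopicIn_of_cone {E : Type*} [NormedAddCommGroup E] [InnerProductSpace ℝ E]
    {γ : ℝ → E} (hγ : ContinuousOn γ (Icc 0 1)) (h0 : γ 0 = 0) (h1 : γ 1 = 0) {S : Set E}
    {p : E} {c R δ : ℝ} (hR : 0 < R) (hδ : 0 < δ)
    (hS : ∀ q, ‖q‖ = R → inner ℝ q p = c * ‖q‖ * ‖p‖ → q ∈ S)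
    (hin : ∀ s ∈ Ioo (0 : ℝ) 1, s < δ → c * ‖γ s‖ * ‖p‖ < inner ℝ (γ s) p)
    (hout : ∀ s ∈ Ioo (0 : ℝ) 1, 1 - δ < s → inner ℝ (γ s) p < c * ‖γ s‖ * ‖p‖)
    (hfar : ∀ s ∈ Icc δ (1 - δ), R < ‖γ s‖) : ¬ NullHomotopicIn γ Sᶜ := by
  rintro ⟨H, hHc, hHS, hH0, hH1, hHper⟩
  -- `g` vanishes only on `S`, and carries the homotopy to `ℂ \ {0}`
  set g : E → ℂ := fun q => ⟨‖q‖ - R, inner ℝ q p - c * ‖q‖ * ‖p‖⟩ with hg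
  have hgc : Continuous g := by
    have : g = fun q => ((‖q‖ - R : ℝ) : ℂ) +
        ((inner ℝ q p - c * ‖q‖ * ‖p‖ : ℝ) : ℂ) * Complex.I := by
      funext q; exact Complex.mk_eq_add_mul_I _ _
    rw [this]; fun_prop
  have hg0 : ∀ q ∈ Sᶜ, g q ≠ 0 := fun q hq h => hq <| hS q
    (by simpa [hg, sub_eq_zero] using congrArg Complex.re h)
    (by simpa [hg, sub_eq_zero] using congrArg Complex.im h)
  let κ : ℝ → ℝ := fun x => projIcc (0 : ℝ) 1 zero_le_one x
  have hκc : Continuous κ := continuous_subtype_val.comp continuous_projIcc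
  have hκ : ∀ x, κ x ∈ Icc (0 : ℝ) 1 := fun x => (projIcc (0 : ℝ) 1 zero_le_one x).2
  have hκid : ∀ x ∈ Icc (0 : ℝ) 1, κ x = x := fun x hx => by simp [κ, projIcc_of_mem _ hx]
  have κ0 : κ 0 = 0 := hκid 0 (by simp)
  have κ1 : κ 1 = 1 := hκid 1 (by simp)
  obtain ⟨ℓ, hℓ, hexp, hclose⟩ := exists_log_of_homotopy (fun x => g (H (κ x.1) (κ x.2)))
    (hgc.comp (hHc.comp_continuous (f := fun x : ℝ × ℝ => (κ x.1, κ x.2)) (by fun_prop)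
      (fun x => ⟨hκ _, hκ _⟩)))
    (fun x => hg0 _ (hHS _ (hκ _) _ (hκ _)))
    (fun T => by simp only [κ0, κ1, hHper _ (hκ T)])
    (fun s => by simp only [κ1, hH1 _ (hκ _)])
  refine log_ne_of_crossing (f := fun s => g (γ s)) (hgc.comp_continuousOn hγ) hℓ (fun s hs => ?_)
    (by simp only [h0, h1]) (by simp [hg, h0, hR]) (by simp [hg, h0]) (fun s hs => ?_) ?_ ?_ hclose
  · rw [hexp]; simp only [κ0, hκid s hs, hH0 s hs]
  · rcases lt_or_ge s δ with h | h
    · exact Or.inr (sub_pos.2 (hin s hs h)).ne'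
    rcases lt_or_ge (1 - δ) s with h' | h'
    · exact Or.inr (sub_neg.2 (hout s hs h')).ne
    · exact Or.inl (sub_pos.2 (hfar s ⟨h, h'⟩))
  · filter_upwards [Ioo_mem_nhdsGT (zero_lt_one (α := ℝ)), Ioo_mem_nhdsGT hδ] with s hs hs'
    exact (sub_pos.2 (hin s hs hs'.2)).le
  · filter_upwards [Ioo_mem_nhdsLT (zero_lt_one (α := ℝ)),
      Ioo_mem_nhdsLT (show 1 - δ < 1 by linarith)] with s hs hs'
    exact sub_neg.2 (hout s hs hs'.1)

/-- `ThetaSup` and `ThetaInf` take values in `[0, π]`, so the strict bounds on their upper and lower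
limits hold at some small scale, and there for every pair of parameters. -/
lemma exists_angle_bounds {n : ℕ} {γ : ℝ → EuclideanSpace ℝ (Fin n)} {θv : ℝ}
    (h₁ : limsup (ThetaSup γ) (𝓝[>] 0) < θv) (h₂ : θv < liminf (ThetaInf γ) (𝓝[>] 0)) :
    ∃ δ ∈ Ioo (0 : ℝ) (1 / 2),
      (∀ s ∈ Ioo 0 δ, ∀ t ∈ Ioo 0 δ, EuclideanGeometry.angle (γ s) (γ 0) (γ t) < θv) ∧
      (∀ s ∈ Ioo (1 - δ) 1, ∀ t ∈ Ioo 0 δ, θv < EuclideanGeometry.angle (γ s) (γ 0) (γ t)) := by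
  have b₁ : IsBoundedUnder (· ≤ ·) (𝓝[>] 0) (ThetaSup γ) := by
    refine isBoundedUnder_of ⟨Real.pi, fun δ => Real.sSup_le ?_ Real.pi_pos.le⟩
    rintro _ ⟨s, -, t, -, rfl⟩
    exact EuclideanGeometry.angle_le_pi _ _ _
  have b₂ : IsBoundedUnder (· ≥ ·) (𝓝[>] 0) (ThetaInf γ) := by
    refine isBoundedUnder_of ⟨0, fun δ => Real.sInf_nonneg ?_⟩
    rintro _ ⟨s, -, t, -, rfl⟩
    exact EuclideanGeometry.angle_nonneg _ _ _
  obtain ⟨δ, hδ₁, hδ₂, hδ⟩ := ((eventually_lt_of_limsup_lt h₁ b₁).and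
    ((eventually_lt_of_lt_liminf h₂ b₂).and (Ioo_mem_nhdsGT (one_half_pos (α := ℝ))))).exists
  refine ⟨δ, hδ, fun s hs t ht => lt_of_le_of_lt ?_ hδ₁, fun s hs t ht => lt_of_lt_of_le hδ₂ ?_⟩
  · refine le_csSup ⟨Real.pi, ?_⟩ ⟨s, hs, t, ht, rfl⟩
    rintro _ ⟨s, -, t, -, rfl⟩
    exact EuclideanGeometry.angle_le_pi _ _ _
  · refine csInf_le ⟨0, ?_⟩ ⟨s, hs, t, ht, rfl⟩
    rintro _ ⟨s, -, t, -, rfl⟩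
    exact EuclideanGeometry.angle_nonneg _ _ _

theorem exists_t_loop_not_nullhomotopic
    (n : ℕ) (hn : 2 ≤ n) (γ : ℝ → EuclideanSpace ℝ (Fin n))
    (hγcont : ContinuousOn γ (Set.Icc 0 1)) (hγloop : γ 0 = γ 1)
    (hγinj : Set.InjOn γ (Set.Ico 0 1)) (ho : γ 0 = 0)
    (r r' : ℝ) (hr : 1 ≤ r) (hr' : 0 < r')
    (hrr' : |r - r'| < 1 ∧ 1 < r + r')
    (S : ℝ → Set (EuclideanSpace ℝ (Fin n)))
    (hS : ∀ t, S t = {q | ‖q‖ = r * ‖γ t‖ ∧ ‖q - γ t‖ = r' * ‖γ t‖})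
    (θv : ℝ) (hθv : θv = Real.arccos ((1 + r ^ 2 - r' ^ 2) / (2 * r)))
    (h₁ : Filter.limsup (ThetaSup γ) (nhdsWithin 0 (Set.Ioi 0)) < θv)
    (h₂ : θv < Filter.liminf (ThetaInf γ) (nhdsWithin 0 (Set.Ioi 0)))
    (hdisj : ∀ t ∈ Set.Ioo (0:ℝ) 1, γ '' Set.Icc (0:ℝ) 1 ∩ S t = ∅) :
    ∃ t₂ ∈ Set.Ioo (0:ℝ) 1, ¬ NullHomotopicIn γ (S t₂)ᶜ := by
  have hr0 : 0 < r := by linarith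
  set c := (1 + r ^ 2 - r' ^ 2) / (2 * r) with hc
  have hcr : 2 * r * c = 1 + r ^ 2 - r' ^ 2 := by rw [hc]; field_simp
  obtain ⟨ha, hb⟩ := abs_lt.1 hrr'.1
  have hc1 : c ≤ 1 := by rw [hc, div_le_one (by positivity)]; nlinarith
  have hc2 : -1 ≤ c := by rw [hc, le_div_iff₀ (by positivity)]; nlinarith
  have hcos : Real.cos θv = c := by rw [hθv, Real.cos_arccos hc2 hc1]
  have hθ0 : 0 ≤ θv := hθv ▸ Real.arccos_nonneg _
  have hθπ : θv ≤ Real.pi := hθv ▸ Real.arccos_le_pi _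
  obtain ⟨δ, ⟨hδ0, hδ2⟩, hin, hout⟩ := exists_angle_bounds h₁ h₂
  have hne : ∀ s ∈ Ioo (0 : ℝ) 1, γ s ≠ 0 := fun s hs h =>
    hs.1.ne' (hγinj ⟨hs.1.le, hs.2⟩ (by simp) (h.trans ho.symm))
  -- away from the basepoint the curve keeps a distance `m > 0` from it
  obtain ⟨s₀, hs₀, hmin⟩ := (isCompact_Icc (a := δ) (b := 1 - δ)).exists_isMinOn
    (nonempty_Icc.2 (by linarith))
    (hγcont.norm.mono (Icc_subset_Icc hδ0.le (by linarith)))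
  have hm : 0 < ‖γ s₀‖ := norm_pos_iff.2 (hne s₀ ⟨by linarith [hs₀.1], by linarith [hs₀.2]⟩)
  have hlim : Tendsto (fun t => r * ‖γ t‖) (𝓝[>] 0) (𝓝 0) := by
    have := ((hγcont 0 (by simp)).mono_of_mem_nhdsWithin
      (Icc_mem_nhdsGT_of_mem (show (0 : ℝ) ∈ Ico 0 1 by simp))).norm.const_mul r
    simpa [ho] using this.tendsto
  obtain ⟨t, ht, htδ⟩ := ((hlim.eventually_lt_const hm).and (Ioo_mem_nhdsGT hδ0)).exists
  have ht1 : t ∈ Ioo (0 : ℝ) 1 := ⟨htδ.1, by linarith [htδ.2]⟩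
  have hp : 0 < ‖γ t‖ := norm_pos_iff.2 (hne t ht1)
  have hinner : ∀ s, inner ℝ (γ s) (γ t) =
      Real.cos (EuclideanGeometry.angle (γ s) (γ 0) (γ t)) * (‖γ s‖ * ‖γ t‖) := fun s => by
    simp only [EuclideanGeometry.angle, ho, vsub_eq_sub, sub_zero]
    exact (InnerProductGeometry.cos_angle_mul_norm_mul_norm _ _).symm
  refine ⟨t, ht1, not_nullHomotopicIn_of_cone (p := γ t) (c := c) (R := r * ‖γ t‖) hγcont ho
    (hγloop ▸ ho) (by positivity) hδ0 (fun q hq hq' => ?_) (fun s hs hsδ => ?_)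
    (fun s hs hsδ => ?_) (fun s hs => ht.trans_le (hmin hs))⟩
  · -- law of cosines in the triangle `0, γ t, q`
    rw [hS]
    refine ⟨hq, (sq_eq_sq₀ (norm_nonneg _) (by positivity)).1 ?_⟩
    rw [norm_sub_sq_real, hq', hq]
    linear_combination (-‖γ t‖ ^ 2) * hcr
  · rw [hinner, mul_assoc, ← hcos]
    have := norm_pos_iff.2 (hne s hs)
    refine mul_lt_mul_of_pos_right ?_ (by positivity)
    exact Real.cos_lt_cos_of_nonneg_of_le_pi (EuclideanGeometry.angle_nonneg _ _ _) hθπ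
      (hin s ⟨hs.1, hsδ⟩ t htδ)
  · rw [hinner, mul_assoc, ← hcos]
    have := norm_pos_iff.2 (hne s hs)
    refine mul_lt_mul_of_pos_right ?_ (by positivity)
    exact Real.cos_lt_cos_of_nonneg_of_le_pi hθ0 (EuclideanGeometry.angle_le_pi _ _ _)
      (hout s ⟨hsδ, hs.2⟩ t htδ)
end

section
/- Let n ≥ 2, let γ : [0,1] → ℝⁿ be a Jordan curve with basepoint o = γ(0) = 0, fix r ≥ 1 and r' > 0 and the sets S_t, let ε ∈ (0,1/2), let N = γ([0,ε) ∪ (1−ε,1]), and set d_min = dist(o, γ([ε, 1−ε]))/2. If t₂ ∈ (0,1) is such that S_{t₂} ⊆ { q ∈ ℝⁿ : ‖q‖ = d_min }, then J \ N is disjoint from the convex hull of S_{t₂}; in particular every point of J \ N lying on the hyperplane containing S_{t₂} lies in the exterior of S_{t₂}. -/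
/-!
The set `S t₂` lies on the sphere of radius `dmin` about the origin, so its convex hull lies in the
closed ball of that radius. A point `γ s` with `s ∈ [ε, 1 - ε]` has norm at least `2 * dmin`, hence
lies outside the ball unless it is the origin; and the origin `γ 0` belongs to the removed
neighbourhood of the basepoint.
-/


theorem curve_outside_neighbourhood_disjoint_from_hull
    (n : ℕ) (hn : 2 ≤ n) (γ : ℝ → EuclideanSpace ℝ (Fin n))
    (hγcont : ContinuousOn γ (Set.Icc 0 1)) (hγloop : γ 0 = γ 1)
    (hγinj : Set.InjOn γ (Set.Ico 0 1)) (ho : γ 0 = 0)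
    (r r' : ℝ) (hr : 1 ≤ r) (hr' : 0 < r')
    (S : ℝ → Set (EuclideanSpace ℝ (Fin n)))
    (hS : ∀ t, S t = {q | ‖q‖ = r * ‖γ t‖ ∧ ‖q - γ t‖ = r' * ‖γ t‖})
    (ε : ℝ) (hε : ε ∈ Set.Ioo (0:ℝ) (1/2))
    (dmin : ℝ) (hdmin : dmin = Metric.infDist (γ 0) (γ '' Set.Icc ε (1 - ε)) / 2)
    (t₂ : ℝ) (ht₂ : t₂ ∈ Set.Ioo (0:ℝ) 1)
    (hsub : S t₂ ⊆ {q : EuclideanSpace ℝ (Fin n) | ‖q‖ = dmin}) :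
    Disjoint (γ '' Set.Icc (0:ℝ) 1 \ γ '' (Set.Ico 0 ε ∪ Set.Ioc (1 - ε) 1))
      (convexHull ℝ (S t₂)) := by
  rw [Set.disjoint_left]
  rintro x ⟨⟨s, hs, rfl⟩, hxN⟩ hx
  have hball : convexHull ℝ (S t₂) ⊆ Metric.closedBall 0 dmin :=
    convexHull_min (fun q hq => by simpa using (hsub hq).le) (convex_closedBall 0 dmin)
  have hle : ‖γ s‖ ≤ dmin := by simpa using hball hx
  have hsI : s ∈ Set.Icc ε (1 - ε) := by
    constructor
    · by_contra! h
      exact hxN ⟨s, Or.inl ⟨hs.1, h⟩, rfl⟩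
    · by_contra! h
      exact hxN ⟨s, Or.inr ⟨h, hs.2⟩, rfl⟩
  have hdist : Metric.infDist (γ 0) (γ '' Set.Icc ε (1 - ε)) ≤ ‖γ s‖ := by
    simpa [ho] using Metric.infDist_le_dist_of_mem (x := γ 0) (Set.mem_image_of_mem γ hsI)
  -- The two bounds give `‖γ s‖ ≤ ‖γ s‖ / 2`.
  have hzero : γ s = 0 := norm_le_zero_iff.1 (by linarith)
  exact hxN ⟨0, Or.inl ⟨le_rfl, hε.1⟩, ho.trans hzero.symm⟩
end

section
/- Let n ≥ 2 and let γ : [0,1] → ℝⁿ be a Jordan curve with basepoint o = γ(0). Assume (0,0) ∉ R_s([0,1]) for every s ∈ (0,1). Then for all s, s' ∈ (0,1), the concatenated loop R_s ∗ (reverse of R_{s'}), based at (−1,0), is null-homotopic in ℝ² \ {(0,0)}. -/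
/-- Let `F u` be paths in `X`, continuous in `u ∈ (0,1)`, with endpoints independent of `u`. Then
`F s` followed by the reverse of `F s'` is null-homotopic in `X`. -/
theorem nullHomotopicIn_of_family {E : Type*} [TopologicalSpace E] {X : Set E} {F : ℝ → ℝ → E}
    {a b : E}
    (hF : ContinuousOn (fun p : ℝ × ℝ => F p.1 p.2) (Set.Ioo 0 1 ×ˢ Set.Icc 0 1))
    (hX : ∀ u ∈ Set.Ioo (0:ℝ) 1, ∀ t ∈ Set.Icc (0:ℝ) 1, F u t ∈ X)
    (h0 : ∀ u ∈ Set.Ioo (0:ℝ) 1, F u 0 = a) (h1 : ∀ u ∈ Set.Ioo (0:ℝ) 1, F u 1 = b)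
    {s s' : ℝ} (hs : s ∈ Set.Ioo (0:ℝ) 1) (hs' : s' ∈ Set.Ioo (0:ℝ) 1) :
    NullHomotopicIn (fun t : ℝ => if t ≤ 1/2 then F s (2 * t) else F s' (2 - 2 * t)) X := by
  -- `u` travels from `s'` to `s` while `T ≤ 1/2`; `c` shrinks the time parameter afterwards.
  let u : ℝ → ℝ := fun T => (1 - min 1 (2 * T)) * s' + min 1 (2 * T) * s
  let c : ℝ → ℝ := fun T => min 1 (2 - 2 * T)
  have huc : Continuous u := by fun_prop
  have hcc : Continuous c := by fun_prop
  have hu : ∀ T ∈ Set.Icc (0:ℝ) 1, u T ∈ Set.Ioo (0:ℝ) 1 := by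
    intro T hT
    have hw : 0 ≤ 1 - min 1 (2 * T) := sub_nonneg.2 (min_le_left _ _)
    have hw' : 0 ≤ min 1 (2 * T) := le_min zero_le_one (by linarith [hT.1])
    exact convex_Ioo (0:ℝ) 1 hs' hs hw hw' (sub_add_cancel _ _)
  have hc : ∀ T ∈ Set.Icc (0:ℝ) 1, c T ∈ Set.Icc (0:ℝ) 1 := fun T hT =>
    ⟨le_min zero_le_one (by linarith [hT.2]), min_le_left _ _⟩
  have hm : ∀ x ∈ Set.Icc (0:ℝ) 1, ∀ T ∈ Set.Icc (0:ℝ) 1, x * c T ∈ Set.Icc (0:ℝ) 1 :=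
    fun x hx T hT => ⟨mul_nonneg hx.1 (hc T hT).1, mul_le_one₀ hx.2 (hc T hT).1 (hc T hT).2⟩
  -- At the midpoint either both paths have reached `b`, or they already coincide.
  have hmid : ∀ T, T ∈ Set.Icc (0:ℝ) 1 → F s (c T) = F (u T) (c T) := by
    intro T hT
    rcases le_total T (1/2) with h | h
    · have : c T = 1 := min_eq_left (by linarith)
      rw [this, h1 s hs, h1 _ (hu T hT)]
    · have h2 : min 1 (2 * T) = 1 := min_eq_left (by linarith)
      have : u T = s := by simp only [u, h2]; ring
      rw [this]
  refine ⟨fun x T => if x ≤ 1/2 then F s (2 * x * c T) else F (u T) ((2 - 2 * x) * c T),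
    ?_, ?_, ?_, ?_, ?_⟩
  · have hcover : (Set.Icc 0 1 ×ˢ Set.Icc 0 1 : Set (ℝ × ℝ)) =
        Set.Icc 0 (1/2) ×ˢ Set.Icc 0 1 ∪ Set.Icc (1/2) 1 ×ˢ Set.Icc 0 1 := by
      rw [← Set.union_prod, Set.Icc_union_Icc_eq_Icc (by norm_num) (by norm_num)]
    rw [hcover]
    refine ContinuousOn.union_of_isClosed ?_ ?_ (isClosed_Icc.prod isClosed_Icc)
      (isClosed_Icc.prod isClosed_Icc)
    · have : ContinuousOn (fun p : ℝ × ℝ => F s (2 * p.1 * c p.2))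
          (Set.Icc 0 (1/2) ×ˢ Set.Icc 0 1) :=
        hF.comp (f := fun p : ℝ × ℝ => (s, 2 * p.1 * c p.2)) (by fun_prop) fun p hp =>
          ⟨hs, hm _ ⟨by linarith [hp.1.1], by linarith [hp.1.2]⟩ _ hp.2⟩
      exact this.congr fun p hp => if_pos hp.1.2
    · have : ContinuousOn (fun p : ℝ × ℝ => F (u p.2) ((2 - 2 * p.1) * c p.2))
          (Set.Icc (1/2) 1 ×ˢ Set.Icc 0 1) :=
        hF.comp (f := fun p : ℝ × ℝ => (u p.2, (2 - 2 * p.1) * c p.2)) (by fun_prop) fun p hp =>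
          ⟨hu _ hp.2, hm _ ⟨by linarith [hp.1.2], by linarith [hp.1.1]⟩ _ hp.2⟩
      refine this.congr fun p hp => ?_
      dsimp only
      split_ifs with h
      · have h' : p.1 = 1/2 := le_antisymm h hp.1.1
        have e1 : 2 * p.1 * c p.2 = c p.2 := by rw [h']; ring
        have e2 : (2 - 2 * p.1) * c p.2 = c p.2 := by rw [h']; ring
        rw [e1, e2, hmid _ hp.2]
      · rfl
  · intro x hx T hT
    dsimp only
    split_ifs with h
    · exact hX _ hs _ (hm _ ⟨by linarith [hx.1], by linarith⟩ _ hT)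
    · exact hX _ (hu T hT) _ (hm _ ⟨by linarith [hx.2], by linarith⟩ _ hT)
  · intro x _
    simp [u, c]
  · intro x _
    simp [u, c]
  · intro T hT
    norm_num [h0 s hs, h0 _ (hu T hT)]

theorem ratio_loop_nullhomotopic
    (n : ℕ) (hn : 2 ≤ n) (γ : ℝ → EuclideanSpace ℝ (Fin n))
    (hγcont : ContinuousOn γ (Set.Icc 0 1)) (hγloop : γ 0 = γ 1)
    (hγinj : Set.InjOn γ (Set.Ico 0 1))
    (R : ℝ → ℝ → ℝ × ℝ)
    (hR : ∀ s t : ℝ, R s t =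
      (‖γ (s * t) - γ 0‖ / ‖γ s - γ 0‖ - 1, ‖γ (s * t) - γ s‖ / ‖γ s - γ 0‖ - 1))
    (havoid : ∀ s ∈ Set.Ioo (0:ℝ) 1, ∀ t ∈ Set.Icc (0:ℝ) 1, R s t ≠ (0, 0)) :
    ∀ s ∈ Set.Ioo (0:ℝ) 1, ∀ s' ∈ Set.Ioo (0:ℝ) 1,
      NullHomotopicIn (fun t : ℝ => if t ≤ 1/2 then R s (2 * t) else R s' (2 - 2 * t))
        {y : ℝ × ℝ | y ≠ (0, 0)} := by
  have hne : ∀ s ∈ Set.Ioo (0:ℝ) 1, ‖γ s - γ 0‖ ≠ 0 := fun s hs h =>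
    hs.1.ne' (hγinj ⟨hs.1.le, hs.2⟩ ⟨le_rfl, one_pos⟩ (sub_eq_zero.1 (norm_eq_zero.1 h)))
  have hcont : ContinuousOn (fun p : ℝ × ℝ => R p.1 p.2) (Set.Ioo 0 1 ×ˢ Set.Icc 0 1) := by
    have c1 : ContinuousOn (fun p : ℝ × ℝ => γ p.1) (Set.Ioo 0 1 ×ˢ Set.Icc 0 1) :=
      hγcont.comp continuousOn_fst fun p hp => ⟨hp.1.1.le, hp.1.2.le⟩
    have c2 : ContinuousOn (fun p : ℝ × ℝ => γ (p.1 * p.2)) (Set.Ioo 0 1 ×ˢ Set.Icc 0 1) :=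
      hγcont.comp (f := fun p : ℝ × ℝ => p.1 * p.2) (by fun_prop) fun p hp =>
        ⟨mul_nonneg hp.1.1.le hp.2.1, mul_le_one₀ hp.1.2.le hp.2.1 hp.2.2⟩
    have c3 := (c1.sub (continuousOn_const (c := γ 0))).norm
    have c4 : ∀ p ∈ (Set.Ioo 0 1 ×ˢ Set.Icc 0 1 : Set (ℝ × ℝ)), ‖γ p.1 - γ 0‖ ≠ 0 :=
      fun p hp => hne p.1 hp.1
    simp only [hR]
    exact (((c2.sub continuousOn_const).norm.div c3 c4).sub continuousOn_const).prodMk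
      (((c2.sub c1).norm.div c3 c4).sub continuousOn_const)
  intro s hs s' hs'
  refine nullHomotopicIn_of_family (a := (-1, 0)) (b := (0, -1)) hcont havoid ?_ ?_ hs hs'
  · intro u hu
    rw [hR, mul_zero, norm_sub_rev (γ 0) (γ u), div_self (hne u hu)]
    simp
  · intro u hu
    rw [hR, mul_one, div_self (hne u hu)]
    simp
end
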